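/- arXiv:1302.5860 — 4 statements merged into one kernel-verified Lean document; each statement's English description precedes it below -/
import Mathlib

section
/- Assume random codes are permitted. Let D ≥ 0 and let the compound channel 𝒟 be capable of communicating the uniform X source to within distortion D under the permutation-invariant distortion function d = (d^{n'}). Then, without any further assumption, every rate R with 0 < R < R^P_U(D, inf) is reliably achievable over 𝒟 with random codes (maximal error probability vanishing uniformly over k ∈ 𝒟); that is, a channel capable of communicating the uniform X source to within distortion D is capable of communicating bits reliably at any rate below the infimum of rates needed to code the uniform X source to within distortion D under the inf probability-of-excess-distortion criterion. -/
/-!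
Write `P` for the largest probability, over reproduction blocks `y`, that the uniform source block
falls in the distortion ball `{u | d u y ≤ n' D}`. Everything is governed by `P`.

*Source side.* Let `y` attain `P`, and use as codebook `M` independent uniformly random coordinate
permutations of `y`. By permutation invariance of `d`, every source block of the type class is
covered by one given codeword with probability exactly `P` (`card_perm_bad`), so the
excess-distortion probability is at most `(1 - P) ^ M ≤ exp (-M P)` (`exists_source_code`,
`exists_uSrcExcess_le`). If a rate `R'` with `R < R' < R^P_U(D, inf)` is chosen, these
probabilities stay bounded away from `0`, hence `P ≤ C / 2 ^ ⌊n' R'⌋` eventually.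

*Channel side.* Draw `2 ^ ⌊n' R⌋` source blocks independently and uniformly from the type class,
send message `m` by feeding the `m`-th block to the given joint source-channel code, and decode to
the unique message whose block is within distortion `n' D` of the reproduction. The true block
fails this with probability at most `ω`, and each wrong block passes with probability at most `P`,
because it is independent of everything else. The error is at most `ω + 2 ^ ⌊n' R⌋ P`
(`exists_channel_code`), which tends to `0` because `R < R'`. The bound is the same for
every message and every channel of the compound set.
-/


/-!
Statement 0: Optimality of separation, direct part (Part I, Theorem 1, first half).
If the compound channel 𝒜 can communicate the i.i.d. X source to within distortion D
(probability-of-excess-distortion criterion, uniformly over k ∈ 𝒜, random codes allowed),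
then every rate 0 < R < R^P_X(D) is reliably achievable over 𝒜 with random codes.
-/

open Finset Filter
open scoped ENNReal

noncomputable section

/-- `p` is a probability mass function on the finite type `α`. -/
def IsDist {α : Type} [Fintype α] (p : α → ℝ) : Prop :=
  (∀ a, 0 ≤ p a) ∧ ∑ a, p a = 1

/-- A (general) channel with finite input alphabet `ℐ` and finite output alphabet `𝒪`:
for each block length `n` and each input block, a probability distribution on output blocks. -/
structure Channel (ℐ 𝒪 : Type) [Fintype ℐ] [Fintype 𝒪] where
  k : ∀ n : ℕ, (Fin n → ℐ) → (Fin n → 𝒪) → ℝ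
  isChan : ∀ n ι, IsDist (k n ι)

/-- A block random encoder–decoder pair: a joint probability distribution on pairs of
deterministic maps (encoder `A → B`, decoder `C → E`). -/
structure RandCode (A B C E : Type) [Fintype A] [DecidableEq A] [Fintype B]
    [Fintype C] [DecidableEq C] [Fintype E] where
  p : ((A → B) × (C → E)) → ℝ
  isDist : IsDist p

/-- Probability of the block `x` under the i.i.d. source with single-letter pmf `pX`. -/
def iidP {𝒳 : Type} (pX : 𝒳 → ℝ) (n : ℕ) (x : Fin n → 𝒳) : ℝ := ∏ t, pX (x t)

/-- The additive `n`-letter extension `d^n` of a single-letter distortion function. -/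
def dPow {𝒳 𝒴 : Type} (d : 𝒳 → 𝒴 → ℝ) (n : ℕ) (x : Fin n → 𝒳) (y : Fin n → 𝒴) : ℝ :=
  ∑ t, d (x t) (y t)

variable {𝒳 𝒴 ℐ 𝒪 : Type} [Fintype 𝒳] [DecidableEq 𝒳] [Fintype 𝒴]
  [Fintype ℐ] [Fintype 𝒪] [DecidableEq 𝒪]

/-- End-to-end probability that the normalized distortion exceeds `D`, for the i.i.d. `pX`
source passed through random code `ρ` and channel `k`, at block length `n`. -/
def e2eExcess (pX : 𝒳 → ℝ) (d : 𝒳 → 𝒴 → ℝ) (D : ℝ) (n : ℕ)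
    (ρ : RandCode (Fin n → 𝒳) (Fin n → ℐ) (Fin n → 𝒪) (Fin n → 𝒴))
    (k : Channel ℐ 𝒪) : ℝ :=
  ∑ ef, ρ.p ef * ∑ x, iidP pX n x * ∑ o, k.k n (ef.1 x) o *
    (if (n : ℝ) * D < dPow d n x (ef.2 o) then 1 else 0)

/-- The compound channel `𝒜` is capable of communicating the i.i.d. `pX` source to within
distortion `D`: there are random codes and `ω n → 0`, independent of `k ∈ 𝒜`, with
`Pr(d^n(X^n,Y^n)/n > D) ≤ ω n` for every `n` and every `k ∈ 𝒜`. -/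
def CanCommunicate (𝒜 : Set (Channel ℐ 𝒪)) (pX : 𝒳 → ℝ) (d : 𝒳 → 𝒴 → ℝ) (D : ℝ) : Prop :=
  ∃ ρ : ∀ n : ℕ, RandCode (Fin n → 𝒳) (Fin n → ℐ) (Fin n → 𝒪) (Fin n → 𝒴),
    ∃ ω : ℕ → ℝ, Tendsto ω atTop (nhds 0) ∧
      ∀ n : ℕ, ∀ k ∈ 𝒜, e2eExcess pX d D n (ρ n) k ≤ ω n

/-- Size of the message set `M^n_R = {1, …, 2^⌊nR⌋}`. -/
def nMsg (R : ℝ) (n : ℕ) : ℕ := 2 ^ ⌊(n : ℝ) * R⌋₊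

/-- Probability of a decoding error for message `m` with random channel code `σ` over
channel `k` at block length `n` (the decoder may output the error symbol `none`). -/
def chErr (R : ℝ) (n : ℕ)
    (σ : RandCode (Fin (nMsg R n)) (Fin n → ℐ) (Fin n → 𝒪) (Option (Fin (nMsg R n))))
    (k : Channel ℐ 𝒪) (m : Fin (nMsg R n)) : ℝ :=
  ∑ ef, σ.p ef * ∑ o, k.k n (ef.1 m) o * (if ef.2 o = some m then 0 else 1)

/-- Rate `R` is reliably achievable over the compound channel `𝒜` with random codes:
there are random channel codes and `δ n → 0`, independent of `k ∈ 𝒜`, such that the maximal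
probability of error is at most `δ n` for every `n`, every `k ∈ 𝒜`, and every message. -/
def ReliablyAchievable (𝒜 : Set (Channel ℐ 𝒪)) (R : ℝ) : Prop :=
  ∃ σ : ∀ n : ℕ, RandCode (Fin (nMsg R n)) (Fin n → ℐ) (Fin n → 𝒪) (Option (Fin (nMsg R n))),
    ∃ δ : ℕ → ℝ, Tendsto δ atTop (nhds 0) ∧
      ∀ n : ℕ, ∀ k ∈ 𝒜, ∀ m, chErr R n (σ n) k m ≤ δ n

/-- Total count `n₀ = ∑ a, c a` of a composition `c` (so that `p_X a = c a / n₀`). -/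
def nn0 {𝒳 : Type} [Fintype 𝒳] (c : 𝒳 → ℕ) : ℕ := ∑ a, c a

/-- The type class `𝒰^{n'}` at block length `n' = n₀ n`: sequences whose empirical counts
are exactly `n * c a` for every letter `a` (i.e. exact type `p_X`). -/
def typeCl {𝒳 : Type} [Fintype 𝒳] [DecidableEq 𝒳] (c : 𝒳 → ℕ) (n : ℕ) :
    Finset (Fin (nn0 c * n) → 𝒳) :=
  Finset.univ.filter fun u => ∀ a, (Finset.univ.filter fun t => u t = a).card = n * c a

/-- End-to-end probability of excess distortion for the uniform `X` source (uniform on the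
type class) through random code `ρ` and channel `k`, at block length `n' = n₀ n`. -/
def uExcess (c : 𝒳 → ℕ) (d : ∀ m : ℕ, (Fin m → 𝒳) → (Fin m → 𝒴) → ℝ) (D : ℝ) (n : ℕ)
    (ρ : RandCode (Fin (nn0 c * n) → 𝒳) (Fin (nn0 c * n) → ℐ)
      (Fin (nn0 c * n) → 𝒪) (Fin (nn0 c * n) → 𝒴))
    (k : Channel ℐ 𝒪) : ℝ :=
  (∑ u ∈ typeCl c n, ∑ ef, ρ.p ef *
      ∑ o, k.k (nn0 c * n) (ef.1 u) o *
        (if ((nn0 c * n : ℕ) : ℝ) * D < d (nn0 c * n) u (ef.2 o) then 1 else 0))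
    / ((typeCl c n).card : ℝ)

/-- The compound channel `𝒟` is capable of communicating the uniform `X` source to within
distortion `D`: there are random codes and `ω_{n'} → 0`, independent of `k ∈ 𝒟`, with
excess-distortion probability `≤ ω_{n'}` at every block length `n' = n₀ n` and every `k ∈ 𝒟`. -/
def UCanCommunicate (𝒟 : Set (Channel ℐ 𝒪)) (c : 𝒳 → ℕ)
    (d : ∀ m : ℕ, (Fin m → 𝒳) → (Fin m → 𝒴) → ℝ) (D : ℝ) : Prop :=
  ∃ ρ : ∀ n : ℕ, RandCode (Fin (nn0 c * n) → 𝒳) (Fin (nn0 c * n) → ℐ)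
      (Fin (nn0 c * n) → 𝒪) (Fin (nn0 c * n) → 𝒴),
    ∃ ω : ℕ → ℝ, Tendsto ω atTop (nhds 0) ∧
      ∀ n : ℕ, 1 ≤ n → ∀ k ∈ 𝒟, uExcess c d D n (ρ n) k ≤ ω n

/-- Rate `R` is reliably achievable over `𝒟` with random codes, block lengths restricted to
multiples `n' = n₀ n`. -/
def UReliablyAchievable (𝒟 : Set (Channel ℐ 𝒪)) (c : 𝒳 → ℕ) (R : ℝ) : Prop :=
  ∃ σ : ∀ n : ℕ, RandCode (Fin (nMsg R (nn0 c * n))) (Fin (nn0 c * n) → ℐ)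
      (Fin (nn0 c * n) → 𝒪) (Option (Fin (nMsg R (nn0 c * n)))),
    ∃ δ : ℕ → ℝ, Tendsto δ atTop (nhds 0) ∧
      ∀ n : ℕ, 1 ≤ n → ∀ k ∈ 𝒟, ∀ m, chErr R (nn0 c * n) (σ n) k m ≤ δ n

/-- Probability of excess distortion of a random rate-`R` source code for the uniform `X`
source at block length `n' = n₀ n`. -/
def uSrcExcess (c : 𝒳 → ℕ) (d : ∀ m : ℕ, (Fin m → 𝒳) → (Fin m → 𝒴) → ℝ) (D R : ℝ) (n : ℕ)
    (τ : RandCode (Fin (nn0 c * n) → 𝒳) (Fin (nMsg R (nn0 c * n)))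
      (Fin (nMsg R (nn0 c * n))) (Fin (nn0 c * n) → 𝒴)) : ℝ :=
  (∑ u ∈ typeCl c n, ∑ ef, τ.p ef *
      (if ((nn0 c * n : ℕ) : ℝ) * D < d (nn0 c * n) u (ef.2 (ef.1 u)) then 1 else 0))
    / ((typeCl c n).card : ℝ)

/-- `R^P_U(D)`: infimum (in `ℝ≥0∞`) of rates `R > 0` at which the uniform `X` source can be
coded to within distortion `D` under the (limit) probability-of-excess-distortion criterion. -/
def RPU (c : 𝒳 → ℕ) (d : ∀ m : ℕ, (Fin m → 𝒳) → (Fin m → 𝒴) → ℝ) (D : ℝ) : ℝ≥0∞ :=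
  sInf {r : ℝ≥0∞ | ∃ R : ℝ, 0 < R ∧
    (∃ τ : ∀ n : ℕ, RandCode (Fin (nn0 c * n) → 𝒳) (Fin (nMsg R (nn0 c * n)))
        (Fin (nMsg R (nn0 c * n))) (Fin (nn0 c * n) → 𝒴),
      Tendsto (fun n => uSrcExcess c d D R n (τ n)) atTop (nhds 0)) ∧
    r = ENNReal.ofReal R}

/-- `R^P_U(D, inf)`: infimum (in `ℝ≥0∞`) of rates `R > 0` at which the uniform `X` source can
be coded to within distortion `D` under the `inf` probability-of-excess-distortion criterion
(`liminf` of the excess-distortion probabilities equal to `0`). -/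
def RPUinf (c : 𝒳 → ℕ) (d : ∀ m : ℕ, (Fin m → 𝒳) → (Fin m → 𝒴) → ℝ) (D : ℝ) : ℝ≥0∞ :=
  sInf {r : ℝ≥0∞ | ∃ R : ℝ, 0 < R ∧
    (∃ τ : ∀ n : ℕ, RandCode (Fin (nn0 c * n) → 𝒳) (Fin (nMsg R (nn0 c * n)))
        (Fin (nMsg R (nn0 c * n))) (Fin (nn0 c * n) → 𝒴),
      Filter.liminf (fun n => uSrcExcess c d D R n (τ n)) atTop = 0) ∧
    r = ENNReal.ofReal R}

/-! ### Random codes driven by an auxiliary random variable -/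

/-- The random code obtained from a finite probability space `(Ω, w)` and an assignment `F` of an
encoder–decoder pair to each sample point: the push-forward of `w` under `F`. -/
def pushCode {Ω A B C E : Type} [Fintype Ω] [Fintype A] [DecidableEq A] [Fintype B]
    [Fintype C] [DecidableEq C] [Fintype E] (w : Ω → ℝ) (hw : IsDist w)
    (F : Ω → (A → B) × (C → E)) : RandCode A B C E where
  p ef := by
    classical
    exact ∑ x, if F x = ef then w x else 0
  isDist := by
    classical
    refine ⟨fun ef => Finset.sum_nonneg fun x _ => ?_, ?_⟩
    · split_ifs
      exacts [hw.1 x, le_rfl]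
    · rw [Finset.sum_comm]
      simpa using hw.2

theorem pushCode_sum {Ω A B C E : Type} [Fintype Ω] [Fintype A] [DecidableEq A] [Fintype B]
    [Fintype C] [DecidableEq C] [Fintype E] (w : Ω → ℝ) (hw : IsDist w)
    (F : Ω → (A → B) × (C → E)) (g : (A → B) × (C → E) → ℝ) :
    ∑ ef, (pushCode w hw F).p ef * g ef = ∑ x, w x * g (F x) := by
  classical
  simp only [pushCode, Finset.sum_mul]
  rw [Finset.sum_comm]
  refine Finset.sum_congr rfl fun x _ => ?_
  simp [ite_mul]

theorem isDist_uniform (Ω : Type) [Fintype Ω] [Nonempty Ω] :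
    IsDist (fun _ : Ω => ((Fintype.card Ω : ℝ))⁻¹) := by
  refine ⟨fun _ => by positivity, ?_⟩
  simp

theorem IsDist.sum_mul_le {α : Type} [Fintype α] {p : α → ℝ} (hp : IsDist p) {g : α → ℝ} {b : ℝ}
    (hg : ∀ a, g a ≤ b) : ∑ a, p a * g a ≤ b := by
  calc ∑ a, p a * g a ≤ ∑ a, p a * b :=
        Finset.sum_le_sum fun a _ => mul_le_mul_of_nonneg_left (hg a) (hp.1 a)
    _ = b := by rw [← Finset.sum_mul, hp.2, one_mul]

/-! ### Source coding with a random codebook -/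

/-- Random-codebook source coding. The `M` codewords are drawn independently and uniformly from
the family `y : S → B`; if every source symbol of `T` is missed by a proportion `q` of the family,
it is missed by the whole codebook with probability `q ^ M`. -/
theorem exists_source_code {A B S : Type} [Fintype A] [DecidableEq A] [Fintype B]
    [Fintype S] [Nonempty S] (T : Finset A) (bad : A → B → Prop) [∀ a b, Decidable (bad a b)]
    (y : S → B) (q : ℝ)
    (hq : ∀ u ∈ T, ((Finset.univ.filter fun s => bad u (y s)).card : ℝ) = q * Fintype.card S)
    (M : ℕ) (hM : 0 < M) :
    ∃ τ : RandCode A (Fin M) (Fin M) B, ∀ u ∈ T,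
      ∑ ef, τ.p ef * (if bad u (ef.2 (ef.1 u)) then (1 : ℝ) else 0) ≤ q ^ M := by
  classical
  let enc : (Fin M → S) → A → Fin M := fun s u =>
    if h : ∃ m, ¬ bad u (y (s m)) then h.choose else ⟨0, hM⟩
  refine ⟨pushCode _ (isDist_uniform (Fin M → S)) fun s => (enc s, fun m => y (s m)),
    fun u hu => ?_⟩
  rw [pushCode_sum]
  have hind : ∀ s : Fin M → S, (if bad u (y (s (enc s u))) then (1 : ℝ) else 0) ≤
      ∏ m, if bad u (y (s m)) then (1 : ℝ) else 0 := by
    intro s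
    by_cases h : ∃ m, ¬ bad u (y (s m))
    · have h1 : ¬ bad u (y (s (enc s u))) := by
        simp only [enc, dif_pos h]
        exact h.choose_spec
      rw [if_neg h1]
      exact Finset.prod_nonneg fun m _ => by split_ifs <;> norm_num
    · push Not at h
      simp [h]
  have hsum : ∑ s : Fin M → S, ∏ m, (if bad u (y (s m)) then (1 : ℝ) else 0)
      = (q * Fintype.card S) ^ M := by
    rw [← hq u hu, ← Fintype.prod_sum (fun (_ : Fin M) (s : S) =>
      if bad u (y s) then (1 : ℝ) else 0)]
    simp
  have hcard : (0 : ℝ) < Fintype.card S := by exact_mod_cast Fintype.card_pos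
  calc _ ≤ ∑ s : Fin M → S, ((Fintype.card (Fin M → S) : ℝ))⁻¹ *
        ∏ m, (if bad u (y (s m)) then (1 : ℝ) else 0) :=
        Finset.sum_le_sum fun s _ => mul_le_mul_of_nonneg_left (hind s) (by positivity)
    _ = q ^ M := by
        rw [← Finset.mul_sum, hsum]
        simp only [Fintype.card_fun, Fintype.card_fin, Nat.cast_pow, mul_pow]
        field_simp

/-! ### Channel coding through a joint source-channel code -/

/-- Fubini for a codebook: one coordinate is averaged out first, with the others held fixed. -/
theorem sum_codebook {α : Type} [Fintype α] {M : ℕ} (m : Fin M) (G : (Fin M → α) → ℝ) :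
    ∑ s, G s = ∑ r : {j // j ≠ m} → α, ∑ a, G ((Equiv.funSplitAt m α).symm (a, r)) := by
  rw [← (Equiv.funSplitAt m α).symm.sum_comp G, Fintype.sum_prod_type_right]

theorem card_codebook (α : Type) [Fintype α] {M : ℕ} (m : Fin M) :
    (Fintype.card (Fin M → α) : ℝ) =
      Fintype.card α * Fintype.card ({j // j ≠ m} → α) := by
  rw [Fintype.card_congr (Equiv.funSplitAt m α), Fintype.card_prod, Nat.cast_mul]

/-- If averaging `G` over the codeword of `m` alone never gives more than `b`, then neither does
averaging over the whole codebook. -/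
theorem avg_codebook_le {α : Type} [Fintype α] [Nonempty α] {M : ℕ} (m : Fin M)
    (G : (Fin M → α) → ℝ) (b : ℝ)
    (h : ∀ r, ∑ a, G ((Equiv.funSplitAt m α).symm (a, r)) ≤ b * Fintype.card α) :
    ∑ s, ((Fintype.card (Fin M → α) : ℝ))⁻¹ * G s ≤ b := by
  rw [← Finset.mul_sum, sum_codebook m, inv_mul_le_iff₀ (by exact_mod_cast Fintype.card_pos),
    card_codebook α m]
  calc _ ≤ ∑ r : {j // j ≠ m} → α, b * Fintype.card α := Finset.sum_le_sum fun r _ => h r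
    _ = _ := by simp; ring

/-- A joint source-channel code `ρ` turns into a channel code with random codewords from `T`,
decoding to the unique codeword which is `good` for the reproduction. For the error event to occur
the sent codeword is not `good`, or one of the independent wrong codewords is. -/
theorem exists_channel_code {A I O Y : Type} [Fintype A] [DecidableEq A] [Fintype I]
    [Fintype O] [DecidableEq O] [Fintype Y] (T : Finset A) (hT : T.Nonempty)
    (bad : A → Y → Prop) [∀ a b, Decidable (bad a b)] (ρ : RandCode A I O Y) (M : ℕ) :
    ∃ σ : RandCode (Fin M) I O (Option (Fin M)), ∀ k : I → O → ℝ, (∀ i, IsDist (k i)) →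
      ∀ P : ℝ, 0 ≤ P → (∀ y, ((T.filter fun u => ¬ bad u y).card : ℝ) ≤ P * T.card) → ∀ m,
      ∑ ef, σ.p ef * ∑ o, k (ef.1 m) o * (if ef.2 o = some m then (0 : ℝ) else 1) ≤
        (∑ u ∈ T, ∑ ef, ρ.p ef * ∑ o, k (ef.1 u) o * (if bad u (ef.2 o) then (1 : ℝ) else 0))
          / T.card + M * P := by
  classical
  have : Nonempty T := hT.to_subtype
  let dec : (Fin M → T) → Y → Option (Fin M) := fun s y =>
    if h : ∃ m, ¬ bad (s m) y ∧ ∀ m', ¬ bad (s m') y → m' = m then some h.choose else none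
  -- The shared randomness: a uniform codebook, independent of the given code.
  let w : (Fin M → T) × ((A → I) × (O → Y)) → ℝ := fun x =>
    ((Fintype.card (Fin M → T) : ℝ))⁻¹ * ρ.p x.2
  have hw : IsDist w := by
    refine ⟨fun x => mul_nonneg (by positivity) (ρ.isDist.1 _), ?_⟩
    rw [Fintype.sum_prod_type]
    simp only [w, ← Finset.mul_sum, ρ.isDist.2, mul_one]
    exact (isDist_uniform (Fin M → T)).2
  refine ⟨pushCode w hw fun x => (fun m => x.2.1 (x.1 m), fun o => dec x.1 (x.2.2 o)),
    fun k hk P hP hball m => ?_⟩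
  rw [pushCode_sum, Fintype.sum_prod_type]
  have hTc : (0 : ℝ) < T.card := by exact_mod_cast hT.card_pos
  -- Union bound on the decoding error.
  have hind : ∀ (s : Fin M → T) (y : Y), (if dec s y = some m then (0 : ℝ) else 1) ≤
      (if bad (s m) y then 1 else 0) +
        ∑ m' ∈ Finset.univ.erase m, if ¬ bad (s m') y then (1 : ℝ) else 0 := by
    intro s y
    have hnn : ∀ m' ∈ Finset.univ.erase m, (0 : ℝ) ≤ if ¬ bad (s m') y then (1 : ℝ) else 0 :=
      fun m' _ => by split_ifs <;> norm_num
    have hsn := Finset.sum_nonneg hnn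
    by_cases hb : bad (s m) y
    · rw [if_pos hb]
      have : (if dec s y = some m then (0 : ℝ) else 1) ≤ 1 := by split_ifs <;> norm_num
      linarith
    · rw [if_neg hb]
      by_cases hu : ∀ m', ¬ bad (s m') y → m' = m
      · have h : ∃ m, ¬ bad (s m) y ∧ ∀ m', ¬ bad (s m') y → m' = m := ⟨m, hb, hu⟩
        have hd : dec s y = some m := by
          simp only [dec, dif_pos h]
          rw [h.choose_spec.2 m hb]
        rw [if_pos hd]
        linarith
      · push Not at hu
        obtain ⟨m', hm', hne⟩ := hu
        have h1 := Finset.single_le_sum hnn (Finset.mem_erase.2 ⟨hne, Finset.mem_univ m'⟩)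
        rw [if_pos hm'] at h1
        have : (if dec s y = some m then (0 : ℝ) else 1) ≤ 1 := by split_ifs <;> norm_num
        linarith
  -- `H u g` is the expectation of `g` at the reproduction when the source symbol is `u`.
  obtain ⟨H, hH⟩ : ∃ H : A → (Y → ℝ) → ℝ, ∀ u g,
      H u g = ∑ ef, ρ.p ef * ∑ o, k (ef.1 u) o * g (ef.2 o) := ⟨_, fun _ _ => rfl⟩
  have hHmono : ∀ u (g g' : Y → ℝ), (∀ y, g y ≤ g' y) → H u g ≤ H u g' := fun u g g' h => by
    rw [hH, hH]
    exact Finset.sum_le_sum fun ef _ => mul_le_mul_of_nonneg_left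
      (Finset.sum_le_sum fun o _ => mul_le_mul_of_nonneg_left (h _) ((hk _).1 _))
      (ρ.isDist.1 ef)
  have hHadd : ∀ u (g g' : Y → ℝ), H u (fun y => g y + g' y) = H u g + H u g' := by
    intro u g g'
    simp only [hH, mul_add, Finset.sum_add_distrib]
  have hHsum : ∀ {J : Type} (S : Finset J) u (g : J → Y → ℝ),
      H u (fun y => ∑ j ∈ S, g j y) = ∑ j ∈ S, H u (g j) := by
    intro J S u g
    simp only [hH, Finset.mul_sum]
    rw [Finset.sum_comm (s := S)]
    exact Finset.sum_congr rfl fun ef _ => Finset.sum_comm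
  have hHle : ∀ u (g : Y → ℝ) b, (∀ y, g y ≤ b) → H u g ≤ b := fun u g b h => by
    rw [hH]
    exact ρ.isDist.sum_mul_le fun ef => (hk _).sum_mul_le fun o => h _
  have hA : ∑ s : Fin M → T, ((Fintype.card (Fin M → T) : ℝ))⁻¹ *
      H (s m) (fun y => if bad (s m) y then 1 else 0) ≤
      (∑ u ∈ T, H u (fun y => if bad u y then 1 else 0)) / T.card := by
    refine avg_codebook_le (α := T) m (fun s => H (s m) (fun y => if bad (s m) y then 1 else 0)) _
      fun r => le_of_eq ?_
    rw [Fintype.card_coe, div_mul_cancel₀ _ hTc.ne']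
    simp only [Equiv.funSplitAt_symm_apply, dite_true]
    exact Finset.sum_coe_sort T fun u => H u (fun y => if bad u y then 1 else 0)
  have hB : ∀ m' ∈ Finset.univ.erase m, ∑ s : Fin M → T, ((Fintype.card (Fin M → T) : ℝ))⁻¹ *
      H (s m) (fun y => if ¬ bad (s m') y then 1 else 0) ≤ P := by
    intro m' hm'
    have hne : m ≠ m' := (Finset.ne_of_mem_erase hm').symm
    refine avg_codebook_le (α := T) m'
      (fun s => H (s m) (fun y => if ¬ bad (s m') y then 1 else 0)) _ fun r => ?_
    simp only [Equiv.funSplitAt_symm_apply, dite_true, dif_neg hne]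
    rw [← hHsum Finset.univ _ fun (a : T) y => if ¬ bad a y then (1 : ℝ) else 0, Fintype.card_coe]
    refine hHle _ _ _ fun y => ?_
    refine le_trans (le_of_eq ?_) (hball y)
    rw [Finset.sum_coe_sort T fun u => if ¬ bad u y then (1 : ℝ) else 0, Finset.sum_boole]
  calc _ = ∑ s : Fin M → T, ((Fintype.card (Fin M → T) : ℝ))⁻¹ *
        H (s m) (fun y => if dec s y = some m then (0 : ℝ) else 1) := by
        refine Finset.sum_congr rfl fun s _ => ?_
        simp only [w, hH]
        rw [Finset.mul_sum]
        exact Finset.sum_congr rfl fun ef _ => by ring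
    _ ≤ ∑ s : Fin M → T, ((Fintype.card (Fin M → T) : ℝ))⁻¹ *
        (H (s m) (fun y => if bad (s m) y then 1 else 0) +
          ∑ m' ∈ Finset.univ.erase m, H (s m) (fun y => if ¬ bad (s m') y then 1 else 0)) := by
        refine Finset.sum_le_sum fun s _ => mul_le_mul_of_nonneg_left ?_ (by positivity)
        rw [← hHsum (Finset.univ.erase m) _ fun m' y => if ¬ bad (s m') y then (1 : ℝ) else 0,
          ← hHadd]
        exact hHmono _ _ _ (hind s)
    _ = ∑ s : Fin M → T, ((Fintype.card (Fin M → T) : ℝ))⁻¹ *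
          H (s m) (fun y => if bad (s m) y then 1 else 0) +
        ∑ m' ∈ Finset.univ.erase m, ∑ s : Fin M → T, ((Fintype.card (Fin M → T) : ℝ))⁻¹ *
          H (s m) (fun y => if ¬ bad (s m') y then 1 else 0) := by
        simp only [mul_add, Finset.sum_add_distrib, Finset.mul_sum]
        rw [Finset.sum_comm (s := Finset.univ.erase m)]
    _ ≤ _ := by
        simp only [hH] at hA hB ⊢
        refine add_le_add hA ((Finset.sum_le_sum hB).trans ?_)
        rw [Finset.sum_const, nsmul_eq_mul]
        refine mul_le_mul_of_nonneg_right ?_ hP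
        exact_mod_cast (Finset.card_le_univ _).trans (Fintype.card_fin M).le

/-! ### The type class and its symmetry -/

theorem typeCl_nonempty (c : 𝒳 → ℕ) (n : ℕ) : (typeCl c n).Nonempty := by
  have hcard : Fintype.card (Fin (nn0 c * n)) = Fintype.card (Σ a, Fin (n * c a)) := by
    simp [nn0, Finset.mul_sum, mul_comm]
  let e := Fintype.equivOfCardEq hcard
  refine ⟨fun t => (e t).1, ?_⟩
  simp only [typeCl, Finset.mem_filter, Finset.mem_univ, true_and]
  intro a
  rw [← Fintype.card_subtype]
  have e1 : {t // (e t).1 = a} ≃ {s : Σ a, Fin (n * c a) // s.1 = a} :=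
    e.subtypeEquiv fun t => Iff.rfl
  rw [Fintype.card_congr e1, Fintype.card_congr (Equiv.sigmaSubtype a), Fintype.card_fin]

theorem typeCl_comp (c : 𝒳 → ℕ) (n : ℕ) (π : Equiv.Perm (Fin (nn0 c * n)))
    {u : Fin (nn0 c * n) → 𝒳} (hu : u ∈ typeCl c n) : u ∘ π ∈ typeCl c n := by
  simp only [typeCl, Finset.mem_filter, Finset.mem_univ, true_and] at hu ⊢
  intro a
  rw [← hu a]
  exact Finset.card_equiv π fun t => by simp

theorem typeCl_transitive (c : 𝒳 → ℕ) (n : ℕ) {u v : Fin (nn0 c * n) → 𝒳}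
    (hu : u ∈ typeCl c n) (hv : v ∈ typeCl c n) :
    ∃ π : Equiv.Perm (Fin (nn0 c * n)), v = u ∘ π := by
  simp only [typeCl, Finset.mem_filter, Finset.mem_univ, true_and] at hu hv
  have e : ∀ a, Nonempty ({t // v t = a} ≃ {t // u t = a}) := fun a => by
    refine ⟨Fintype.equivOfCardEq ?_⟩
    rw [Fintype.card_subtype, Fintype.card_subtype, hu a, hv a]
  exact ⟨Equiv.ofFiberEquiv fun a => (e a).some,
    funext fun t => (Equiv.ofFiberEquiv_map (fun a => (e a).some) t).symm⟩

/-- A uniformly random permutation of a fixed element of the type class is uniform on it. -/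
theorem sum_perm_typeCl (c : 𝒳 → ℕ) (n : ℕ) (g : (Fin (nn0 c * n) → 𝒳) → ℝ)
    {u : Fin (nn0 c * n) → 𝒳} (hu : u ∈ typeCl c n) :
    ((typeCl c n).card : ℝ) * ∑ π : Equiv.Perm (Fin (nn0 c * n)), g (u ∘ π) =
      Fintype.card (Equiv.Perm (Fin (nn0 c * n))) * ∑ v ∈ typeCl c n, g v := by
  have h1 : ∀ v ∈ typeCl c n, ∑ π : Equiv.Perm (Fin (nn0 c * n)), g (v ∘ π) =
      ∑ π : Equiv.Perm (Fin (nn0 c * n)), g (u ∘ π) := by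
    intro v hv
    obtain ⟨σ, rfl⟩ := typeCl_transitive c n hu hv
    exact Equiv.sum_comp (Equiv.mulLeft σ)
      fun π : Equiv.Perm (Fin (nn0 c * n)) => g (u ∘ π)
  have h2 : ∀ π : Equiv.Perm (Fin (nn0 c * n)),
      ∑ v ∈ typeCl c n, g (v ∘ π) = ∑ v ∈ typeCl c n, g v := by
    intro π
    refine Finset.sum_bij' (fun v _ => v ∘ π) (fun v _ => v ∘ π.symm)
      (fun v hv => typeCl_comp c n π hv) (fun v hv => typeCl_comp c n π.symm hv) ?_ ?_ ?_
    · intro v _; ext t; simp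
    · intro v _; ext t; simp
    · intro v _; rfl
  calc _ = ∑ v ∈ typeCl c n, ∑ π : Equiv.Perm (Fin (nn0 c * n)), g (v ∘ π) := by
        rw [Finset.sum_congr rfl h1, Finset.sum_const, nsmul_eq_mul]
    _ = _ := by
        rw [Finset.sum_comm, Finset.sum_congr rfl fun π _ => h2 π, Finset.sum_const, nsmul_eq_mul,
          Finset.card_univ]

/-- The probability that the uniform source block is within distortion `n' D` of the
reproduction block `y`. -/
def ballProb (c : 𝒳 → ℕ) (d : ∀ m : ℕ, (Fin m → 𝒳) → (Fin m → 𝒴) → ℝ) (D : ℝ) (n : ℕ)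
    (y : Fin (nn0 c * n) → 𝒴) : ℝ :=
  (((typeCl c n).filter fun u => ¬ ((nn0 c * n : ℕ) : ℝ) * D < d (nn0 c * n) u y).card : ℝ)
    / ((typeCl c n).card : ℝ)

/-- Largest ball probability over all reproduction blocks; it is `0` when there is none. -/
def maxBall (c : 𝒳 → ℕ) (d : ∀ m : ℕ, (Fin m → 𝒳) → (Fin m → 𝒴) → ℝ) (D : ℝ) (n : ℕ) : ℝ :=
  ⨆ y, ballProb c d D n y

set_option linter.unusedSectionVars false in
theorem ballProb_nonneg (c : 𝒳 → ℕ) (d : ∀ m : ℕ, (Fin m → 𝒳) → (Fin m → 𝒴) → ℝ) (D : ℝ)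
    (n : ℕ) (y : Fin (nn0 c * n) → 𝒴) : 0 ≤ ballProb c d D n y := by
  unfold ballProb; positivity

set_option linter.unusedSectionVars false in
theorem ballProb_le_one (c : 𝒳 → ℕ) (d : ∀ m : ℕ, (Fin m → 𝒳) → (Fin m → 𝒴) → ℝ) (D : ℝ)
    (n : ℕ) (y : Fin (nn0 c * n) → 𝒴) : ballProb c d D n y ≤ 1 := by
  refine div_le_one_of_le₀ ?_ (by positivity)
  exact_mod_cast Finset.card_filter_le _ _

set_option linter.unusedSectionVars false in
/-- By permutation invariance, a random permutation of `y` misses each source block of the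
type class with probability `1 - ballProb y`. -/
theorem card_perm_bad (c : 𝒳 → ℕ) (d : ∀ m : ℕ, (Fin m → 𝒳) → (Fin m → 𝒴) → ℝ)
    (hperm : ∀ (m : ℕ) (π : Equiv.Perm (Fin m)) (x : Fin m → 𝒳) (y : Fin m → 𝒴),
      d m (x ∘ π) (y ∘ π) = d m x y)
    (D : ℝ) (n : ℕ) (y : Fin (nn0 c * n) → 𝒴) {u : Fin (nn0 c * n) → 𝒳}
    (hu : u ∈ typeCl c n) :
    ((Finset.univ.filter fun π : Equiv.Perm (Fin (nn0 c * n)) =>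
        ((nn0 c * n : ℕ) : ℝ) * D < d (nn0 c * n) u (y ∘ π)).card : ℝ) =
      (1 - ballProb c d D n y) * Fintype.card (Equiv.Perm (Fin (nn0 c * n))) := by
  have hT : (0 : ℝ) < (typeCl c n).card := by exact_mod_cast (typeCl_nonempty c n).card_pos
  have hmove : ∀ π : Equiv.Perm (Fin (nn0 c * n)),
      d (nn0 c * n) u (y ∘ π) = d (nn0 c * n) (u ∘ π.symm) y := by
    intro π
    rw [← hperm _ π (u ∘ π.symm) y]
    congr 1
    ext t; simp
  have hsum := sum_perm_typeCl c n
    (fun v => if ((nn0 c * n : ℕ) : ℝ) * D < d (nn0 c * n) v y then (1 : ℝ) else 0) hu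
  rw [← Equiv.sum_comp (Equiv.inv (Equiv.Perm (Fin (nn0 c * n))))] at hsum
  have hcompl : ((((typeCl c n).filter fun v =>
        ((nn0 c * n : ℕ) : ℝ) * D < d (nn0 c * n) v y).card : ℕ) : ℝ) +
      ((typeCl c n).filter fun v => ¬ ((nn0 c * n : ℕ) : ℝ) * D < d (nn0 c * n) v y).card =
      (typeCl c n).card := by
    exact_mod_cast Finset.card_filter_add_card_filter_not _
  have hl : ((Finset.univ.filter fun π : Equiv.Perm (Fin (nn0 c * n)) =>
        ((nn0 c * n : ℕ) : ℝ) * D < d (nn0 c * n) u (y ∘ π)).card : ℝ) =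
      ∑ π : Equiv.Perm (Fin (nn0 c * n)),
        if ((nn0 c * n : ℕ) : ℝ) * D < d (nn0 c * n) (u ∘ (Equiv.inv (Equiv.Perm (Fin (nn0 c * n))) π)) y
          then (1 : ℝ) else 0 := by
    simp only [hmove]
    rw [Finset.sum_boole]
    rfl
  rw [← hl, Finset.sum_boole] at hsum
  rw [ballProb, ← mul_right_inj' hT.ne', hsum]
  field_simp
  linarith

theorem exists_uSrcExcess_le (c : 𝒳 → ℕ) (d : ∀ m : ℕ, (Fin m → 𝒳) → (Fin m → 𝒴) → ℝ)
    (hperm : ∀ (m : ℕ) (π : Equiv.Perm (Fin m)) (x : Fin m → 𝒳) (y : Fin m → 𝒴),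
      d m (x ∘ π) (y ∘ π) = d m x y)
    (D R : ℝ) (n : ℕ) [Nonempty 𝒴] :
    ∃ τ : RandCode (Fin (nn0 c * n) → 𝒳) (Fin (nMsg R (nn0 c * n)))
        (Fin (nMsg R (nn0 c * n))) (Fin (nn0 c * n) → 𝒴),
      uSrcExcess c d D R n τ ≤ Real.exp (-(nMsg R (nn0 c * n) * maxBall c d D n)) := by
  obtain ⟨y, hy⟩ := exists_eq_ciSup_of_finite (f := ballProb c d D n)
  obtain ⟨τ, hτ⟩ := exists_source_code (typeCl c n)
    (fun u y => ((nn0 c * n : ℕ) : ℝ) * D < d (nn0 c * n) u y)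
    (fun π : Equiv.Perm (Fin (nn0 c * n)) => y ∘ π) (1 - ballProb c d D n y)
    (fun u hu => card_perm_bad c d hperm D n y hu) (nMsg R (nn0 c * n))
    (by unfold nMsg; positivity)
  refine ⟨τ, ?_⟩
  have hT : (0 : ℝ) < (typeCl c n).card := by exact_mod_cast (typeCl_nonempty c n).card_pos
  have h1 : uSrcExcess c d D R n τ ≤ (1 - ballProb c d D n y) ^ nMsg R (nn0 c * n) := by
    rw [uSrcExcess, div_le_iff₀ hT]
    refine (Finset.sum_le_sum hτ).trans (le_of_eq ?_)
    rw [Finset.sum_const, nsmul_eq_mul, mul_comm]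
  refine h1.trans ?_
  rw [maxBall, ← hy, ← mul_neg, Real.exp_nat_mul]
  refine pow_le_pow_left₀ (by linarith [ballProb_le_one c d D n y]) ?_ _
  linarith [Real.add_one_le_exp (-ballProb c d D n y)]

theorem uSrcExcess_nonneg (c : 𝒳 → ℕ) (d : ∀ m : ℕ, (Fin m → 𝒳) → (Fin m → 𝒴) → ℝ)
    (D R : ℝ) (n : ℕ) (τ : RandCode (Fin (nn0 c * n) → 𝒳) (Fin (nMsg R (nn0 c * n)))
        (Fin (nMsg R (nn0 c * n))) (Fin (nn0 c * n) → 𝒴)) : 0 ≤ uSrcExcess c d D R n τ := by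
  refine div_nonneg (Finset.sum_nonneg fun u _ => Finset.sum_nonneg fun ef _ =>
    mul_nonneg (τ.isDist.1 ef) ?_) (by positivity)
  split_ifs <;> norm_num

/-! ### Asymptotics -/

theorem tendsto_nMsg_ratio {R R' : ℝ} (hR : 0 < R) (hRR : R < R') {N : ℕ} (hN : 0 < N) :
    Tendsto (fun n : ℕ => (nMsg R (N * n) : ℝ) / nMsg R' (N * n)) atTop (nhds 0) := by
  have hgeo : Tendsto (fun n : ℕ => 2 * ((2 : ℝ) ^ (-(N * (R' - R)))) ^ n) atTop (nhds 0) := by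
    rw [← mul_zero (2 : ℝ)]
    refine (tendsto_pow_atTop_nhds_zero_of_lt_one (by positivity) ?_).const_mul 2
    refine Real.rpow_lt_one_of_one_lt_of_neg (by norm_num) ?_
    have : (0 : ℝ) < N * (R' - R) := mul_pos (by exact_mod_cast hN) (by linarith)
    linarith
  refine squeeze_zero (fun n => by positivity) (fun n => ?_) hgeo
  -- Rounding down the two exponents costs at most a factor `2`.
  have h1 : (nMsg R (N * n) : ℝ) ≤ (2 : ℝ) ^ (((N * n : ℕ) : ℝ) * R) := by
    rw [nMsg, Nat.cast_pow, Nat.cast_ofNat, ← Real.rpow_natCast]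
    exact Real.rpow_le_rpow_of_exponent_le (by norm_num) (Nat.floor_le (by positivity))
  have h2 : (2 : ℝ) ^ (((N * n : ℕ) : ℝ) * R' - 1) ≤ nMsg R' (N * n) := by
    rw [nMsg, Nat.cast_pow, Nat.cast_ofNat, ← Real.rpow_natCast]
    refine Real.rpow_le_rpow_of_exponent_le (by norm_num) ?_
    linarith [Nat.lt_floor_add_one (((N * n : ℕ) : ℝ) * R')]
  calc (nMsg R (N * n) : ℝ) / nMsg R' (N * n)
      ≤ (2 : ℝ) ^ (((N * n : ℕ) : ℝ) * R) / (2 : ℝ) ^ (((N * n : ℕ) : ℝ) * R' - 1) :=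
        div_le_div₀ (by positivity) h1 (by positivity) h2
    _ = 2 * ((2 : ℝ) ^ (-(N * (R' - R)))) ^ n := by
        rw [← Real.rpow_sub (by norm_num), ← Real.rpow_natCast, ← Real.rpow_mul (by norm_num)]
        nth_rewrite 2 [← Real.rpow_one 2]
        rw [← Real.rpow_add (by norm_num)]
        congr 1
        push_cast
        ring

/-- Below `R^P_U(D, inf)` the ball probabilities are exponentially too small for
`2 ^ ⌊n' R⌋` balls to have non-negligible total probability. -/
theorem tendsto_nMsg_maxBall (c : 𝒳 → ℕ) (hc : 0 < nn0 c)
    (d : ∀ m : ℕ, (Fin m → 𝒳) → (Fin m → 𝒴) → ℝ)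
    (hperm : ∀ (m : ℕ) (π : Equiv.Perm (Fin m)) (x : Fin m → 𝒳) (y : Fin m → 𝒴),
      d m (x ∘ π) (y ∘ π) = d m x y)
    (D R : ℝ) (hR0 : 0 < R) (hR : ENNReal.ofReal R < RPUinf c d D) [Nonempty 𝒴] :
    Tendsto (fun n : ℕ => (nMsg R (nn0 c * n) : ℝ) * maxBall c d D n) atTop (nhds 0) := by
  obtain ⟨r, hr1, hr2⟩ := exists_between hR
  have hrt : r ≠ ⊤ := (hr2.trans_le le_top).ne
  set R' := r.toReal with hR'
  have hRR : R < R' := (ENNReal.ofReal_lt_iff_lt_toReal hR0.le hrt).1 hr1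
  choose τ hτ using fun n => exists_uSrcExcess_le c d hperm D R' n
  have hP0 : ∀ n, 0 ≤ maxBall c d D n := fun n => Real.iSup_nonneg fun y => ballProb_nonneg ..
  have hne : Filter.liminf (fun n => uSrcExcess c d D R' n (τ n)) atTop ≠ 0 := by
    intro h0
    refine hr2.not_ge (sInf_le ⟨R', hR0.trans hRR, ⟨τ, h0⟩, ?_⟩)
    rw [hR', ENNReal.ofReal_toReal hrt]
  have hle1 : ∀ n, uSrcExcess c d D R' n (τ n) ≤ 1 := fun n => (hτ n).trans <| by
    rw [Real.exp_le_one_iff]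
    have := mul_nonneg (Nat.cast_nonneg (α := ℝ) (nMsg R' (nn0 c * n))) (hP0 n)
    linarith
  have hbddB : atTop.IsBoundedUnder (· ≥ ·) fun n => uSrcExcess c d D R' n (τ n) :=
    isBoundedUnder_of ⟨0, fun n => uSrcExcess_nonneg ..⟩
  have hcob : atTop.IsCoboundedUnder (· ≥ ·) fun n => uSrcExcess c d D R' n (τ n) :=
    (isBoundedUnder_of ⟨1, hle1⟩ :
      atTop.IsBoundedUnder (· ≤ ·) fun n => uSrcExcess c d D R' n (τ n)).isCoboundedUnder_ge
  have hpos : 0 < Filter.liminf (fun n => uSrcExcess c d D R' n (τ n)) atTop :=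
    lt_of_le_of_ne (le_liminf_of_le hcob (Eventually.of_forall fun n => uSrcExcess_nonneg ..))
      hne.symm
  obtain ⟨ε, hε0, hε⟩ := exists_between hpos
  have hev := eventually_lt_of_lt_liminf hε hbddB
  have hlim := (tendsto_nMsg_ratio hR0 hRR hc).mul_const (-Real.log ε)
  rw [zero_mul] at hlim
  refine squeeze_zero' (Eventually.of_forall fun n => mul_nonneg (Nat.cast_nonneg _) (hP0 n)) ?_ hlim
  filter_upwards [hev] with n hn
  have h1 : Real.log ε < -(nMsg R' (nn0 c * n) * maxBall c d D n) :=
    (Real.log_lt_iff_lt_exp hε0).2 (hn.trans_le (hτ n))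
  have hM : (0 : ℝ) < nMsg R' (nn0 c * n) := by unfold nMsg; positivity
  calc (nMsg R (nn0 c * n) : ℝ) * maxBall c d D n
      = nMsg R (nn0 c * n) / nMsg R' (nn0 c * n) *
          (nMsg R' (nn0 c * n) * maxBall c d D n) := by field_simp
    _ ≤ _ := mul_le_mul_of_nonneg_left (by linarith) (by positivity)


/-- Random codes permitted, `D ≥ 0`. If the compound channel `𝒟` is capable
of communicating the uniform `X` source (exact type `p_X = c/n₀`, `n₀` least, i.e.
`gcd c = 1`) to within distortion `D` under the permutation-invariant distortion function `d`,
then — without any further assumption — every rate `0 < R < R^P_U(D, inf)` is reliably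
achievable over `𝒟` with random codes. -/
theorem stmt6 (c : 𝒳 → ℕ) (hc : 0 < nn0 c) (hgcd : Finset.univ.gcd c = 1)
    (d : ∀ m : ℕ, (Fin m → 𝒳) → (Fin m → 𝒴) → ℝ)
    (hd0 : ∀ m x y, 0 ≤ d m x y)
    (hperm : ∀ (m : ℕ) (π : Equiv.Perm (Fin m)) (x : Fin m → 𝒳) (y : Fin m → 𝒴),
      d m (x ∘ π) (y ∘ π) = d m x y)
    (D : ℝ) (hD : 0 ≤ D)
    (𝒟 : Set (Channel ℐ 𝒪))
    (hcap : UCanCommunicate 𝒟 c d D)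
    (R : ℝ) (hR0 : 0 < R) (hR : ENNReal.ofReal R < RPUinf c d D) :
    UReliablyAchievable 𝒟 c R := by
  obtain ⟨ρ, ω, hω, hρ⟩ := hcap
  have hP0 : ∀ n, 0 ≤ maxBall c d D n := fun n => Real.iSup_nonneg fun y => ballProb_nonneg ..
  have hball : ∀ n y, (((typeCl c n).filter fun u =>
      ¬ ((nn0 c * n : ℕ) : ℝ) * D < d (nn0 c * n) u y).card : ℝ) ≤
        maxBall c d D n * (typeCl c n).card := by
    intro n y
    have hT : (0 : ℝ) < (typeCl c n).card := by exact_mod_cast (typeCl_nonempty c n).card_pos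
    rw [← div_le_iff₀ hT]
    exact le_ciSup (f := ballProb c d D n) (Set.finite_range _).bddAbove y
  choose σ hσ using fun n => exists_channel_code (typeCl c n) (typeCl_nonempty c n)
    (fun u y => ((nn0 c * n : ℕ) : ℝ) * D < d (nn0 c * n) u y) (ρ n) (nMsg R (nn0 c * n))
  refine ⟨σ, fun n => ω n + nMsg R (nn0 c * n) * maxBall c d D n, ?_, ?_⟩
  · rw [← add_zero (0 : ℝ)]
    refine hω.add ?_
    cases isEmpty_or_nonempty 𝒴 with
    | inr h => exact tendsto_nMsg_maxBall c hc d hperm D R hR0 hR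
    | inl h =>
      -- Without reproduction letters there are no balls at positive block lengths.
      refine tendsto_const_nhds.congr' ?_
      filter_upwards [eventually_ge_atTop 1] with n hn
      have : NeZero (nn0 c * n) := ⟨(Nat.mul_pos hc hn).ne'⟩
      have : IsEmpty (Fin (nn0 c * n) → 𝒴) := ⟨fun y => h.elim (y 0)⟩
      rw [maxBall, Real.iSup_of_isEmpty, mul_zero]
  · intro n hn k hk m
    exact (hσ n (k.k (nn0 c * n)) (k.isChan (nn0 c * n)) _ (hP0 n) (hball n) m).trans
      (add_le_add_left (hρ n hn k hk) _)

end
end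

section
/- Let ℐ and 𝒪 be finite sets and 𝒜 a set of stochastic matrices (DMCs) from ℐ to 𝒪. Let X^n be a random vector on a finite set, let a (possibly random) encoder independent of k ∈ 𝒜 produce I^n ∈ ℐ^n from X^n, for each k ∈ 𝒜 let O^n be the output of n memoryless uses of k on input I^n, and let Y^n be any (possibly random) function of O^n. Then inf_{k ∈ 𝒜} I(X^n; Y^n) ≤ n · sup_{Q ∈ 𝒫(ℐ)} inf_{k ∈ 𝒜} I(Q, k), where the mutual informations I(X^n;Y^n) are computed under the respective channels k ∈ 𝒜 and 𝒫(ℐ) is the set of pmfs on ℐ. -/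
/-! The compound converse reduces to a bound for each fixed channel `k`, with one input pmf `Q`
that does not depend on `k`: the time average `avgPmf` of the marginals of `I^n`. The bound
`I(X^n;Y^n) ≤ n · I(Q,k)` is `miBits_le_avgPmf`; the infimum over `k` is then taken on both sides,
and the supremum over input pmfs dominates its value at `Q`.

The fixed-channel bound combines data processing, tensorization and concavity in one step. With `r`
the output pmf of `Q` through `k`, and `J` the joint pmf of `(X^n, I^n, O^n, Y^n)`, the inequality
`log w ≤ w - 1` is applied under `J` to
`w = P(x,y) ∏ r(o_t) / (P(x) P(y) ∏ k(o_t|ι_t))`.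
The mean of `w` is at most `1`, so `I(X^n;Y^n)` is at most the mean of
`∑ log (k(o_t|ι_t) / r(o_t))`, and that mean equals `n · I(Q,k)` because `r` is the same for all `t`. -/

open Finset

noncomputable section

/-- Mutual information `I(A;B)` in bits of a joint pmf `p` on `α × β` (curried), with the
convention `0·log₂ 0 = 0`. -/
def miBits {α β : Type} [Fintype α] [Fintype β] (p : α → β → ℝ) : ℝ :=
  ∑ a, ∑ b, if p a b = 0 then 0 else
    p a b * Real.logb 2 (p a b / ((∑ b', p a b') * (∑ a', p a' b)))

/-! ### Basic bounds on mutual information -/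

/-- Since the junk value `log 0 = 0` is multiplied by `0`, no case distinction is needed. -/
lemma miBits_eq {α β : Type} [Fintype α] [Fintype β] (p : α → β → ℝ) :
    miBits p = (∑ a, ∑ b, p a b * Real.log (p a b / ((∑ b', p a b') * (∑ a', p a' b))))
      / Real.log 2 := by
  unfold miBits
  rw [Finset.sum_div]
  refine Finset.sum_congr rfl fun a _ => ?_
  rw [Finset.sum_div]
  refine Finset.sum_congr rfl fun b _ => ?_
  split_ifs with h
  · simp [h]
  · rw [Real.logb, mul_div_assoc]

lemma miBits_nonneg {α β : Type} [Fintype α] [Fintype β] (p : α → β → ℝ)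
    (h0 : ∀ a b, 0 ≤ p a b) (h1 : ∑ a, ∑ b, p a b = 1) : 0 ≤ miBits p := by
  rw [miBits_eq]
  refine div_nonneg ?_ (Real.log_nonneg (by norm_num))
  have hA : ∀ a, 0 ≤ ∑ b', p a b' := fun a => Finset.sum_nonneg fun b _ => h0 a b
  have hB : ∀ b, 0 ≤ ∑ a', p a' b := fun b => Finset.sum_nonneg fun a _ => h0 a b
  have key : ∑ a, ∑ b, (p a b - (∑ b', p a b') * (∑ a', p a' b)) ≤
      ∑ a, ∑ b, p a b * Real.log (p a b / ((∑ b', p a b') * (∑ a', p a' b))) := by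
    refine Finset.sum_le_sum fun a _ => Finset.sum_le_sum fun b _ => ?_
    rcases (h0 a b).eq_or_lt with h | h
    · rw [← h]
      have := mul_nonneg (hA a) (hB b)
      simpa using this
    · have ha : 0 < ∑ b', p a b' :=
        h.trans_le (Finset.single_le_sum (fun b _ => h0 a b) (Finset.mem_univ b))
      have hb : 0 < ∑ a', p a' b :=
        h.trans_le (Finset.single_le_sum (f := fun a => p a b) (fun a _ => h0 a b)
          (Finset.mem_univ a))
      have hab := mul_pos ha hb
      have := Real.one_sub_inv_le_log_of_pos (div_pos h hab)
      have h2 := mul_le_mul_of_nonneg_left this h.le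
      refine le_trans (le_of_eq ?_) h2
      field_simp
  refine le_trans (le_of_eq ?_) key
  simp only [Finset.sum_sub_distrib, ← Finset.mul_sum]
  rw [h1, ← Finset.sum_mul, h1, Finset.sum_comm, h1]
  norm_num

/-- Mutual information of an input pmf and a channel, as the mean of `log (k(o|ι) / r(o))` with
`r` the output pmf. -/
lemma miBits_channel {ℐ 𝒪 : Type} [Fintype ℐ] [Fintype 𝒪] (k : ℐ → 𝒪 → ℝ)
    (hk : ∀ ι, (∀ o, 0 ≤ k ι o) ∧ ∑ o, k ι o = 1) (Q : ℐ → ℝ) :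
    miBits (fun a b => Q a * k a b) =
      (∑ a, Q a * ∑ b, k a b * Real.log (k a b / ∑ a', Q a' * k a' b)) / Real.log 2 := by
  rw [miBits_eq]
  congr 1
  refine Finset.sum_congr rfl fun a _ => ?_
  rw [Finset.mul_sum]
  refine Finset.sum_congr rfl fun b _ => ?_
  rw [← Finset.mul_sum, (hk a).2, mul_one]
  by_cases hQ : Q a = 0
  · simp [hQ]
  · rw [mul_div_mul_left _ _ hQ, mul_assoc]

/-- A crude bound, uniform in `Q`; it makes the supremum over input pmfs a genuine one. -/
lemma miBits_channel_le {ℐ 𝒪 : Type} [Fintype ℐ] [Fintype 𝒪] (k : ℐ → 𝒪 → ℝ)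
    (hk : ∀ ι, (∀ o, 0 ≤ k ι o) ∧ ∑ o, k ι o = 1) (Q : ℐ → ℝ) (hQ : ∀ a, 0 ≤ Q a) :
    miBits (fun a b => Q a * k a b) ≤ (Fintype.card ℐ : ℝ) / Real.log 2 := by
  rw [miBits_channel k hk]
  refine div_le_div_of_nonneg_right ?_ (Real.log_nonneg (by norm_num))
  have : (Fintype.card ℐ : ℝ) = ∑ a, ∑ b, k a b := by simp [(hk _).2]
  rw [this]
  refine Finset.sum_le_sum fun a _ => ?_
  rw [Finset.mul_sum]
  refine Finset.sum_le_sum fun b _ => ?_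
  have hk0 := (hk a).1 b
  rcases (hQ a).eq_or_lt with h | h
  · rw [← h]; simpa using hk0
  rcases hk0.eq_or_lt with h' | h'
  · rw [← h']; simp
  have hr : Q a * k a b ≤ ∑ a', Q a' * k a' b :=
    Finset.single_le_sum (f := fun a => Q a * k a b)
      (fun a _ => mul_nonneg (hQ a) ((hk a).1 b)) (Finset.mem_univ a)
  have hr0 : 0 < ∑ a', Q a' * k a' b := (mul_pos h h').trans_le hr
  have hl : Real.log (k a b / ∑ a', Q a' * k a' b) ≤ k a b / ∑ a', Q a' * k a' b :=
    Real.log_le_self (div_pos h' hr0).le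
  calc Q a * (k a b * Real.log (k a b / ∑ a', Q a' * k a' b))
      ≤ Q a * (k a b * (k a b / ∑ a', Q a' * k a' b)) := by gcongr
    _ = k a b * ((Q a * k a b) / ∑ a', Q a' * k a' b) := by ring
    _ ≤ k a b * 1 := by
        gcongr
        exact (div_le_one hr0).2 hr
    _ = k a b := mul_one _

/-! ### Product pmfs and time-averaged marginals -/

/-- Under a product pmf `∏ f s`, the mean of a function of the coordinate `t` alone is its mean
under the factor `f t`. -/
lemma sum_prod_mul_coord {𝒪 : Type} [Fintype 𝒪] {n : ℕ} (f : Fin n → 𝒪 → ℝ)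
    (hf : ∀ s, ∑ o, f s o = 1) (t : Fin n) (g : 𝒪 → ℝ) :
    ∑ o : Fin n → 𝒪, (∏ s, f s (o s)) * g (o t) = ∑ b, f t b * g b := by
  classical
  have h := Finset.prod_univ_sum (fun _ : Fin n => (Finset.univ : Finset 𝒪))
    (fun s b => f s b * if s = t then g b else 1)
  rw [Fintype.piFinset_univ] at h
  have h2 : ∀ o : Fin n → 𝒪, ∏ s, (f s (o s) * if s = t then g (o s) else 1)
      = (∏ s, f s (o s)) * g (o t) := by
    intro o
    rw [Finset.prod_mul_distrib]
    simp
  simp only [h2] at h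
  rw [← h, Finset.prod_eq_single t]
  · simp
  · intro s _ hs
    simp [hs, hf]
  · simp

lemma sum_prod_eq_one {𝒪 : Type} [Fintype 𝒪] {n : ℕ} (f : Fin n → 𝒪 → ℝ)
    (hf : ∀ s, ∑ o, f s o = 1) : ∑ o : Fin n → 𝒪, ∏ s, f s (o s) = 1 := by
  classical
  have h := Finset.prod_univ_sum (fun _ : Fin n => (Finset.univ : Finset 𝒪)) f
  rw [Fintype.piFinset_univ] at h
  rw [← h]
  simp [hf]

open Classical in
/-- The time average of the marginals of `I^n`, where `(X, I^n)` has joint pmf `p`. -/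
def avgPmf {α ℐ : Type} [Fintype α] [Fintype ℐ] {n : ℕ} (p : α → (Fin n → ℐ) → ℝ) (a : ℐ) : ℝ :=
  (n : ℝ)⁻¹ * ∑ t, ∑ x, ∑ ι, p x ι * if ι t = a then 1 else 0

lemma avgPmf_nonneg {α ℐ : Type} [Fintype α] [Fintype ℐ] {n : ℕ} (p : α → (Fin n → ℐ) → ℝ)
    (h0 : ∀ x ι, 0 ≤ p x ι) (a : ℐ) : 0 ≤ avgPmf p a := by
  unfold avgPmf
  refine mul_nonneg (by positivity) ?_
  refine Finset.sum_nonneg fun t _ => Finset.sum_nonneg fun x _ => Finset.sum_nonneg fun ι _ => ?_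
  refine mul_nonneg (h0 x ι) ?_
  split_ifs <;> norm_num

open Classical in
lemma avgPmf_pos {α ℐ : Type} [Fintype α] [Fintype ℐ] {n : ℕ} (p : α → (Fin n → ℐ) → ℝ)
    (h0 : ∀ x ι, 0 ≤ p x ι) {x : α} {ι : Fin n → ℐ} (h : 0 < p x ι) (t : Fin n) :
    0 < avgPmf p (ι t) := by
  unfold avgPmf
  have hn : 0 < n := t.pos
  have hnn : ∀ s y (κ : Fin n → ℐ), 0 ≤ p y κ * (if κ s = ι t then (1 : ℝ) else 0) := by
    intro s y κ
    refine mul_nonneg (h0 y κ) ?_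
    split_ifs <;> norm_num
  refine mul_pos (by positivity) ?_
  refine Finset.sum_pos' (fun s _ => Finset.sum_nonneg fun y _ => Finset.sum_nonneg fun κ _ =>
    hnn s y κ) ⟨t, Finset.mem_univ _, ?_⟩
  refine Finset.sum_pos' (fun y _ => Finset.sum_nonneg fun κ _ =>
    hnn t y κ) ⟨x, Finset.mem_univ _, ?_⟩
  refine Finset.sum_pos' (fun κ _ => hnn t x κ) ⟨ι, Finset.mem_univ _, ?_⟩
  simpa using h

open Classical in
/-- Means under `avgPmf` are time averages. -/
lemma sum_avgPmf_mul {α ℐ : Type} [Fintype α] [Fintype ℐ] {n : ℕ} (hn : 0 < n)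
    (p : α → (Fin n → ℐ) → ℝ) (h : ℐ → ℝ) :
    (n : ℝ) * ∑ a, avgPmf p a * h a = ∑ x, ∑ ι, p x ι * ∑ t, h (ι t) := by
  have hn' : (n : ℝ) ≠ 0 := by positivity
  unfold avgPmf
  simp only [mul_assoc, ← Finset.mul_sum]
  rw [mul_inv_cancel_left₀ hn']
  simp only [Finset.sum_mul, Finset.mul_sum]
  rw [Finset.sum_comm]
  simp_rw [fun t : Fin n => Finset.sum_comm (s := (Finset.univ : Finset ℐ))
    (t := (Finset.univ : Finset α)) (f := fun a x => ∑ ι, p x ι * (if ι t = a then 1 else 0) * h a)]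
  rw [Finset.sum_comm]
  refine Finset.sum_congr rfl fun x _ => ?_
  simp_rw [fun t : Fin n => Finset.sum_comm (s := (Finset.univ : Finset ℐ))
    (t := (Finset.univ : Finset (Fin n → ℐ)))
    (f := fun a ι => p x ι * (if ι t = a then 1 else 0) * h a)]
  rw [Finset.sum_comm]
  refine Finset.sum_congr rfl fun ι _ => Finset.sum_congr rfl fun t _ => ?_
  simp

lemma avgPmf_sum {α ℐ : Type} [Fintype α] [Fintype ℐ] {n : ℕ} (hn : 0 < n)
    (p : α → (Fin n → ℐ) → ℝ) (h1 : ∑ x, ∑ ι, p x ι = 1) : ∑ a, avgPmf p a = 1 := by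
  have hn' : (n : ℝ) ≠ 0 := by positivity
  have h := sum_avgPmf_mul hn p (fun _ => 1)
  simp only [mul_one, Finset.sum_const, Finset.card_univ, Fintype.card_fin, nsmul_eq_mul,
    ← Finset.sum_mul, h1] at h
  exact mul_left_cancel₀ hn' (by linarith)

/-! ### The converse for a single channel -/

section Joint

variable {α β ℐ 𝒪 : Type} [Fintype β] [Fintype ℐ] [Fintype 𝒪] {n : ℕ}

/-- The joint pmf of `(X^n, Y^n)` when the channel `k` is used. -/
def jointXY (k : ℐ → 𝒪 → ℝ) (pXI : α → (Fin n → ℐ) → ℝ) (dec : (Fin n → 𝒪) → β → ℝ)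
    (x : α) (y : β) : ℝ :=
  ∑ ι, ∑ o, pXI x ι * (∏ t, k (ι t) (o t)) * dec o y

lemma joint_nonneg
    (k : ℐ → 𝒪 → ℝ) (hk : ∀ ι, (∀ o, 0 ≤ k ι o) ∧ ∑ o, k ι o = 1)
    (pXI : α → (Fin n → ℐ) → ℝ) (hp0 : ∀ x ι, 0 ≤ pXI x ι)
    (dec : (Fin n → 𝒪) → β → ℝ)
    (hdec : ∀ o, (∀ y, 0 ≤ dec o y) ∧ ∑ y, dec o y = 1)
    (x : α) (ι : Fin n → ℐ) (o : Fin n → 𝒪) (y : β) :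
    0 ≤ pXI x ι * (∏ t, k (ι t) (o t)) * dec o y :=
  mul_nonneg (mul_nonneg (hp0 x ι) (Finset.prod_nonneg fun _ _ => (hk _).1 _)) ((hdec o).1 y)

lemma jointXY_nonneg
    (k : ℐ → 𝒪 → ℝ) (hk : ∀ ι, (∀ o, 0 ≤ k ι o) ∧ ∑ o, k ι o = 1)
    (pXI : α → (Fin n → ℐ) → ℝ) (hp0 : ∀ x ι, 0 ≤ pXI x ι)
    (dec : (Fin n → 𝒪) → β → ℝ)
    (hdec : ∀ o, (∀ y, 0 ≤ dec o y) ∧ ∑ y, dec o y = 1)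
    (x : α) (y : β) : 0 ≤ jointXY k pXI dec x y :=
  Finset.sum_nonneg fun ι _ => Finset.sum_nonneg fun o _ =>
    joint_nonneg k hk pXI hp0 dec hdec x ι o y

lemma jointXY_sum_right
    (k : ℐ → 𝒪 → ℝ) (hk : ∀ ι, (∀ o, 0 ≤ k ι o) ∧ ∑ o, k ι o = 1)
    (pXI : α → (Fin n → ℐ) → ℝ) (dec : (Fin n → 𝒪) → β → ℝ)
    (hdec : ∀ o, (∀ y, 0 ≤ dec o y) ∧ ∑ y, dec o y = 1)
    (x : α) : ∑ y, jointXY k pXI dec x y = ∑ ι, pXI x ι := by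
  unfold jointXY
  rw [Finset.sum_comm]
  refine Finset.sum_congr rfl fun ι _ => ?_
  rw [Finset.sum_comm]
  simp only [← Finset.mul_sum, (hdec _).2, mul_one]
  rw [sum_prod_eq_one (fun t => k (ι t)) (fun t => (hk _).2), mul_one]

/-- The pointwise form of `log w ≤ w - 1`, multiplied by the joint pmf of `(X^n, I^n, O^n, Y^n)`.
Here `Q` need only charge the letters that `I^n` can take. -/
lemma joint_log_le [Fintype α]
    (k : ℐ → 𝒪 → ℝ) (hk : ∀ ι, (∀ o, 0 ≤ k ι o) ∧ ∑ o, k ι o = 1)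
    (pXI : α → (Fin n → ℐ) → ℝ) (hp0 : ∀ x ι, 0 ≤ pXI x ι)
    (dec : (Fin n → 𝒪) → β → ℝ)
    (hdec : ∀ o, (∀ y, 0 ≤ dec o y) ∧ ∑ y, dec o y = 1)
    (Q : ℐ → ℝ) (hQ : ∀ a, 0 ≤ Q a)
    (hQpos : ∀ x ι, 0 < pXI x ι → ∀ t, 0 < Q (ι t))
    (x : α) (ι : Fin n → ℐ) (o : Fin n → 𝒪) (y : β) :
    (pXI x ι * (∏ t, k (ι t) (o t)) * dec o y) *
      Real.log (jointXY k pXI dec x y /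
        ((∑ y', jointXY k pXI dec x y') * (∑ x', jointXY k pXI dec x' y))) ≤
    (pXI x ι * (∏ t, k (ι t) (o t)) * dec o y) *
        (∑ t, Real.log (k (ι t) (o t) / ∑ a, Q a * k a (o t)))
      + (pXI x ι * (∏ t, ∑ a, Q a * k a (o t)) * dec o y) * (jointXY k pXI dec x y /
        ((∑ y', jointXY k pXI dec x y') * (∑ x', jointXY k pXI dec x' y)))
      - pXI x ι * (∏ t, k (ι t) (o t)) * dec o y := by
  have hJ := joint_nonneg k hk pXI hp0 dec hdec x ι o y
  have hP := jointXY_nonneg k hk pXI hp0 dec hdec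
  have hr0 : ∀ b, 0 ≤ ∑ a, Q a * k a b := fun b =>
    Finset.sum_nonneg fun a _ => mul_nonneg (hQ a) ((hk a).1 b)
  rcases hJ.eq_or_lt with h | h
  · rw [← h]
    simp only [zero_mul, zero_add, sub_zero]
    refine mul_nonneg (mul_nonneg (mul_nonneg (hp0 x ι) (Finset.prod_nonneg fun t _ => hr0 _))
      ((hdec o).1 y)) (div_nonneg (hP x y) (mul_nonneg ?_ ?_))
    · exact Finset.sum_nonneg fun y _ => hP x y
    · exact Finset.sum_nonneg fun x _ => hP x y
  · have hd : 0 < dec o y := lt_of_le_of_ne ((hdec o).1 y) (by rintro h'; simp [← h'] at h)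
    have hx : 0 < pXI x ι := lt_of_le_of_ne (hp0 x ι) (by rintro h'; simp [← h'] at h)
    have hprod : ∏ t, k (ι t) (o t) ≠ 0 := by rintro h'; simp [h'] at h
    have hkt : ∀ t, 0 < k (ι t) (o t) := fun t =>
      lt_of_le_of_ne ((hk _).1 _) (Ne.symm (Finset.prod_ne_zero_iff.1 hprod t (Finset.mem_univ t)))
    have hrt : ∀ t, 0 < ∑ a, Q a * k a (o t) := fun t =>
      (mul_pos (hQpos x ι hx t) (hkt t)).trans_le
        (Finset.single_le_sum (f := fun a => Q a * k a (o t))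
          (fun a _ => mul_nonneg (hQ a) ((hk a).1 _)) (Finset.mem_univ _))
    have hPxy : 0 < jointXY k pXI dec x y := by
      refine Finset.sum_pos' (fun ι _ => Finset.sum_nonneg fun o _ =>
        joint_nonneg k hk pXI hp0 dec hdec x ι o y) ⟨ι, Finset.mem_univ _, ?_⟩
      exact Finset.sum_pos' (fun o _ =>
        joint_nonneg k hk pXI hp0 dec hdec x ι o y) ⟨o, Finset.mem_univ _, h⟩
    have hPx : 0 < ∑ y', jointXY k pXI dec x y' :=
      Finset.sum_pos' (fun y _ => hP x y) ⟨y, Finset.mem_univ _, hPxy⟩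
    have hPy : 0 < ∑ x', jointXY k pXI dec x' y :=
      Finset.sum_pos' (fun x _ => hP x y) ⟨x, Finset.mem_univ _, hPxy⟩
    have hz := div_pos hPxy (mul_pos hPx hPy)
    set z := jointXY k pXI dec x y /
        ((∑ y', jointXY k pXI dec x y') * (∑ x', jointXY k pXI dec x' y)) with hzdef
    have hK : 0 < ∏ t, k (ι t) (o t) := Finset.prod_pos fun t _ => hkt t
    have hR : 0 < ∏ t, ∑ a, Q a * k a (o t) := Finset.prod_pos fun t _ => hrt t
    rw [← Real.log_prod (fun t _ => (div_pos (hkt t) (hrt t)).ne'), Finset.prod_div_distrib]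
    set K := ∏ t, k (ι t) (o t) with hKdef
    set R := ∏ t, ∑ a, Q a * k a (o t) with hRdef
    have hlog := Real.log_le_sub_one_of_pos (mul_pos hz (div_pos hR hK))
    rw [Real.log_mul hz.ne' (div_pos hR hK).ne'] at hlog
    have e : Real.log (R / K) = - Real.log (K / R) := by
      rw [← Real.log_inv, inv_div]
    rw [e] at hlog
    have h3 : Real.log z ≤ Real.log (K / R) + z * (R / K) - 1 := by linarith
    refine (mul_le_mul_of_nonneg_left h3 h.le).trans (le_of_eq ?_)
    field_simp

/-- The converse for one channel: `I(X^n;Y^n) ≤ n · I(Q,k)` with `Q` the averaged input pmf. -/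
lemma miBits_le_avgPmf [Fintype α]
    (k : ℐ → 𝒪 → ℝ) (hk : ∀ ι, (∀ o, 0 ≤ k ι o) ∧ ∑ o, k ι o = 1)
    (pXI : α → (Fin n → ℐ) → ℝ) (hp0 : ∀ x ι, 0 ≤ pXI x ι)
    (dec : (Fin n → 𝒪) → β → ℝ)
    (hdec : ∀ o, (∀ y, 0 ≤ dec o y) ∧ ∑ y, dec o y = 1)
    (hn : 0 < n) (hp1 : ∑ x, ∑ ι, pXI x ι = 1) :
    miBits (jointXY k pXI dec) ≤ (n : ℝ) * miBits (fun a b => avgPmf pXI a * k a b) := by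
  rw [miBits_channel k hk, miBits_eq, ← mul_div_assoc]
  refine div_le_div_of_nonneg_right ?_ (Real.log_nonneg (by norm_num))
  have hP := jointXY_nonneg k hk pXI hp0 dec hdec
  have hQ := avgPmf_nonneg pXI hp0
  set Q := avgPmf pXI with hQdef
  set z : α → β → ℝ := fun x y => jointXY k pXI dec x y /
        ((∑ y', jointXY k pXI dec x y') * (∑ x', jointXY k pXI dec x' y)) with hz
  have hr0 : ∀ b, 0 ≤ ∑ a, Q a * k a b := fun b =>
    Finset.sum_nonneg fun a _ => mul_nonneg (hQ a) ((hk a).1 b)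
  have hr1 : ∑ b, ∑ a, Q a * k a b = 1 := by
    rw [Finset.sum_comm]
    simp only [← Finset.mul_sum, (hk _).2, mul_one]
    exact avgPmf_sum hn pXI hp1
  have hP1 : ∑ x, ∑ y, jointXY k pXI dec x y = 1 := by
    simp only [jointXY_sum_right k hk pXI dec hdec, hp1]
  have step : ∑ x, ∑ y, jointXY k pXI dec x y * Real.log (z x y) ≤
      ∑ x, ∑ y, ∑ ι, ∑ o, ((pXI x ι * (∏ t, k (ι t) (o t)) * dec o y) *
        (∑ t, Real.log (k (ι t) (o t) / ∑ a, Q a * k a (o t)))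
      + (pXI x ι * (∏ t, ∑ a, Q a * k a (o t)) * dec o y) * z x y
      - pXI x ι * (∏ t, k (ι t) (o t)) * dec o y) := by
    refine Finset.sum_le_sum fun x _ => Finset.sum_le_sum fun y _ => ?_
    conv_lhs => rw [jointXY, Finset.sum_mul]
    refine Finset.sum_le_sum fun ι _ => ?_
    rw [Finset.sum_mul]
    refine Finset.sum_le_sum fun o _ => ?_
    exact joint_log_le k hk pXI hp0 dec hdec Q hQ (fun x ι h t => avgPmf_pos pXI hp0 h t) x ι o y
  refine step.trans ?_
  simp only [Finset.sum_sub_distrib, Finset.sum_add_distrib]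
  have h3 : ∑ x, ∑ y, ∑ ι, ∑ o, pXI x ι * (∏ t, k (ι t) (o t)) * dec o y = 1 := hP1
  have h1 : ∑ x, ∑ y, ∑ ι, ∑ o, (pXI x ι * (∏ t, k (ι t) (o t)) * dec o y) *
        (∑ t, Real.log (k (ι t) (o t) / ∑ a, Q a * k a (o t))) =
      (n : ℝ) * ∑ a, Q a * ∑ b, k a b * Real.log (k a b / ∑ a', Q a' * k a' b) := by
    rw [hQdef, sum_avgPmf_mul hn, ← hQdef]
    refine Finset.sum_congr rfl fun x _ => ?_
    rw [Finset.sum_comm]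
    refine Finset.sum_congr rfl fun ι _ => ?_
    rw [Finset.sum_comm]
    simp only [← Finset.sum_mul, ← Finset.mul_sum, (hdec _).2, mul_one]
    simp only [mul_assoc, ← Finset.mul_sum]
    congr 1
    simp only [Finset.mul_sum]
    rw [Finset.sum_comm]
    refine Finset.sum_congr rfl fun t _ => ?_
    exact sum_prod_mul_coord (fun t => k (ι t)) (fun t => (hk _).2) t
      (fun b => Real.log (k (ι t) b / ∑ a, Q a * k a b))
  have h2 : ∑ x, ∑ y, ∑ ι, ∑ o, (pXI x ι * (∏ t, ∑ a, Q a * k a (o t)) * dec o y) * z x y ≤ 1 := by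
    -- `q` is the law of the decoder output when the channel output is i.i.d. with pmf `r`.
    set q : β → ℝ := fun y => ∑ o : Fin n → 𝒪, (∏ t, ∑ a, Q a * k a (o t)) * dec o y with hq
    have hq0 : ∀ y, 0 ≤ q y := fun y => Finset.sum_nonneg fun o _ =>
      mul_nonneg (Finset.prod_nonneg fun t _ => hr0 _) ((hdec o).1 y)
    have hq1 : ∑ y, q y = 1 := by
      rw [hq, Finset.sum_comm]
      simp only [← Finset.mul_sum, (hdec _).2, mul_one]
      exact sum_prod_eq_one (fun _ : Fin n => fun b => ∑ a, Q a * k a b) (fun _ => hr1)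
    have e : ∀ x y, ∑ ι, ∑ o, (pXI x ι * (∏ t, ∑ a, Q a * k a (o t)) * dec o y) * z x y =
        (∑ y', jointXY k pXI dec x y') * q y * z x y := by
      intro x y
      rw [jointXY_sum_right k hk pXI dec hdec, hq]
      simp only [← Finset.sum_mul]
      congr 1
      simp only [mul_assoc, ← Finset.mul_sum, ← Finset.sum_mul]
    simp only [e]
    rw [← hq1, Finset.sum_comm]
    refine Finset.sum_le_sum fun y _ => ?_
    have hPy0 : 0 ≤ ∑ x', jointXY k pXI dec x' y := Finset.sum_nonneg fun x _ => hP x y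
    have hb : ∀ x, (∑ y', jointXY k pXI dec x y') * q y * z x y ≤
        q y * (jointXY k pXI dec x y / ∑ x', jointXY k pXI dec x' y) := by
      intro x
      by_cases hx : ∑ y', jointXY k pXI dec x y' = 0
      · rw [hx]
        simpa using mul_nonneg (hq0 y) (div_nonneg (hP x y) hPy0)
      · refine le_of_eq ?_
        simp only [hz]
        rw [mul_comm (∑ y', _) (q y), mul_assoc, ← mul_div_assoc, mul_div_mul_left _ _ hx]
    refine (Finset.sum_le_sum fun x _ => hb x).trans ?_
    rw [← Finset.mul_sum, ← Finset.sum_div]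
    exact mul_le_of_le_one_right (hq0 y) (div_self_le_one _)
  rw [h1, h3]
  linarith

end Joint

/-! ### The compound converse -/

/-- For a compound DMC `𝒜`, a (possibly random) encoder producing `I^n`
from `X^n` (given by the joint pmf `pXI`, independent of `k ∈ 𝒜`), `n` memoryless uses of
`k ∈ 𝒜`, and a (possibly random) decoder `dec` producing `Y^n`,
`inf_{k∈𝒜} I(X^n;Y^n) ≤ n · sup_{Q∈𝒫(ℐ)} inf_{k∈𝒜} I(Q,k)`. -/
theorem stmt12 {α β ℐ 𝒪 : Type} [Fintype α] [Fintype β] [Fintype ℐ] [Nonempty ℐ] [Fintype 𝒪]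
    (𝒜 : Set (ℐ → 𝒪 → ℝ))
    (h𝒜 : ∀ k ∈ 𝒜, ∀ ι, (∀ o, 0 ≤ k ι o) ∧ ∑ o, k ι o = 1)
    (n : ℕ) (hn : 0 < n)
    (pXI : α → (Fin n → ℐ) → ℝ)
    (hpXI0 : ∀ x ι, 0 ≤ pXI x ι) (hpXI1 : ∑ x, ∑ ι, pXI x ι = 1)
    (dec : (Fin n → 𝒪) → β → ℝ)
    (hdec : ∀ o, (∀ y, 0 ≤ dec o y) ∧ ∑ y, dec o y = 1) :
    sInf ((fun k => miBits (fun x y =>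
        ∑ ι, ∑ o, pXI x ι * (∏ t, k (ι t) (o t)) * dec o y)) '' 𝒜)
      ≤ (n : ℝ) * sSup {r : ℝ | ∃ Q : ℐ → ℝ, (∀ a, 0 ≤ Q a) ∧ (∑ a, Q a = 1) ∧
          r = sInf ((fun k => miBits (fun a b => Q a * k a b)) '' 𝒜)} := by
  rcases 𝒜.eq_empty_or_nonempty with rfl | ⟨k₀, hk₀⟩
  · -- Both infima take the junk value `sInf ∅ = 0`.
    have h : {r : ℝ | ∃ Q : ℐ → ℝ, (∀ a, 0 ≤ Q a) ∧ (∑ a, Q a = 1) ∧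
        r = sInf ((fun k : ℐ → 𝒪 → ℝ => miBits (fun a b => Q a * k a b)) '' ∅)} ⊆ {0} := by
      rintro r ⟨Q, -, -, rfl⟩
      simp
    simp only [Set.image_empty, Real.sInf_empty] at h ⊢
    exact mul_nonneg (Nat.cast_nonneg n) (Real.sSup_nonneg fun r hr => (h hr).ge)
  have hlowQ : ∀ Q : ℐ → ℝ, (∀ a, 0 ≤ Q a) → ∑ a, Q a = 1 →
      BddBelow ((fun k => miBits (fun a b => Q a * k a b)) '' 𝒜) := by
    rintro Q hQ0 hQ1
    refine ⟨0, ?_⟩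
    rintro _ ⟨k, hk, rfl⟩
    refine miBits_nonneg _ (fun a b => mul_nonneg (hQ0 a) ((h𝒜 k hk a).1 b)) ?_
    simp only [← Finset.mul_sum, (h𝒜 k hk _).2, mul_one, hQ1]
  have hlow : BddBelow ((fun k => miBits (jointXY k pXI dec)) '' 𝒜) := by
    refine ⟨0, ?_⟩
    rintro _ ⟨k, hk, rfl⟩
    refine miBits_nonneg _ (jointXY_nonneg k (h𝒜 k hk) pXI hpXI0 dec hdec) ?_
    simp only [jointXY_sum_right k (h𝒜 k hk) pXI dec hdec, hpXI1]
  have hup : BddAbove {r : ℝ | ∃ Q : ℐ → ℝ, (∀ a, 0 ≤ Q a) ∧ (∑ a, Q a = 1) ∧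
      r = sInf ((fun k => miBits (fun a b => Q a * k a b)) '' 𝒜)} := by
    refine ⟨(Fintype.card ℐ : ℝ) / Real.log 2, ?_⟩
    rintro _ ⟨Q, hQ0, hQ1, rfl⟩
    exact (csInf_le (hlowQ Q hQ0 hQ1) ⟨k₀, hk₀, rfl⟩).trans
      (miBits_channel_le k₀ (h𝒜 k₀ hk₀) Q hQ0)
  have hn' : (0 : ℝ) < n := Nat.cast_pos.2 hn
  have hsup := le_csSup hup ⟨avgPmf pXI, avgPmf_nonneg pXI hpXI0, avgPmf_sum hn pXI hpXI1, rfl⟩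
  refine le_trans ?_ (mul_le_mul_of_nonneg_left hsup hn'.le)
  rw [← div_le_iff₀' hn']
  refine le_csInf ⟨_, k₀, hk₀, rfl⟩ ?_
  rintro _ ⟨k, hk, rfl⟩
  rw [div_le_iff₀' hn']
  exact (csInf_le hlow ⟨k, hk, rfl⟩).trans
    (miBits_le_avgPmf k (h𝒜 k hk) pXI hpXI0 dec hdec hn hpXI1)

end
end

section
/- Let 𝒳, 𝒴, ℐ, 𝒪 be finite sets, X a random variable on 𝒳 with pmf p_X, d : 𝒳 × 𝒴 → [0,∞) a distortion function with additive extension d^n, D ≥ 0, and 𝒜 a set of stochastic matrices (DMCs) k from ℐ to 𝒪. Suppose there exist block-length-n random encoder–decoder pairs (e^n : 𝒳^n → ℐ^n, f^n : 𝒪^n → 𝒴^n), independent of k ∈ 𝒜, and reals ω_n → 0 such that for every n and every k ∈ 𝒜, when X^n (i.i.d. p_X) is passed through e^n, n memoryless uses of k, and f^n, the output Y^n satisfies E[ d^n(X^n, Y^n)/n ] ≤ D + ω_n. Then sup_{Q ∈ 𝒫(ℐ)} inf_{k ∈ 𝒜} I(Q, k) ≥ R^I_X(D). -/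
/-!
Fix a block length `n ≥ 1` and a random code `θ = (e, f)`. Let `Q` be the law of the channel input
`e(X^n)_T` at a uniformly random time `T`; it does not depend on the channel. For `k ∈ 𝒜`, let `J`
be the joint law of `(X_T, Y_T)`. Its first marginal is `p_X` and its expected distortion is
`E[d^n(X^n, Y^n)] / n`.

The heart of the proof is the single-letter bound `I(J) ≤ I(Q, k)` (`mi_joint_le`), obtained in one
stroke from Gibbs' inequality. Let `q(x|y)` be the posterior of `J`, `r` the output law of `(Q, k)`,
and `P(θ, x, o) = ρ(θ) ∏ p_X(x_t) ∏ k(o_t | e(x)_t)` the law of the whole experiment. Then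
`G(θ, x, o) = ρ(θ) ∏ q(x_t | f(o)_t) r(o_t)` has total mass at most one, and
`n (I(J) - I(Q, k)) = E_P log (G / P) ≤ 0`.

With `S` the left-hand side of the claim, choose for every block length a channel `k_n ∈ 𝒜` with
`I(Q_n, k_n) < S + 1/n`. The joint laws `J_n` lie in a compact box, and mutual information is
continuous on nonnegative arrays (`miBits_eq_miEnt`). A limit point `J` therefore has marginal `p_X`,
distortion at most `D`, and mutual information at most `S`; disintegrating `J` gives the conditional
pmf that witnesses the inequality.
-/

open Finset Filter

noncomputable section

variable {𝒳 𝒴 ℐ 𝒪 : Type} [Fintype 𝒳] [DecidableEq 𝒳] [Fintype 𝒴]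
  [Fintype ℐ] [Fintype 𝒪] [DecidableEq 𝒪]

/-- Expected (unnormalized) end-to-end distortion `E[d^n(X^n, Y^n)]` when the i.i.d. `pX`
source is passed through the random code `ρ` and `n` memoryless uses of the DMC `k`. -/
def expDist (pX : 𝒳 → ℝ) (d : 𝒳 → 𝒴 → ℝ) (n : ℕ)
    (ρ : RandCode (Fin n → 𝒳) (Fin n → ℐ) (Fin n → 𝒪) (Fin n → 𝒴))
    (k : ℐ → 𝒪 → ℝ) : ℝ :=
  ∑ ef, ρ.p ef * ∑ x, iidP pX n x *
    ∑ o, (∏ t, k (ef.1 x t) (o t)) * dPow d n x (ef.2 o)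

/-! ### Mutual information on nonnegative arrays -/

/-- Mutual information written with entropies, `H(A) + H(B) - H(A, B)`, in bits. This expression is
continuous in `p` on the whole space of arrays. -/
def miEnt {α β : Type} [Fintype α] [Fintype β] (p : α → β → ℝ) : ℝ :=
  (∑ a, Real.negMulLog (∑ b, p a b) + ∑ b, Real.negMulLog (∑ a, p a b)
    - ∑ a, ∑ b, Real.negMulLog (p a b)) / Real.log 2

theorem continuous_miEnt {α β : Type} [Fintype α] [Fintype β] :
    Continuous (miEnt : (α → β → ℝ) → ℝ) := by
  unfold miEnt
  have h := Real.continuous_negMulLog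
  fun_prop

theorem miBits_mul_log {α β : Type} [Fintype α] [Fintype β] (p : α → β → ℝ) :
    miBits p * Real.log 2 =
      ∑ a, ∑ b, p a b * Real.log (p a b / ((∑ b', p a b') * (∑ a', p a' b))) := by
  have h2 : Real.log 2 ≠ 0 := (Real.log_pos one_lt_two).ne'
  unfold miBits
  rw [Finset.sum_mul]
  refine Finset.sum_congr rfl fun a _ => ?_
  rw [Finset.sum_mul]
  refine Finset.sum_congr rfl fun b _ => ?_
  split_ifs with h
  · simp [h]
  · rw [mul_assoc, Real.logb, div_mul_cancel₀ _ h2]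

theorem miBits_eq_miEnt {α β : Type} [Fintype α] [Fintype β] (p : α → β → ℝ)
    (hp : ∀ a b, 0 ≤ p a b) : miBits p = miEnt p := by
  have h2 : Real.log 2 ≠ 0 := (Real.log_pos one_lt_two).ne'
  unfold miEnt
  rw [eq_div_iff h2, miBits_mul_log]
  have key : ∀ a b, p a b * Real.log (p a b / ((∑ b', p a b') * (∑ a', p a' b))) =
      -(p a b * Real.log (∑ b', p a b')) - p a b * Real.log (∑ a', p a' b)
        - Real.negMulLog (p a b) := by
    intro a b
    rcases (hp a b).eq_or_lt with h | h
    · simp [← h]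
    · have h1 : 0 < ∑ b', p a b' :=
        h.trans_le (Finset.single_le_sum (fun b' _ => hp a b') (Finset.mem_univ b))
      have h3 : 0 < ∑ a', p a' b :=
        h.trans_le (Finset.single_le_sum (f := fun a' => p a' b)
          (fun a' _ => hp a' b) (Finset.mem_univ a))
      rw [Real.log_div h.ne' (mul_pos h1 h3).ne', Real.log_mul h1.ne' h3.ne', Real.negMulLog]
      ring
  simp only [key, Finset.sum_sub_distrib, Finset.sum_neg_distrib]
  rw [Finset.sum_comm (f := fun a b => p a b * Real.log (∑ a', p a' b))]
  simp only [← Finset.sum_mul, Real.negMulLog, neg_mul, Finset.sum_neg_distrib]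
  ring

/-- Mutual information is bounded on arrays with entries in `[0, 1]`; this keeps every infimum and
supremum in the statement away from its junk value. -/
theorem miBits_bounded (α β : Type) [Fintype α] [Fintype β] :
    ∃ C : ℝ, ∀ p : α → β → ℝ, (∀ a b, 0 ≤ p a b ∧ p a b ≤ 1) → |miBits p| ≤ C := by
  have hc : IsCompact (Set.Icc (0 : α → β → ℝ) 1) := isCompact_Icc
  obtain ⟨C, hC⟩ := hc.exists_bound_of_continuousOn (continuous_miEnt (α := α) (β := β)).continuousOn
  refine ⟨C, fun p hp => ?_⟩
  rw [miBits_eq_miEnt p fun a b => (hp a b).1]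
  exact hC p ⟨fun a b => (hp a b).1, fun a b => (hp a b).2⟩

/-! ### Finite-sum probability tools -/

/-- Gibbs' inequality: `E_P log (G / P) ≤ 0` for a pmf `P` and a sub-pmf `G`. -/
theorem gibbs {Ω : Type} [Fintype Ω] (P G ψ : Ω → ℝ) (hP : ∀ w, 0 ≤ P w) (hP1 : ∑ w, P w = 1)
    (hG : ∀ w, 0 ≤ G w) (hG1 : ∑ w, G w ≤ 1)
    (hψ : ∀ w, 0 < P w → 0 < G w ∧ ψ w = Real.log (G w) - Real.log (P w)) :
    ∑ w, P w * ψ w ≤ 0 := by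
  have h : ∀ w, P w * ψ w ≤ G w - P w := by
    intro w
    rcases (hP w).eq_or_lt with h | h
    · simpa [← h] using hG w
    · obtain ⟨hg, he⟩ := hψ w h
      rw [he, ← Real.log_div hg.ne' h.ne']
      have := Real.log_le_sub_one_of_pos (div_pos hg h)
      calc P w * Real.log (G w / P w) ≤ P w * (G w / P w - 1) :=
            mul_le_mul_of_nonneg_left this h.le
        _ = G w - P w := by field_simp
  calc ∑ w, P w * ψ w ≤ ∑ w, (G w - P w) := Finset.sum_le_sum fun w _ => h w
    _ ≤ 0 := by rw [Finset.sum_sub_distrib]; linarith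

theorem pi_sum {α : Type} [Fintype α] {n : ℕ} (F : Fin n → α → ℝ) :
    ∑ o : Fin n → α, ∏ s, F s (o s) = ∏ s, ∑ a, F s a := by
  rw [Finset.prod_univ_sum, Fintype.piFinset_univ]

/-- Expectation of a function of one coordinate under a product pmf. -/
theorem pi_marginal {α : Type} [Fintype α] {n : ℕ} (F : Fin n → α → ℝ)
    (hF : ∀ t, ∑ a, F t a = 1) (t : Fin n) (h : α → ℝ) :
    ∑ o : Fin n → α, (∏ s, F s (o s)) * h (o t) = ∑ b, F t b * h b := by
  have h1 := pi_sum (fun s a => F s a * if s = t then h a else 1)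
  simp only [Finset.prod_mul_distrib, Finset.prod_ite_eq', Finset.mem_univ, if_true] at h1
  rw [h1, Finset.prod_eq_single t]
  · simp
  · intro s _ hs
    simp [hs, hF]
  · simp

/-- The law of `a_T`, where `a_1, …, a_n` are random variables on the weighted space `(Ω, P)` and
`T` is uniform on the time indices and independent of them. -/
def emp {Ω α : Type} [Fintype Ω] (P : Ω → ℝ) {n : ℕ} (a : Ω → Fin n → α) (x : α) : ℝ :=
  open Classical in (∑ w, P w * ∑ t, if a w t = x then 1 else 0) / n

theorem sum_emp_mul {Ω α : Type} [Fintype Ω] [Fintype α] (P : Ω → ℝ) {n : ℕ}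
    (a : Ω → Fin n → α) (g : α → ℝ) :
    ∑ x, emp P a x * g x = (∑ w, P w * ∑ t, g (a w t)) / n := by
  classical
  unfold emp
  simp only [div_mul_eq_mul_div, ← Finset.sum_div, Finset.sum_mul, Finset.mul_sum]
  congr 1
  rw [Finset.sum_comm]
  refine Finset.sum_congr rfl fun w _ => ?_
  rw [Finset.sum_comm]
  refine Finset.sum_congr rfl fun t _ => ?_
  simp

theorem emp_nonneg {Ω α : Type} [Fintype Ω] (P : Ω → ℝ) (hP : ∀ w, 0 ≤ P w) {n : ℕ}
    (a : Ω → Fin n → α) (x : α) : 0 ≤ emp P a x := by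
  classical
  unfold emp
  refine div_nonneg (Finset.sum_nonneg fun w _ => mul_nonneg (hP w)
    (Finset.sum_nonneg fun t _ => ?_)) (Nat.cast_nonneg n)
  split_ifs <;> norm_num

theorem emp_pos {Ω α : Type} [Fintype Ω] (P : Ω → ℝ) (hP : ∀ w, 0 ≤ P w) {n : ℕ}
    (a : Ω → Fin n → α) (w : Ω) (hw : 0 < P w) (t : Fin n) : 0 < emp P a (a w t) := by
  classical
  have hn : 0 < n := Fin.pos t
  have h01 : ∀ (w' : Ω) (t' : Fin n), (0 : ℝ) ≤ if a w' t' = a w t then 1 else 0 := by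
    intro w' t'
    split_ifs <;> norm_num
  unfold emp
  refine div_pos (Finset.sum_pos' (fun w' _ => mul_nonneg (hP w')
    (Finset.sum_nonneg fun t' _ => h01 w' t')) ⟨w, Finset.mem_univ w, mul_pos hw ?_⟩)
    (Nat.cast_pos.mpr hn)
  exact Finset.sum_pos' (fun t' _ => h01 w t') ⟨t, Finset.mem_univ t, by simp⟩

theorem sum_emp {Ω α : Type} [Fintype Ω] [Fintype α] (P : Ω → ℝ) (hP1 : ∑ w, P w = 1) {n : ℕ}
    (hn : 0 < n) (a : Ω → Fin n → α) : ∑ x, emp P a x = 1 := by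
  have h := sum_emp_mul P a (fun _ => 1)
  have hn' : (n : ℝ) ≠ 0 := by exact_mod_cast hn.ne'
  simpa [← Finset.sum_mul, hP1, hn'] using h

theorem iidP_nonneg {𝒳 : Type} [Fintype 𝒳] {pX : 𝒳 → ℝ} (hpX : IsDist pX) (n : ℕ) (x : Fin n → 𝒳) :
    0 ≤ iidP pX n x := Finset.prod_nonneg fun t _ => hpX.1 (x t)

theorem sum_iidP {𝒳 : Type} [Fintype 𝒳] {pX : 𝒳 → ℝ} (hpX : IsDist pX) (n : ℕ) : ∑ x, iidP pX n x = 1 := by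
  unfold iidP
  rw [pi_sum fun _ => pX]
  simp [hpX.2]

/-! ### The law of the coding experiment and its single-letter marginals -/

/-- Joint law of the code `θ` and the source block `x`. -/
def srcW (pX : 𝒳 → ℝ) {n : ℕ}
    (ρ : RandCode (Fin n → 𝒳) (Fin n → ℐ) (Fin n → 𝒪) (Fin n → 𝒴))
    (w : (((Fin n → 𝒳) → (Fin n → ℐ)) × ((Fin n → 𝒪) → (Fin n → 𝒴))) × (Fin n → 𝒳)) : ℝ :=
  ρ.p w.1 * iidP pX n w.2

/-- Joint law of the code, the source block and the channel output block. -/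
def allW (pX : 𝒳 → ℝ) {n : ℕ}
    (ρ : RandCode (Fin n → 𝒳) (Fin n → ℐ) (Fin n → 𝒪) (Fin n → 𝒴)) (k : ℐ → 𝒪 → ℝ)
    (w : ((((Fin n → 𝒳) → (Fin n → ℐ)) × ((Fin n → 𝒪) → (Fin n → 𝒴))) × (Fin n → 𝒳))
      × (Fin n → 𝒪)) : ℝ :=
  srcW pX ρ w.1 * ∏ t, k (w.1.1.1 w.1.2 t) (w.2 t)

/-- Law of the channel input at a uniformly random time. It does not involve the channel. -/
def inLaw (pX : 𝒳 → ℝ) {n : ℕ}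
    (ρ : RandCode (Fin n → 𝒳) (Fin n → ℐ) (Fin n → 𝒪) (Fin n → 𝒴)) : ℐ → ℝ :=
  emp (srcW pX ρ) (fun w t => w.1.1 w.2 t)

/-- Joint law of source letter and reproduction letter at a uniformly random time. -/
def pairLaw (pX : 𝒳 → ℝ) {n : ℕ}
    (ρ : RandCode (Fin n → 𝒳) (Fin n → ℐ) (Fin n → 𝒪) (Fin n → 𝒴)) (k : ℐ → 𝒪 → ℝ)
    (x : 𝒳) (y : 𝒴) : ℝ :=
  emp (allW pX ρ k) (fun w t => (w.1.2 t, w.1.1.2 w.2 t)) (x, y)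

theorem srcW_nonneg {pX : 𝒳 → ℝ} (hpX : IsDist pX) {n : ℕ}
    (ρ : RandCode (Fin n → 𝒳) (Fin n → ℐ) (Fin n → 𝒪) (Fin n → 𝒴)) (w) :
    0 ≤ srcW pX ρ w :=
  mul_nonneg (ρ.isDist.1 _) (iidP_nonneg hpX n _)

/-- The code is independent of the source, so it drops out of expectations of the source block. -/
theorem sum_srcW_mul (pX : 𝒳 → ℝ) {n : ℕ}
    (ρ : RandCode (Fin n → 𝒳) (Fin n → ℐ) (Fin n → 𝒪) (Fin n → 𝒴))
    (g : (Fin n → 𝒳) → ℝ) : ∑ w, srcW pX ρ w * g w.2 = ∑ x, iidP pX n x * g x := by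
  rw [Fintype.sum_prod_type]
  simp only [srcW, mul_assoc, ← Finset.mul_sum]
  rw [← Finset.sum_mul, ρ.isDist.2, one_mul]

theorem sum_srcW {pX : 𝒳 → ℝ} (hpX : IsDist pX) {n : ℕ}
    (ρ : RandCode (Fin n → 𝒳) (Fin n → ℐ) (Fin n → 𝒪) (Fin n → 𝒴)) :
    ∑ w, srcW pX ρ w = 1 := by
  have h := sum_srcW_mul pX ρ (fun _ => 1)
  simpa [sum_iidP hpX] using h

theorem allW_nonneg {pX : 𝒳 → ℝ} (hpX : IsDist pX) {n : ℕ}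
    (ρ : RandCode (Fin n → 𝒳) (Fin n → ℐ) (Fin n → 𝒪) (Fin n → 𝒴))
    {k : ℐ → 𝒪 → ℝ} (hk : ∀ ι, (∀ o, 0 ≤ k ι o) ∧ ∑ o, k ι o = 1) (w) :
    0 ≤ allW pX ρ k w :=
  mul_nonneg (srcW_nonneg hpX ρ _) (Finset.prod_nonneg fun _ _ => (hk _).1 _)

theorem sum_allW_mul (pX : 𝒳 → ℝ) {n : ℕ}
    (ρ : RandCode (Fin n → 𝒳) (Fin n → ℐ) (Fin n → 𝒪) (Fin n → 𝒴))
    (k : ℐ → 𝒪 → ℝ)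
    (g : ((((Fin n → 𝒳) → (Fin n → ℐ)) × ((Fin n → 𝒪) → (Fin n → 𝒴))) × (Fin n → 𝒳))
      × (Fin n → 𝒪) → ℝ) :
    ∑ w, allW pX ρ k w * g w =
      ∑ v, srcW pX ρ v * ∑ o, (∏ t, k (v.1.1 v.2 t) (o t)) * g (v, o) := by
  rw [Fintype.sum_prod_type]
  simp only [allW, mul_assoc, ← Finset.mul_sum]

theorem sum_prod_chan {ℐ 𝒪 : Type} [Fintype 𝒪] {n : ℕ}
    {k : ℐ → 𝒪 → ℝ} (hk : ∀ ι, (∀ o, 0 ≤ k ι o) ∧ ∑ o, k ι o = 1)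
    (i : Fin n → ℐ) : ∑ o : Fin n → 𝒪, ∏ t, k (i t) (o t) = 1 := by
  rw [pi_sum fun t => k (i t)]
  simp [hk]

theorem sum_allW {pX : 𝒳 → ℝ} (hpX : IsDist pX) {n : ℕ}
    (ρ : RandCode (Fin n → 𝒳) (Fin n → ℐ) (Fin n → 𝒪) (Fin n → 𝒴))
    {k : ℐ → 𝒪 → ℝ} (hk : ∀ ι, (∀ o, 0 ≤ k ι o) ∧ ∑ o, k ι o = 1) :
    ∑ w, allW pX ρ k w = 1 := by
  have h := sum_allW_mul pX ρ k (fun _ => 1)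
  simpa [sum_prod_chan hk, sum_srcW hpX] using h

theorem inLaw_nonneg {pX : 𝒳 → ℝ} (hpX : IsDist pX) {n : ℕ}
    (ρ : RandCode (Fin n → 𝒳) (Fin n → ℐ) (Fin n → 𝒪) (Fin n → 𝒴)) (i : ℐ) :
    0 ≤ inLaw pX ρ i :=
  emp_nonneg _ (srcW_nonneg hpX ρ) _ _

theorem sum_inLaw {pX : 𝒳 → ℝ} (hpX : IsDist pX) {n : ℕ} (hn : 0 < n)
    (ρ : RandCode (Fin n → 𝒳) (Fin n → ℐ) (Fin n → 𝒪) (Fin n → 𝒴)) :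
    ∑ i, inLaw pX ρ i = 1 :=
  sum_emp _ (sum_srcW hpX ρ) hn _

/-- Since the channel is memoryless, input and output at a random time have joint law `(Q, k)`. -/
theorem sum_inLaw_mul (pX : 𝒳 → ℝ) {n : ℕ}
    (ρ : RandCode (Fin n → 𝒳) (Fin n → ℐ) (Fin n → 𝒪) (Fin n → 𝒴))
    {k : ℐ → 𝒪 → ℝ} (hk : ∀ ι, (∀ o, 0 ≤ k ι o) ∧ ∑ o, k ι o = 1)
    (g : ℐ → 𝒪 → ℝ) :
    ∑ i, ∑ o, inLaw pX ρ i * k i o * g i o =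
      (∑ w, allW pX ρ k w * ∑ t, g (w.1.1.1 w.1.2 t) (w.2 t)) / n := by
  simp only [mul_assoc, ← Finset.mul_sum]
  unfold inLaw
  rw [sum_emp_mul, sum_allW_mul]
  congr 1
  refine Finset.sum_congr rfl fun v _ => ?_
  congr 1
  simp only [Finset.mul_sum]
  refine Eq.trans (Finset.sum_congr rfl fun t _ => ?_) Finset.sum_comm
  have h1 := pi_marginal (fun s => k (v.1.1 v.2 s)) (fun s => (hk _).2) t (g (v.1.1 v.2 t))
  exact h1.symm

theorem pairLaw_nonneg {pX : 𝒳 → ℝ} (hpX : IsDist pX) {n : ℕ}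
    (ρ : RandCode (Fin n → 𝒳) (Fin n → ℐ) (Fin n → 𝒪) (Fin n → 𝒴))
    {k : ℐ → 𝒪 → ℝ} (hk : ∀ ι, (∀ o, 0 ≤ k ι o) ∧ ∑ o, k ι o = 1) (x : 𝒳) (y : 𝒴) :
    0 ≤ pairLaw pX ρ k x y :=
  emp_nonneg _ (allW_nonneg hpX ρ hk) _ _

theorem sum_pairLaw_mul (pX : 𝒳 → ℝ) {n : ℕ}
    (ρ : RandCode (Fin n → 𝒳) (Fin n → ℐ) (Fin n → 𝒪) (Fin n → 𝒴))
    (k : ℐ → 𝒪 → ℝ) (g : 𝒳 → 𝒴 → ℝ) :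
    ∑ x, ∑ y, pairLaw pX ρ k x y * g x y =
      (∑ w, allW pX ρ k w * ∑ t, g (w.1.2 t) (w.1.1.2 w.2 t)) / n := by
  have h := sum_emp_mul (allW pX ρ k) (fun w t => (w.1.2 t, w.1.1.2 w.2 t))
    (fun z : 𝒳 × 𝒴 => g z.1 z.2)
  rw [Fintype.sum_prod_type] at h
  exact h

theorem sum_pairLaw {pX : 𝒳 → ℝ} (hpX : IsDist pX) {n : ℕ} (hn : 0 < n)
    (ρ : RandCode (Fin n → 𝒳) (Fin n → ℐ) (Fin n → 𝒪) (Fin n → 𝒴))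
    {k : ℐ → 𝒪 → ℝ} (hk : ∀ ι, (∀ o, 0 ≤ k ι o) ∧ ∑ o, k ι o = 1) (x : 𝒳) :
    ∑ y, pairLaw pX ρ k x y = pX x := by
  have hn' : (n : ℝ) ≠ 0 := by exact_mod_cast hn.ne'
  have h := sum_pairLaw_mul pX ρ k (fun x' _ => if x' = x then 1 else 0)
  have hL : ∑ x', ∑ y, pairLaw pX ρ k x' y * (if x' = x then (1 : ℝ) else 0) =
      ∑ y, pairLaw pX ρ k x y := by
    simp only [← Finset.sum_mul]
    simp
  rw [← hL, h, sum_allW_mul, div_eq_iff hn']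
  have hv : ∀ (i : Fin n → ℐ) (z : ℝ),
      ∑ o : Fin n → 𝒪, (∏ t, k (i t) (o t)) * z = z := fun i z => by
    rw [← Finset.sum_mul, sum_prod_chan hk, one_mul]
  rw [Finset.sum_congr rfl fun v _ => congrArg (srcW pX ρ v * ·)
    (hv (v.1.1 v.2) (∑ t, if v.2 t = x then (1 : ℝ) else 0))]
  rw [sum_srcW_mul pX ρ (fun x' => ∑ t, if x' t = x then (1 : ℝ) else 0)]
  simp only [Finset.mul_sum]
  rw [Finset.sum_comm]
  have ht : ∀ t : Fin n, ∑ x', iidP pX n x' * (if x' t = x then (1 : ℝ) else 0) = pX x := by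
    intro t
    have h1 := pi_marginal (fun _ : Fin n => pX) (fun _ => hpX.2) t
      (fun b => if b = x then (1 : ℝ) else 0)
    simpa [iidP] using h1
  rw [Finset.sum_congr rfl fun t _ => ht t]
  simp [mul_comm]

theorem expDist_eq (pX : 𝒳 → ℝ) (d : 𝒳 → 𝒴 → ℝ) {n : ℕ}
    (ρ : RandCode (Fin n → 𝒳) (Fin n → ℐ) (Fin n → 𝒪) (Fin n → 𝒴))
    (k : ℐ → 𝒪 → ℝ) :
    ∑ x, ∑ y, pairLaw pX ρ k x y * d x y = expDist pX d n ρ k / n := by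
  rw [sum_pairLaw_mul, sum_allW_mul, Fintype.sum_prod_type]
  simp only [expDist, srcW, dPow, mul_assoc, ← Finset.mul_sum]

/-! ### The single-letter bound -/

/-- Mutual information between source and reproduction at a random time is at most that across the
channel. With the sub-pmf `G = ρ ∏ q(x_t | f(o)_t) r(o_t)`, the difference of the two sides is
`E_P log (G / P) / n`, up to the factor `log 2`. -/
theorem mi_joint_le {pX : 𝒳 → ℝ} (hpX : IsDist pX) {n : ℕ} (hn : 0 < n)
    (ρ : RandCode (Fin n → 𝒳) (Fin n → ℐ) (Fin n → 𝒪) (Fin n → 𝒴))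
    {k : ℐ → 𝒪 → ℝ} (hk : ∀ ι, (∀ o, 0 ≤ k ι o) ∧ ∑ o, k ι o = 1) :
    miBits (pairLaw pX ρ k) ≤ miBits (fun i o => inLaw pX ρ i * k i o) := by
  have hnpos : (0 : ℝ) < n := by exact_mod_cast hn
  have h2 : 0 < Real.log 2 := Real.log_pos one_lt_two
  have hJ0 := pairLaw_nonneg hpX ρ hk
  have hQ0 := inLaw_nonneg hpX ρ
  set J := pairLaw pX ρ k with hJ
  set Q := inLaw pX ρ with hQ
  set c : 𝒴 → ℝ := fun y => ∑ x, J x y with hc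
  set r : 𝒪 → ℝ := fun o => ∑ i, Q i * k i o with hr
  have hc0 : ∀ y, 0 ≤ c y := fun y => Finset.sum_nonneg fun x _ => hJ0 x y
  have hr0 : ∀ o, 0 ≤ r o := fun o =>
    Finset.sum_nonneg fun i _ => mul_nonneg (hQ0 i) ((hk i).1 o)
  have hr1 : ∑ o, r o = 1 := by
    simp only [hr]
    rw [Finset.sum_comm]
    simp only [← Finset.mul_sum, (hk _).2, mul_one]
    exact sum_inLaw hpX hn ρ
  set P := allW pX ρ k with hP
  have hP0 : ∀ w, 0 ≤ P w := allW_nonneg hpX ρ hk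
  refine le_of_mul_le_mul_right ?_ h2
  rw [miBits_mul_log, miBits_mul_log]
  simp only [← Finset.mul_sum, (hk _).2, mul_one]
  have e1 := sum_pairLaw_mul pX ρ k (fun x y => Real.log (J x y / (pX x * c y)))
  have e2 := sum_inLaw_mul pX ρ hk (fun i o => Real.log (Q i * k i o / (Q i * r o)))
  simp only [hJ, sum_pairLaw hpX hn ρ hk]
  rw [← hJ, e1]
  refine le_of_le_of_eq ?_ e2.symm
  rw [div_le_div_iff_of_pos_right hnpos, ← sub_nonpos, ← Finset.sum_sub_distrib]
  simp only [← mul_sub]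
  refine gibbs P (fun w => ρ.p w.1.1 * ((∏ t, r (w.2 t)) *
    ∏ t, J (w.1.2 t) (w.1.1.2 w.2 t) / c (w.1.1.2 w.2 t))) _ hP0 (sum_allW hpX ρ hk) ?_ ?_ ?_
  · intro w
    exact mul_nonneg (ρ.isDist.1 _) (mul_nonneg (Finset.prod_nonneg fun t _ => hr0 _)
      (Finset.prod_nonneg fun t _ => div_nonneg (hJ0 _ _) (hc0 _)))
  · -- Sum over the source block first: the posteriors have mass at most one (zero where `c` is zero).
    have hq : ∀ y, ∑ x, J x y / c y ≤ 1 := fun y => by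
      rw [← Finset.sum_div]
      exact div_self_le_one _
    have hin : ∀ θ o, ∑ x : Fin n → 𝒳, ρ.p θ * ((∏ t, r (o t)) *
        ∏ t, J (x t) (θ.2 o t) / c (θ.2 o t)) ≤ ρ.p θ * ∏ t, r (o t) := by
      intro θ o
      rw [← Finset.mul_sum, ← Finset.mul_sum, pi_sum fun t x => J x (θ.2 o t) / c (θ.2 o t)]
      refine mul_le_mul_of_nonneg_left ?_ (ρ.isDist.1 θ)
      refine mul_le_of_le_one_right (Finset.prod_nonneg fun t _ => hr0 _) ?_
      exact Finset.prod_le_one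
        (fun t _ => Finset.sum_nonneg fun x _ => div_nonneg (hJ0 _ _) (hc0 _)) fun t _ => hq _
    rw [Fintype.sum_prod_type, Fintype.sum_prod_type]
    calc _ = ∑ θ, ∑ o, ∑ x : Fin n → 𝒳, ρ.p θ * ((∏ t, r (o t)) *
            ∏ t, J (x t) (θ.2 o t) / c (θ.2 o t)) :=
          Finset.sum_congr rfl fun θ _ => Finset.sum_comm
      _ ≤ ∑ θ, ∑ o : Fin n → 𝒪, ρ.p θ * ∏ t, r (o t) :=
          Finset.sum_le_sum fun θ _ => Finset.sum_le_sum fun o _ => hin θ o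
      _ = 1 := by
          simp only [← Finset.mul_sum]
          rw [pi_sum fun _ => r]
          simp [hr1, ρ.isDist.2]
  · intro w hw
    have hs : 0 < srcW pX ρ w.1 :=
      (srcW_nonneg hpX ρ w.1).lt_of_ne fun h => by simp [hP, allW, ← h] at hw
    have hρ : 0 < ρ.p w.1.1 :=
      (ρ.isDist.1 _).lt_of_ne fun h => by simp [srcW, ← h] at hs
    have hp : ∀ t, 0 < pX (w.1.2 t) := fun t => (hpX.1 _).lt_of_ne fun h => by
      rw [srcW, iidP, Finset.prod_eq_zero (Finset.mem_univ t) h.symm] at hs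
      simp at hs
    have hkp : ∀ t, 0 < k (w.1.1.1 w.1.2 t) (w.2 t) := fun t => ((hk _).1 _).lt_of_ne fun h => by
      rw [hP, allW, Finset.prod_eq_zero (Finset.mem_univ t) h.symm] at hw
      simp at hw
    have hJp : ∀ t, 0 < J (w.1.2 t) (w.1.1.2 w.2 t) := fun t => emp_pos P hP0 _ w hw t
    have hQp : ∀ t, 0 < Q (w.1.1.1 w.1.2 t) := fun t =>
      emp_pos (srcW pX ρ) (srcW_nonneg hpX ρ) (fun v t => v.1.1 v.2 t) w.1 hs t
    have hcp : ∀ t, 0 < c (w.1.1.2 w.2 t) := fun t =>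
      (hJp t).trans_le (Finset.single_le_sum (f := fun x => J x (w.1.1.2 w.2 t))
        (fun x _ => hJ0 x _) (Finset.mem_univ _))
    have hrp : ∀ t, 0 < r (w.2 t) := fun t =>
      (mul_pos (hQp t) (hkp t)).trans_le (Finset.single_le_sum (f := fun i => Q i * k i (w.2 t))
        (fun i _ => mul_nonneg (hQ0 i) ((hk i).1 _)) (Finset.mem_univ _))
    have g1 : 0 < ∏ t, r (w.2 t) := Finset.prod_pos fun t _ => hrp t
    have g2 : 0 < ∏ t, J (w.1.2 t) (w.1.1.2 w.2 t) / c (w.1.1.2 w.2 t) :=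
      Finset.prod_pos fun t _ => div_pos (hJp t) (hcp t)
    have g3 : 0 < ∏ t, pX (w.1.2 t) := Finset.prod_pos fun t _ => hp t
    have g4 : 0 < ∏ t, k (w.1.1.1 w.1.2 t) (w.2 t) := Finset.prod_pos fun t _ => hkp t
    refine ⟨mul_pos hρ (mul_pos g1 g2), ?_⟩
    rw [hP, allW, srcW, iidP, Real.log_mul hρ.ne' (mul_pos g1 g2).ne', Real.log_mul g1.ne' g2.ne',
      Real.log_mul (mul_pos hρ g3).ne' g4.ne', Real.log_mul hρ.ne' g3.ne',
      Real.log_prod fun t _ => (hrp t).ne', Real.log_prod fun t _ => (div_pos (hJp t) (hcp t)).ne',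
      Real.log_prod fun t _ => (hp t).ne', Real.log_prod fun t _ => (hkp t).ne']
    have hterm : ∀ t, Real.log (J (w.1.2 t) (w.1.1.2 w.2 t) / (pX (w.1.2 t) * c (w.1.1.2 w.2 t)))
        - Real.log (Q (w.1.1.1 w.1.2 t) * k (w.1.1.1 w.1.2 t) (w.2 t)
            / (Q (w.1.1.1 w.1.2 t) * r (w.2 t)))
        = Real.log (r (w.2 t)) + Real.log (J (w.1.2 t) (w.1.1.2 w.2 t) / c (w.1.1.2 w.2 t))
          - Real.log (pX (w.1.2 t)) - Real.log (k (w.1.1.1 w.1.2 t) (w.2 t)) := by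
      intro t
      rw [mul_div_mul_left _ _ (hQp t).ne', Real.log_div (hJp t).ne' (mul_pos (hp t) (hcp t)).ne',
        Real.log_mul (hp t).ne' (hcp t).ne', Real.log_div (hkp t).ne' (hrp t).ne',
        Real.log_div (hJp t).ne' (hcp t).ne']
      ring
    rw [← Finset.sum_sub_distrib, Finset.sum_congr rfl fun t _ => hterm t]
    simp only [Finset.sum_sub_distrib, Finset.sum_add_distrib]
    ring

/-- A joint array with first marginal `p_X` disintegrates as `p_X(x) W(y|x)`. -/
theorem exists_disintegration {𝒳 𝒴 : Type} [Fintype 𝒴] [Nonempty 𝒴] (pX : 𝒳 → ℝ)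
    (hpX : ∀ x, 0 ≤ pX x) (J : 𝒳 → 𝒴 → ℝ) (hJ0 : ∀ x y, 0 ≤ J x y)
    (hJ : ∀ x, ∑ y, J x y = pX x) :
    ∃ W : 𝒳 → 𝒴 → ℝ, (∀ x, (∀ y, 0 ≤ W x y) ∧ ∑ y, W x y = 1) ∧
      ∀ x y, pX x * W x y = J x y := by
  classical
  obtain ⟨y0⟩ := ‹Nonempty 𝒴›
  -- Rows with `p_X(x) = 0` may be any pmf; a point mass is used.
  refine ⟨fun x y => if pX x = 0 then (if y = y0 then 1 else 0) else J x y / pX x,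
    fun x => ⟨fun y => ?_, ?_⟩, fun x y => ?_⟩
  · dsimp only
    split_ifs
    · norm_num
    · norm_num
    · exact div_nonneg (hJ0 x y) (hpX x)
  · by_cases h : pX x = 0
    · simp [h]
    · simp [h, ← Finset.sum_div, hJ]
  · by_cases h : pX x = 0
    · have h1 : ∑ y, J x y = 0 := (hJ x).trans h
      rw [Finset.sum_eq_zero_iff_of_nonneg fun y _ => hJ0 x y] at h1
      simp [h, h1 y]
    · simp only [h, if_false]
      field_simp

/-- **Shannon–Lapidoth converse for a compound DMC.** If random codes,
independent of `k ∈ 𝒜`, communicate the i.i.d. `X` source over every DMC `k ∈ 𝒜` with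
expected normalized distortion at most `D + ω_n`, `ω_n → 0`, then
`C^I(𝒜) = sup_Q inf_{k∈𝒜} I(Q,k) ≥ R^I_X(D)`. -/
theorem stmt15 (pX : 𝒳 → ℝ) (hpX : IsDist pX)
    (d : 𝒳 → 𝒴 → ℝ) (hd : ∀ x y, 0 ≤ d x y)
    (D : ℝ) (hD : 0 ≤ D)
    (𝒜 : Set (ℐ → 𝒪 → ℝ)) (h𝒜ne : 𝒜.Nonempty)
    (h𝒜 : ∀ k ∈ 𝒜, ∀ ι, (∀ o, 0 ≤ k ι o) ∧ ∑ o, k ι o = 1)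
    (hcap : ∃ ρ : ∀ n : ℕ, RandCode (Fin n → 𝒳) (Fin n → ℐ) (Fin n → 𝒪) (Fin n → 𝒴),
      ∃ ω : ℕ → ℝ, Tendsto ω atTop (nhds 0) ∧
        ∀ n : ℕ, ∀ k ∈ 𝒜, expDist pX d n (ρ n) k ≤ (n : ℝ) * (D + ω n)) :
    sSup {r : ℝ | ∃ Q : ℐ → ℝ, (∀ a, 0 ≤ Q a) ∧ (∑ a, Q a = 1) ∧
        r = sInf ((fun k => miBits (fun a b => Q a * k a b)) '' 𝒜)}
      ≥ sInf {r : ℝ | ∃ W : 𝒳 → 𝒴 → ℝ, (∀ x, (∀ y, 0 ≤ W x y) ∧ ∑ y, W x y = 1) ∧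
          (∑ x, ∑ y, pX x * W x y * d x y) ≤ D ∧
          r = miBits (fun x y => pX x * W x y)} := by
  obtain ⟨ρ, ω, hω, hdist⟩ := hcap
  obtain ⟨C₁, hC₁⟩ := miBits_bounded ℐ 𝒪
  obtain ⟨C₂, hC₂⟩ := miBits_bounded 𝒳 𝒴
  obtain ⟨k₀, hk₀⟩ := h𝒜ne
  have hk1 : ∀ k ∈ 𝒜, ∀ i o, k i o ≤ 1 := fun k hk i o =>
    (h𝒜 k hk i).2 ▸ Finset.single_le_sum (fun o _ => (h𝒜 k hk i).1 o) (Finset.mem_univ o)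
  have hQk : ∀ Q : ℐ → ℝ, (∀ a, 0 ≤ Q a) → ∑ a, Q a = 1 → ∀ k ∈ 𝒜,
      |miBits (fun a b => Q a * k a b)| ≤ C₁ := by
    intro Q hQ0 hQ1 k hk
    refine hC₁ _ fun a b => ⟨mul_nonneg (hQ0 a) ((h𝒜 k hk a).1 b), ?_⟩
    have hQa : Q a ≤ 1 := hQ1 ▸ Finset.single_le_sum (fun a _ => hQ0 a) (Finset.mem_univ a)
    exact mul_le_one₀ hQa ((h𝒜 k hk a).1 b) (hk1 k hk a b)
  have hbelow : ∀ Q : ℐ → ℝ, (∀ a, 0 ≤ Q a) → ∑ a, Q a = 1 →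
      BddBelow ((fun k => miBits (fun a b => Q a * k a b)) '' 𝒜) := by
    intro Q hQ0 hQ1
    refine ⟨-C₁, ?_⟩
    rintro _ ⟨k, hk, rfl⟩
    exact (abs_le.mp (hQk Q hQ0 hQ1 k hk)).1
  set A := {r : ℝ | ∃ Q : ℐ → ℝ, (∀ a, 0 ≤ Q a) ∧ (∑ a, Q a = 1) ∧
        r = sInf ((fun k => miBits (fun a b => Q a * k a b)) '' 𝒜)} with hA
  have habove : BddAbove A := by
    refine ⟨C₁, ?_⟩
    rintro _ ⟨Q, hQ0, hQ1, rfl⟩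
    exact (csInf_le (hbelow Q hQ0 hQ1) ⟨k₀, hk₀, rfl⟩).trans
      (abs_le.mp (hQk Q hQ0 hQ1 k₀ hk₀)).2
  -- For every block length pick a channel nearly attaining the infimum for the input law `Q_n`.
  have hsel : ∀ n : ℕ, ∃ k ∈ 𝒜,
      miBits (fun i o => inLaw pX (ρ (n + 1)) i * k i o) < sSup A + 1 / ((n : ℝ) + 1) := by
    intro n
    have hmem : sInf ((fun k => miBits (fun a b => inLaw pX (ρ (n + 1)) a * k a b)) '' 𝒜) ∈ A :=
      ⟨_, inLaw_nonneg hpX _, sum_inLaw hpX n.succ_pos _, rfl⟩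
    have hlt := (le_csSup habove hmem).trans_lt
      (lt_add_of_pos_right (sSup A) (Nat.one_div_pos_of_nat (α := ℝ) (n := n)))
    obtain ⟨_, ⟨k, hk, rfl⟩, h⟩ := exists_lt_of_csInf_lt (Set.Nonempty.image _ ⟨k₀, hk₀⟩) hlt
    exact ⟨k, hk, h⟩
  choose κ hκ hκlt using hsel
  set J : ℕ → 𝒳 → 𝒴 → ℝ := fun n => pairLaw pX (ρ (n + 1)) (κ n) with hJdef
  have hJ0 : ∀ n x y, 0 ≤ J n x y := fun n => pairLaw_nonneg hpX _ (h𝒜 _ (hκ n))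
  have hJs : ∀ n x, ∑ y, J n x y = pX x := fun n =>
    sum_pairLaw hpX n.succ_pos _ (h𝒜 _ (hκ n))
  have hpX1 : ∀ x, pX x ≤ 1 := fun x =>
    hpX.2 ▸ Finset.single_le_sum (fun x _ => hpX.1 x) (Finset.mem_univ x)
  have hle1 : ∀ K : 𝒳 → 𝒴 → ℝ, (∀ x y, 0 ≤ K x y) → (∀ x, ∑ y, K x y = pX x) →
      ∀ x y, K x y ≤ 1 := fun K h0 hs x y =>
    ((Finset.single_le_sum (fun y _ => h0 x y) (Finset.mem_univ y)).trans_eq (hs x)).trans (hpX1 x)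
  have hJd : ∀ n, ∑ x, ∑ y, J n x y * d x y ≤ D + ω (n + 1) := by
    intro n
    rw [hJdef, expDist_eq pX d, div_le_iff₀ (by positivity), mul_comm]
    exact hdist (n + 1) _ (hκ n)
  have hJm : ∀ n, miEnt (J n) ≤ sSup A + 1 / ((n : ℝ) + 1) := by
    intro n
    rw [← miBits_eq_miEnt _ (hJ0 n)]
    exact (mi_joint_le hpX n.succ_pos _ (h𝒜 _ (hκ n))).trans (hκlt n).le
  obtain ⟨K, hK, φ, hφ, hlim⟩ := (isCompact_Icc (a := (0 : 𝒳 → 𝒴 → ℝ)) (b := 1)).tendsto_subseq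
    (x := J) fun n => ⟨fun x y => hJ0 n x y, fun x y => hle1 _ (hJ0 n) (hJs n) x y⟩
  have hK0 : ∀ x y, 0 ≤ K x y := fun x y => hK.1 x y
  have hKs : ∀ x, ∑ y, K x y = pX x := by
    intro x
    have hc : Continuous fun L : 𝒳 → 𝒴 → ℝ => ∑ y, L x y := by fun_prop
    refine tendsto_nhds_unique ((hc.tendsto K).comp hlim) ?_
    simp only [Function.comp_def, hJs]
    exact tendsto_const_nhds
  have hKd : ∑ x, ∑ y, K x y * d x y ≤ D := by
    have hc : Continuous fun L : 𝒳 → 𝒴 → ℝ => ∑ x, ∑ y, L x y * d x y := by fun_prop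
    have hω' : Tendsto (fun n => D + ω (φ n + 1)) atTop (nhds (D + 0)) :=
      tendsto_const_nhds.add (hω.comp ((tendsto_add_atTop_nat 1).comp hφ.tendsto_atTop))
    rw [add_zero] at hω'
    exact le_of_tendsto_of_tendsto' ((hc.tendsto K).comp hlim) hω' fun n => hJd (φ n)
  have hKm : miBits K ≤ sSup A := by
    rw [miBits_eq_miEnt K hK0]
    have h1 : Tendsto (fun n => sSup A + 1 / ((φ n : ℝ) + 1)) atTop (nhds (sSup A + 0)) :=
      tendsto_const_nhds.add (tendsto_one_div_add_atTop_nhds_zero_nat.comp hφ.tendsto_atTop)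
    rw [add_zero] at h1
    exact le_of_tendsto_of_tendsto' ((continuous_miEnt.tendsto K).comp hlim) h1 fun n => hJm (φ n)
  -- An empty `𝒴` would make the row sums of `K`, hence `p_X`, vanish.
  have hY : Nonempty 𝒴 := by
    by_contra hne
    rw [not_nonempty_iff] at hne
    have h1 := hpX.2
    simp [← hKs] at h1
  obtain ⟨W, hW, hWK⟩ := exists_disintegration pX hpX.1 K hK0 hKs
  refine csInf_le_of_le ⟨-C₂, ?_⟩ ⟨W, hW, ?_, rfl⟩ ?_
  · rintro _ ⟨V, hV, -, rfl⟩
    refine (abs_le.mp (hC₂ _ fun x y => ⟨mul_nonneg (hpX.1 x) ((hV x).1 y), ?_⟩)).1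
    refine hle1 (fun x y => pX x * V x y) (fun x y => mul_nonneg (hpX.1 x) ((hV x).1 y))
      (fun x => ?_) x y
    rw [← Finset.mul_sum, (hV x).2, mul_one]
  · simpa only [hWK] using hKd
  · simpa only [hWK] using hKm

end
end

section
/- Let 𝒳, 𝒴 be finite sets, X a random variable on 𝒳 with pmf p_X, d : 𝒳 × 𝒴 → [0,∞) with additive extension d^n, and D ≥ 0. Let c = (c^n)_{n≥1} be a system, i.e., a sequence of channels where c^n assigns to each x^n ∈ 𝒳^n a probability distribution on 𝒴^n, such that with input X^n i.i.d. p_X the output Y^n satisfies Pr(d^n(X^n,Y^n)/n > D) ≤ ω_n for some ω_n → 0. Let 𝒳', 𝒴' be finite sets, X' a random variable on 𝒳', d' : 𝒳' × 𝒴' → [0,∞) a distortion function with additive extension, and D' ≥ 0, with R^P_{X'}(D') < R^P_X(D). Then, assuming random codes are permitted, the i.i.d. X' source can be communicated to within distortion D' by layering on the system c: there exist block-length-n random encoder–decoder pairs (E^n : 𝒳'^n → 𝒳^n, F^n : 𝒴^n → 𝒴'^n) such that Pr( d'^n(X'^n, F^n(output of c^n on input E^n(X'^n)))/n > D' ) →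 0 as n → ∞. -/
/-!
The argument is separation: compress `X'` with a source code of some rate `R` in
`(R^P_{X'}(D'), R^P_X(D))`, and send its index through the system `c` by a random codebook drawn
from the i.i.d. `X` source. Everything rests on showing that `c` carries indices at any rate
`R < R^P_X(D)` (`exists_reliable`).

On a codeword distributed as `X^n`, the system produces `y` with `d^n(x, y) ≤ n D` with high
probability. What is needed is that an independent `X^n` is this close to a fixed `y` with
probability at most `exp(-n L)`, where `L` is above the rate. This is obtained by convex duality
(`exists_certificate`): there is a kernel `K` with `∏ K(x_t, y_t) ≥ 1` on all admissible pairs, and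
`Z > 0` with `∑ x, p x K(x, y) / Z x ≤ 1` for every `y` and `E[log Z]` at most minus the rate. The
decoder accepts `x` when `∏ K ≥ 1` and `∑ log Z(x_t) ≤ -n L`; Markov's inequality for
`∏ K / Z` bounds false acceptance (`accept_le`), and the law of large numbers bounds false
rejection.

The certificate comes from the achievability half of the rate-distortion theorem
(`RP_le_of_test`, proved by random covering): since rates below `R^P_X(D)` have no source code, no
test channel has both distortion below `D` and information below the rate. Separating `(D, R)` from
the convex information-distortion region (`exists_slope`) gives a multiplier `s ≥ 0`; then
`K = exp(-s (d - D))`, and `Z x = ∑ y, q y K(x, y)` for `q` satisfying the Kuhn–Tucker conditions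
(`exists_kuhnTucker`). The separating line can also be vertical, when `D` does not exceed the least
attainable distortion. Then the system `c` itself, through a fourth-moment bound
(`iid_degenerate`), forces `min_y d(x, y) = D` on the support of `p`, and the indicator kernel
`K = 1[d ≤ D]` plays the same role.
-/

/-!
Statement 0: Optimality of separation, direct part (Part I, Theorem 1, first half).
If the compound channel 𝒜 can communicate the i.i.d. X source to within distortion D
(probability-of-excess-distortion criterion, uniformly over k ∈ 𝒜, random codes allowed),
then every rate 0 < R < R^P_X(D) is reliably achievable over 𝒜 with random codes.
-/

open Finset Filter
open scoped ENNReal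

noncomputable section

variable {𝒳 𝒴 ℐ 𝒪 : Type} [Fintype 𝒳] [DecidableEq 𝒳] [Fintype 𝒴]
  [Fintype ℐ] [Fintype 𝒪] [DecidableEq 𝒪]

/-- Probability of excess distortion for a random rate-`R` source code `τ` at block length `n`. -/
def srcExcess (pX : 𝒳 → ℝ) (d : 𝒳 → 𝒴 → ℝ) (D R : ℝ) (n : ℕ)
    (τ : RandCode (Fin n → 𝒳) (Fin (nMsg R n)) (Fin (nMsg R n)) (Fin n → 𝒴)) : ℝ :=
  ∑ ef, τ.p ef * ∑ x, iidP pX n x *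
    (if (n : ℝ) * D < dPow d n x (ef.2 (ef.1 x)) then 1 else 0)

/-- The operational rate-distortion function `R^P_X(D)`: infimum (in `ℝ≥0∞`, so `⊤` when no
rate works) of rates `R > 0` for which some random source code codes the i.i.d. `pX` source
to within distortion `D` under the probability-of-excess-distortion criterion. -/
def RP (pX : 𝒳 → ℝ) (d : 𝒳 → 𝒴 → ℝ) (D : ℝ) : ℝ≥0∞ :=
  sInf {r : ℝ≥0∞ | ∃ R : ℝ, 0 < R ∧
    (∃ τ : ∀ n : ℕ, RandCode (Fin n → 𝒳) (Fin (nMsg R n)) (Fin (nMsg R n)) (Fin n → 𝒴),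
      Tendsto (fun n => srcExcess pX d D R n (τ n)) atTop (nhds 0)) ∧
    r = ENNReal.ofReal R}

/-- Probability of excess distortion when the i.i.d. `pX` source is fed directly into the
system (sequence of channels) `c` at block length `n`. -/
def sysExcess (pX : 𝒳 → ℝ) (d : 𝒳 → 𝒴 → ℝ) (D : ℝ) (n : ℕ) (c : Channel 𝒳 𝒴) : ℝ :=
  ∑ x, iidP pX n x * ∑ y, c.k n x y * (if (n : ℝ) * D < dPow d n x y then 1 else 0)

variable {𝒳' 𝒴' : Type} [Fintype 𝒳'] [DecidableEq 𝒳'] [Fintype 𝒴'] [DecidableEq 𝒴]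

/-! ### Moments of i.i.d. sums -/

section Iid
variable {A : Type} [Fintype A]

theorem iidP_nonneg_s16 {P : A → ℝ} (hP : IsDist P) (n : ℕ) (a : Fin n → A) : 0 ≤ iidP P n a :=
  Finset.prod_nonneg fun t _ => hP.1 (a t)

theorem sum_prod_eq_prod_sum {ι : Type} [Fintype ι] [DecidableEq ι] (g : ι → A → ℝ) :
    ∑ a : ι → A, ∏ t, g t (a t) = ∏ t, ∑ b, g t b := by
  classical
  rw [Finset.prod_univ_sum, Fintype.piFinset_univ]

theorem iidP_isDist {P : A → ℝ} (hP : IsDist P) (n : ℕ) : IsDist (iidP P n) := by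
  refine ⟨iidP_nonneg_s16 hP n, ?_⟩
  unfold iidP
  rw [sum_prod_eq_prod_sum (fun _ => P)]
  simp [hP.2]

/-- Peeling the first letter off an i.i.d. block. -/
theorem sum_iid_succ (P : A → ℝ) (n : ℕ) (f : (Fin (n + 1) → A) → ℝ) :
    ∑ a, iidP P (n + 1) a * f a = ∑ b, P b * ∑ a, iidP P n a * f (Fin.cons b a) := by
  rw [← (Fin.consEquiv (fun _ : Fin (n + 1) => A)).sum_comp, Fintype.sum_prod_type]
  refine Finset.sum_congr rfl fun b _ => ?_
  rw [Finset.mul_sum]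
  refine Finset.sum_congr rfl fun a _ => ?_
  simp [iidP, Fin.prod_univ_succ, Fin.consEquiv, mul_assoc]

/-- First, second and fourth moments of a sum of `n` centred i.i.d. variables. -/
theorem iid_moments {P : A → ℝ} (hP : IsDist P) (g : A → ℝ) (hg : ∑ a, P a * g a = 0) (n : ℕ) :
    (∑ a, iidP P n a * (∑ t, g (a t)) = 0) ∧
    (∑ a, iidP P n a * (∑ t, g (a t)) ^ 2 = n * ∑ a, P a * g a ^ 2) ∧
    (∑ a, iidP P n a * (∑ t, g (a t)) ^ 4 ≤
      n ^ 2 * (3 * (∑ a, P a * g a ^ 2) ^ 2 + ∑ a, P a * g a ^ 4)) := by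
  induction n with
  | zero => simp
  | succ n ih =>
    obtain ⟨h1, h2, h4⟩ := ih
    have hs := (iidP_isDist hP n).2
    set v := ∑ a, P a * g a ^ 2 with hv
    set m := ∑ a, P a * g a ^ 4 with hm
    set s3 := ∑ a, iidP P n a * (∑ t, g (a t)) ^ 3 with hs3
    set s4 := ∑ a, iidP P n a * (∑ t, g (a t)) ^ 4 with hs4
    have hm0 : 0 ≤ m := Finset.sum_nonneg fun a _ => mul_nonneg (hP.1 a) (by positivity)
    have hv0 : 0 ≤ v := Finset.sum_nonneg fun a _ => mul_nonneg (hP.1 a) (by positivity)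
    refine ⟨?_, ?_, ?_⟩
    · rw [sum_iid_succ]
      simp only [Fin.sum_univ_succ, Fin.cons_zero, Fin.cons_succ, mul_add, Finset.sum_add_distrib,
        ← Finset.sum_mul, hs, h1]
      simpa using hg
    · rw [sum_iid_succ]
      have : ∀ b, ∑ a, iidP P n a * (∑ t, g ((Fin.cons b a : Fin (n + 1) → A) t)) ^ 2
          = g b ^ 2 + n * v := by
        intro b
        have : ∀ a : Fin n → A, iidP P n a * (∑ t, g ((Fin.cons b a : Fin (n + 1) → A) t)) ^ 2
            = iidP P n a * g b ^ 2 + iidP P n a * (∑ t, g (a t)) * (2 * g b)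
              + iidP P n a * (∑ t, g (a t)) ^ 2 := by
          intro a
          simp only [Fin.sum_univ_succ, Fin.cons_zero, Fin.cons_succ]
          ring
        simp only [this, Finset.sum_add_distrib, ← Finset.sum_mul, hs, h1, h2]
        ring
      simp only [this, mul_add, Finset.sum_add_distrib, ← Finset.sum_mul, hP.2]
      rw [← hv]; push_cast; ring
    · rw [sum_iid_succ]
      have : ∀ b, ∑ a, iidP P n a * (∑ t, g ((Fin.cons b a : Fin (n + 1) → A) t)) ^ 4
          = g b ^ 4 + g b ^ 2 * (6 * (n * v)) + g b * (4 * s3) + s4 := by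
        intro b
        have : ∀ a : Fin n → A, iidP P n a * (∑ t, g ((Fin.cons b a : Fin (n + 1) → A) t)) ^ 4
            = iidP P n a * g b ^ 4 + iidP P n a * (∑ t, g (a t)) * (4 * g b ^ 3)
              + iidP P n a * (∑ t, g (a t)) ^ 2 * (6 * g b ^ 2)
              + iidP P n a * (∑ t, g (a t)) ^ 3 * (4 * g b)
              + iidP P n a * (∑ t, g (a t)) ^ 4 := by
          intro a
          simp only [Fin.sum_univ_succ, Fin.cons_zero, Fin.cons_succ]
          ring
        simp only [this, Finset.sum_add_distrib, ← Finset.sum_mul, hs, h1, h2, ← hs3, ← hs4]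
        ring
      simp only [this, mul_add, Finset.sum_add_distrib, ← Finset.sum_mul, hP.2, ← mul_assoc, hg]
      rw [← hv, ← hm]; push_cast
      have hn : (0 : ℝ) ≤ n := Nat.cast_nonneg n
      nlinarith [mul_nonneg hn hm0, sq_nonneg v, mul_nonneg hn (sq_nonneg v)]

/-- Weak law of large numbers, upper tail (Chebyshev). -/
theorem iid_lln {P : A → ℝ} (hP : IsDist P) (g : A → ℝ) {v : ℝ} (hv : ∑ a, P a * g a < v) :
    Tendsto (fun n : ℕ => ∑ a, iidP P n a * (if (n : ℝ) * v < ∑ t, g (a t) then 1 else 0))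
      atTop (nhds 0) := by
  set μ := ∑ a, P a * g a with hμ
  set h : A → ℝ := fun a => g a - μ with hh
  have hh0 : ∑ a, P a * h a = 0 := by
    simp only [hh, mul_sub, Finset.sum_sub_distrib, ← Finset.sum_mul, hP.2]
    rw [← hμ]; ring
  set σ := ∑ a, P a * h a ^ 2 with hσ
  have hδ : 0 < v - μ := by linarith
  refine squeeze_zero' (g := fun n : ℕ => σ / (v - μ) ^ 2 / (n : ℝ))
    (Eventually.of_forall fun n => Finset.sum_nonneg fun a _ =>
      mul_nonneg (iidP_nonneg_s16 hP n a) (by split_ifs <;> norm_num)) ?_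
    (tendsto_const_div_atTop_nhds_zero_nat _)
  filter_upwards [eventually_gt_atTop 0] with n hn
  have hn' : (0 : ℝ) < n := by exact_mod_cast hn
  have h2 := (iid_moments hP h hh0 n).2.1
  rw [← hσ] at h2
  have : σ / (v - μ) ^ 2 / (n : ℝ) = ∑ a, iidP P n a * ((∑ t, h (a t)) ^ 2 / (n * (v - μ)) ^ 2) := by
    simp only [← mul_div_assoc, ← Finset.sum_div, h2]
    field_simp
  rw [this]
  refine Finset.sum_le_sum fun a _ => mul_le_mul_of_nonneg_left ?_ (iidP_nonneg_s16 hP n a)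
  split_ifs with hc
  · rw [one_le_div (by positivity)]
    have : ∑ t, h (a t) = ∑ t, g (a t) - n * μ := by simp [hh]
    rw [this]
    have : 0 < n * (v - μ) := by positivity
    nlinarith
  · positivity

/-- If an i.i.d. sum of nonnegative mean is positive with vanishing probability, its terms vanish on
the support of `P`. With `T` the centred sum divided by `√n`, a nonzero variance `σ` is excluded by
integrating the pointwise bound `B · 1[T > 0] ≥ c T + T² - κ T⁴`, which gives
`Pr(T > 0) ≥ σ / (2 B)`. -/
theorem iid_degenerate {P : A → ℝ} (hP : IsDist P) (g : A → ℝ) (hg : 0 ≤ ∑ a, P a * g a)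
    (hlim : Tendsto (fun n : ℕ => ∑ a, iidP P n a * (if 0 < ∑ t, g (a t) then 1 else 0))
      atTop (nhds 0)) (a : A) (ha : P a ≠ 0) : g a = 0 := by
  set μ := ∑ a, P a * g a with hμ
  set h : A → ℝ := fun a => g a - μ with hh
  have hh0 : ∑ a, P a * h a = 0 := by
    simp only [hh, mul_sub, Finset.sum_sub_distrib, ← Finset.sum_mul, hP.2]
    rw [← hμ]; ring
  set σ := ∑ a, P a * h a ^ 2 with hσ
  have hnn : ∀ a, 0 ≤ P a * h a ^ 2 := fun a => mul_nonneg (hP.1 a) (sq_nonneg _)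
  have hσ0 : 0 ≤ σ := Finset.sum_nonneg fun a _ => hnn a
  have key : σ = 0 := by
    by_contra hne
    have hσp : 0 < σ := lt_of_le_of_ne hσ0 (Ne.symm hne)
    set C := 3 * σ ^ 2 + ∑ a, P a * h a ^ 4 with hC
    have hm0 : 0 ≤ ∑ a, P a * h a ^ 4 :=
      Finset.sum_nonneg fun a _ => mul_nonneg (hP.1 a) (by positivity)
    have hCp : 0 < C := by positivity
    -- `E[T⁴] ≤ C`, so this `κ` keeps half of `E[T²] = σ`
    set κ := σ / (2 * C) with hκ
    have hκp : 0 < κ := by positivity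
    set c := 1 + 1 / κ with hc
    have hcp : 0 < c := by positivity
    -- bound used on `T ≤ 0`, with `u = -T`
    have hneg : ∀ u : ℝ, 0 ≤ u → u ≤ c + κ * u ^ 3 := by
      intro u hu
      by_cases hu1 : 1 ≤ κ * u ^ 2
      · nlinarith
      · have : u ^ 2 ≤ 1 / κ := by rw [le_div_iff₀ hκp]; linarith
        have : 0 ≤ κ * u ^ 3 := by positivity
        nlinarith [sq_nonneg (u - 1)]
    set B := c ^ 2 / 4 + 1 / κ with hB
    have hBp : 0 < B := by positivity
    have hpos : ∀ u : ℝ, c * u + u ^ 2 - κ * u ^ 4 ≤ B := by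
      intro u
      have h1 : 2 * u ^ 2 - κ * u ^ 4 ≤ 1 / κ := by
        rw [le_div_iff₀ hκp]
        nlinarith [sq_nonneg (κ * u ^ 2 - 1)]
      nlinarith [sq_nonneg (u - c / 2)]
    have hpt : ∀ u : ℝ, c * u + u ^ 2 - κ * u ^ 4 ≤ B * (if 0 < u then 1 else 0) := by
      intro u
      split_ifs with hu
      · simpa using hpos u
      · have := hneg (-u) (by linarith)
        have h0 : 0 ≤ -u := by linarith
        nlinarith [mul_le_mul_of_nonneg_left this h0]
    have hlow : ∀ n : ℕ, 0 < n → σ / 2 / B ≤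
        ∑ a, iidP P n a * (if 0 < ∑ t, g (a t) then 1 else 0) := by
      intro n hn
      have hn' : (0 : ℝ) < n := by exact_mod_cast hn
      obtain ⟨m1, m2, m4⟩ := iid_moments hP h hh0 n
      rw [← hσ] at m2
      rw [← hσ, ← hC] at m4
      set r := Real.sqrt n with hr
      have hrp : 0 < r := Real.sqrt_pos.2 hn'
      have hr2 : r ^ 2 = n := Real.sq_sqrt hn'.le
      rw [div_le_iff₀ hBp]
      calc σ / 2 = 0 * (c / r) + n * σ * (1 / r ^ 2) - (n ^ 2 * C) * (κ / r ^ 4) := by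
            have : r ^ 4 = (n : ℝ) ^ 2 := by rw [← hr2]; ring
            rw [this, hr2, hκ]
            field_simp
            ring
        _ ≤ (∑ a, iidP P n a * (∑ t, h (a t))) * (c / r)
            + (∑ a, iidP P n a * (∑ t, h (a t)) ^ 2) * (1 / r ^ 2)
            - (∑ a, iidP P n a * (∑ t, h (a t)) ^ 4) * (κ / r ^ 4) := by
            rw [m1, m2]
            have : 0 ≤ κ / r ^ 4 := by positivity
            have := mul_le_mul_of_nonneg_right m4 this
            linarith
        _ = ∑ a, iidP P n a * (c * ((∑ t, h (a t)) / r) + ((∑ t, h (a t)) / r) ^ 2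
            - κ * ((∑ t, h (a t)) / r) ^ 4) := by
            rw [Finset.sum_mul, Finset.sum_mul, Finset.sum_mul, ← Finset.sum_add_distrib,
              ← Finset.sum_sub_distrib]
            refine Finset.sum_congr rfl fun a _ => ?_
            rw [div_pow, div_pow]; ring
        _ ≤ ∑ a, iidP P n a * (B * (if 0 < (∑ t, h (a t)) / r then 1 else 0)) :=
            Finset.sum_le_sum fun a _ => mul_le_mul_of_nonneg_left (hpt _) (iidP_nonneg_s16 hP n a)
        _ ≤ ∑ a, iidP P n a * (B * (if 0 < ∑ t, g (a t) then 1 else 0)) := by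
            refine Finset.sum_le_sum fun a _ => mul_le_mul_of_nonneg_left
              (mul_le_mul_of_nonneg_left ?_ hBp.le) (iidP_nonneg_s16 hP n a)
            have e : ∑ t, h (a t) = ∑ t, g (a t) - n * μ := by simp [hh]
            split_ifs with h1 h2 h2
            · exact le_rfl
            · exfalso
              apply h2
              have := (div_pos_iff_of_pos_right hrp).1 h1
              rw [e] at this
              nlinarith [mul_nonneg hn'.le hg]
            · norm_num
            · exact le_rfl
        _ = _ := by
            rw [Finset.sum_mul]
            exact Finset.sum_congr rfl fun a _ => by ring
    have := ge_of_tendsto hlim ((eventually_gt_atTop 0).mono hlow)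
    have : 0 < σ / 2 / B := by positivity
    linarith
  have hz : ∀ a, P a ≠ 0 → g a = μ := by
    intro a ha
    have := (Finset.sum_eq_zero_iff_of_nonneg (fun a _ => hnn a)).1 key a (Finset.mem_univ a)
    rcases mul_eq_zero.1 this with h | h
    · exact absurd h ha
    · have := pow_eq_zero_iff (two_ne_zero) |>.1 h
      simp only [hh] at this; linarith
  rw [hz a ha]
  by_contra hne
  have hμp : 0 < μ := lt_of_le_of_ne hg (Ne.symm hne)
  -- every block of positive probability then has a positive sum
  have hone : ∀ n : ℕ, 0 < n →
      1 ≤ ∑ a, iidP P n a * (if 0 < ∑ t, g (a t) then (1 : ℝ) else 0) := by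
    intro n hn
    refine (iidP_isDist hP n).2.symm.le.trans (Finset.sum_le_sum fun a _ => ?_)
    by_cases h0 : iidP P n a = 0
    · simp [h0]
    · have : ∀ t, g (a t) = μ := fun t =>
        hz _ fun h => h0 (Finset.prod_eq_zero (Finset.mem_univ t) h)
      have hn' : (0 : ℝ) < n := by exact_mod_cast hn
      simp [this, hμp, hn']
  have := ge_of_tendsto hlim ((eventually_gt_atTop 0).mono hone)
  linarith

/-- An average is at least as large as some value. -/
theorem IsDist.exists_le {P : A → ℝ} (hP : IsDist P) (f : A → ℝ) :
    ∃ a, f a ≤ ∑ b, P b * f b := by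
  by_contra! hcon
  have h1 : ∑ b, P b * f b = ∑ a, P a * ∑ b, P b * f b := by rw [← Finset.sum_mul, hP.2, one_mul]
  obtain ⟨a, -, ha⟩ : ∃ a ∈ Finset.univ, P a ≠ 0 :=
    Finset.exists_ne_zero_of_sum_ne_zero (by rw [hP.2]; norm_num)
  have : ∑ a, P a * ∑ b, P b * f b < ∑ a, P a * f a :=
    Finset.sum_lt_sum (fun a _ => mul_le_mul_of_nonneg_left (hcon a).le (hP.1 a))
      ⟨a, Finset.mem_univ a,
        mul_lt_mul_of_pos_left (hcon a) (lt_of_le_of_ne (hP.1 a) (Ne.symm ha))⟩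
  linarith

end Iid

/-! ### Convex duality for the rate-distortion problem -/

section Dual
variable {U V : Type} [Fintype V]

/-- Kuhn–Tucker conditions for maximising `∑ x, p x * log (∑ y, q y * K x y)` over
distributions `q`: there is a `q` for which `w x = 1 / ∑ y, q y * K x y` satisfies
`∑ x, p x * K x y * w x ≤ 1` for all `y`. -/
theorem exists_kuhnTucker [Fintype U] [Nonempty V] {p : U → ℝ} (hp : IsDist p) (K : U → V → ℝ)
    (hK : ∀ x y, 0 ≤ K x y) (hK' : ∀ x, ∃ y, 0 < K x y) :
    ∃ q : V → ℝ, IsDist q ∧ (∀ x, p x ≠ 0 → 0 < ∑ y, q y * K x y) ∧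
      ∀ y, ∑ x, p x * (K x y / ∑ z, q z * K x z) ≤ 1 := by
  classical
  -- maximise the product `∏ Z^p` rather than its logarithm, to have continuity at `Z = 0`
  set Z : (V → ℝ) → U → ℝ := fun q x => ∑ y, q y * K x y with hZ
  have hZc : ∀ x, Continuous fun q => Z q x := fun x => by
    simp only [hZ]; fun_prop
  have hcont : Continuous fun q => ∏ x, (Z q x) ^ (p x) :=
    continuous_finsetProd _ fun x _ =>
      (hZc x).rpow_const fun _ => Or.inr (hp.1 x)
  obtain ⟨q, hq, hmax⟩ := (isCompact_stdSimplex ℝ V).exists_isMaxOn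
    ⟨_, single_mem_stdSimplex ℝ (Classical.arbitrary V)⟩ hcont.continuousOn
  have hZ0 : ∀ r ∈ stdSimplex ℝ V, ∀ x, 0 ≤ Z r x := fun r hr x =>
    Finset.sum_nonneg fun y _ => mul_nonneg (hr.1 y) (hK x y)
  have hpos : 0 < ∏ x, (Z q x) ^ (p x) := by
    have hu : (fun _ : V => (Fintype.card V : ℝ)⁻¹) ∈ stdSimplex ℝ V := by
      refine ⟨fun _ => by positivity, by simp⟩
    refine lt_of_lt_of_le ?_ (hmax hu)
    refine Finset.prod_pos fun x _ => Real.rpow_pos_of_pos ?_ _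
    obtain ⟨y, hy⟩ := hK' x
    exact Finset.sum_pos' (fun y _ => mul_nonneg (by positivity) (hK x y))
      ⟨y, Finset.mem_univ y, mul_pos (by positivity) hy⟩
  have hZpos : ∀ x, p x ≠ 0 → 0 < Z q x := by
    intro x hx
    refine lt_of_le_of_ne (hZ0 q hq x) fun h => hpos.ne' ?_
    exact Finset.prod_eq_zero (Finset.mem_univ x) (by rw [← h, Real.zero_rpow hx])
  refine ⟨q, hq, hZpos, fun y => ?_⟩
  -- move from `q` towards the vertex `y`
  have hmem : ∀ t ∈ Set.Ioo (0 : ℝ) 1, (fun z => (1 - t) * q z + t * (if z = y then 1 else 0)) ∈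
      stdSimplex ℝ V := by
    intro t ht
    refine ⟨fun z => add_nonneg (mul_nonneg (by linarith [ht.2]) (hq.1 z))
      (mul_nonneg ht.1.le (by split_ifs <;> norm_num)), ?_⟩
    rw [Finset.sum_add_distrib, ← Finset.mul_sum, ← Finset.mul_sum, hq.2]
    simp
  have hZt : ∀ t x, Z (fun z => (1 - t) * q z + t * (if z = y then 1 else 0)) x
      = (1 - t) * Z q x + t * K x y := by
    intro t x
    simp only [hZ, add_mul, Finset.sum_add_distrib, mul_assoc, ← Finset.mul_sum]
    simp
  have hder : ∀ t ∈ Set.Ioo (0 : ℝ) 1,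
      ∑ x, p x * ((K x y / Z q x - 1) / (1 + t * (K x y / Z q x - 1))) ≤ 0 := by
    intro t ht
    have h1 := hmax (hmem t ht)
    simp only [Set.mem_ofPred_eq, hZt] at h1
    have hb : ∀ x, p x ≠ 0 → 0 < (1 - t) * Z q x + t * K x y := fun x hx =>
      add_pos_of_pos_of_nonneg (mul_pos (by linarith [ht.2]) (hZpos x hx))
        (mul_nonneg ht.1.le (hK x y))
    have hfac : ∀ x, 0 < ((1 - t) * Z q x + t * K x y) ^ (p x) := by
      intro x
      by_cases hx : p x = 0
      · simp [hx]
      · exact Real.rpow_pos_of_pos (hb x hx) _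
    have hfac' : ∀ x, 0 < (Z q x) ^ (p x) := by
      intro x
      by_cases hx : p x = 0
      · simp [hx]
      · exact Real.rpow_pos_of_pos (hZpos x hx) _
    have h2 := Real.log_le_log (Finset.prod_pos fun x _ => hfac x) h1
    rw [Real.log_prod (fun x _ => (hfac x).ne'), Real.log_prod (fun x _ => (hfac' x).ne')] at h2
    have h3 : t * ∑ x, p x * ((K x y / Z q x - 1) / (1 + t * (K x y / Z q x - 1))) ≤
        ∑ x, Real.log (((1 - t) * Z q x + t * K x y) ^ (p x)) - ∑ x, Real.log ((Z q x) ^ (p x)) := by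
      rw [Finset.mul_sum, ← Finset.sum_sub_distrib]
      refine Finset.sum_le_sum fun x _ => ?_
      by_cases hx : p x = 0
      · simp [hx]
      · have hz := hZpos x hx
        have hbx := hb x hx
        rw [Real.log_rpow hbx, Real.log_rpow hz, ← mul_sub, ← Real.log_div hbx.ne' hz.ne']
        have he : 1 + t * (K x y / Z q x - 1) = ((1 - t) * Z q x + t * K x y) / Z q x := by
          field_simp; ring
        have := Real.one_sub_inv_le_log_of_pos (div_pos hbx hz)
        have h4 := mul_le_mul_of_nonneg_left this (hp.1 x)
        refine le_trans (le_of_eq ?_) h4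
        have hB := (div_pos hbx hz).ne'
        rw [← he] at hB ⊢
        generalize K x y / Z q x - 1 = k at hB ⊢
        field_simp
        ring
    have h4 : t * ∑ x, p x * ((K x y / Z q x - 1) / (1 + t * (K x y / Z q x - 1))) ≤ 0 := by
      linarith
    by_contra hcon
    exact absurd h4 (not_le.2 (mul_pos ht.1 (not_le.1 hcon)))
  have hlim : Tendsto (fun t : ℝ =>
      ∑ x, p x * ((K x y / Z q x - 1) / (1 + t * (K x y / Z q x - 1)))) (nhdsWithin 0 (Set.Ioi 0))
      (nhds (∑ x, p x * ((K x y / Z q x - 1) / (1 + 0 * (K x y / Z q x - 1))))) := by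
    refine Tendsto.mono_left ?_ nhdsWithin_le_nhds
    refine tendsto_finsetSum _ fun x _ => Tendsto.const_mul _ (Tendsto.div tendsto_const_nhds ?_ ?_)
    · exact tendsto_const_nhds.add (tendsto_id.mul_const _)
    · simp
  have h0 := le_of_tendsto hlim (by
    filter_upwards [Ioo_mem_nhdsGT (zero_lt_one' ℝ)] with t ht using hder t ht)
  simp only [zero_mul, add_zero, div_one] at h0
  simp only [mul_sub, mul_one, Finset.sum_sub_distrib, hp.2] at h0
  linarith

/-- `(W, q)` is a test channel `W` together with an output distribution `q` dominating it. -/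
structure IsTest (W : U → V → ℝ) (q : V → ℝ) : Prop where
  chan : ∀ x, IsDist (W x)
  dist : IsDist q
  ac : ∀ x y, q y = 0 → W x y = 0

/-- `∑ x, p x * D(W x ‖ q)`, in nats. It is at least the mutual information of `(p, W)`, with
equality when `q` is the output distribution. -/
def testInfo [Fintype U] (p : U → ℝ) (W : U → V → ℝ) (q : V → ℝ) : ℝ :=
  ∑ x, ∑ y, p x * W x y * Real.log (W x y / q y)

/-- The expected single-letter distortion of the test channel `W` with input `p`. -/
def testCost [Fintype U] (p : U → ℝ) (d : U → V → ℝ) (W : U → V → ℝ) : ℝ :=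
  ∑ x, ∑ y, p x * W x y * d x y

theorem IsTest.mix {W W' : U → V → ℝ} {q q' : V → ℝ} (h : IsTest W q) (h' : IsTest W' q')
    {a b : ℝ} (ha : 0 < a) (hb : 0 < b) (hab : a + b = 1) :
    IsTest (fun x y => a * W x y + b * W' x y) (fun y => a * q y + b * q' y) := by
  refine ⟨fun x => ⟨fun y => ?_, ?_⟩, ⟨fun y => ?_, ?_⟩, fun x y hy => ?_⟩
  · exact add_nonneg (mul_nonneg ha.le ((h.chan x).1 y)) (mul_nonneg hb.le ((h'.chan x).1 y))
  · rw [Finset.sum_add_distrib, ← Finset.mul_sum, ← Finset.mul_sum, (h.chan x).2, (h'.chan x).2]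
    linarith
  · exact add_nonneg (mul_nonneg ha.le (h.dist.1 y)) (mul_nonneg hb.le (h'.dist.1 y))
  · rw [Finset.sum_add_distrib, ← Finset.mul_sum, ← Finset.mul_sum, h.dist.2, h'.dist.2]
    linarith
  · have h1 := mul_nonneg ha.le (h.dist.1 y)
    have h2 := mul_nonneg hb.le (h'.dist.1 y)
    have h3 : a * q y = 0 := by linarith
    have h4 : b * q' y = 0 := by linarith
    rw [h.ac x y ((mul_eq_zero.1 h3).resolve_left ha.ne'),
      h'.ac x y ((mul_eq_zero.1 h4).resolve_left hb.ne')]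
    simp

/-- Tangent-line bound for `u * log (u / v)`, a supremum over `c` of functions linear
in `(u, v)`. -/
theorem mul_log_le {u v c : ℝ} (hu : 0 ≤ u) (hv : 0 ≤ v) (huv : v = 0 → u = 0) (hc : 0 < c) :
    u * Real.log c ≤ u * Real.log (u / v) - u + v * c := by
  rcases hu.eq_or_lt with rfl | hu
  · simp; positivity
  have hv : 0 < v := lt_of_le_of_ne hv fun h => hu.ne' (huv h.symm)
  have h1 := Real.log_le_sub_one_of_pos (show 0 < v * c / u by positivity)
  have h2 : Real.log (v * c / u) = Real.log c - Real.log (u / v) := by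
    rw [Real.log_div (by positivity) hu.ne', Real.log_mul hv.ne' hc.ne',
      Real.log_div hu.ne' hv.ne']
    ring
  rw [h2] at h1
  have h3 := mul_le_mul_of_nonneg_left h1 hu.le
  have h4 : u * (v * c / u - 1) = v * c - u := by field_simp
  nlinarith

/-- Joint convexity of `testInfo`. -/
theorem testInfo_mix [Fintype U] {p : U → ℝ} (hp : IsDist p) {W W' : U → V → ℝ} {q q' : V → ℝ}
    (h : IsTest W q) (h' : IsTest W' q') {a b : ℝ} (ha : 0 < a) (hb : 0 < b) :
    testInfo p (fun x y => a * W x y + b * W' x y) (fun y => a * q y + b * q' y) ≤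
      a * testInfo p W q + b * testInfo p W' q' := by
  unfold testInfo
  simp only [Finset.mul_sum]
  rw [← Finset.sum_add_distrib]
  refine Finset.sum_le_sum fun x _ => ?_
  rw [← Finset.sum_add_distrib]
  refine Finset.sum_le_sum fun y _ => ?_
  suffices (a * W x y + b * W' x y) *
      Real.log ((a * W x y + b * W' x y) / (a * q y + b * q' y)) ≤
      a * (W x y * Real.log (W x y / q y)) + b * (W' x y * Real.log (W' x y / q' y)) by
    have := mul_le_mul_of_nonneg_left this (hp.1 x)
    linarith
  have hW := (h.chan x).1 y
  have hW' := (h'.chan x).1 y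
  have hq := h.dist.1 y
  have hq' := h'.dist.1 y
  rcases (add_nonneg (mul_nonneg ha.le hW) (mul_nonneg hb.le hW')).eq_or_lt with h0 | h0
  · have h3 : a * W x y = 0 := by linarith [mul_nonneg ha.le hW, mul_nonneg hb.le hW']
    have h4 : b * W' x y = 0 := by linarith [mul_nonneg ha.le hW, mul_nonneg hb.le hW']
    simp [(mul_eq_zero.1 h3).resolve_left ha.ne', (mul_eq_zero.1 h4).resolve_left hb.ne']
  have hQ : 0 < a * q y + b * q' y := by
    refine lt_of_le_of_ne (add_nonneg (mul_nonneg ha.le hq) (mul_nonneg hb.le hq')) fun hz => ?_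
    have h3 : a * q y = 0 := by linarith [mul_nonneg ha.le hq, mul_nonneg hb.le hq']
    have h4 : b * q' y = 0 := by linarith [mul_nonneg ha.le hq, mul_nonneg hb.le hq']
    rw [h.ac x y ((mul_eq_zero.1 h3).resolve_left ha.ne'),
      h'.ac x y ((mul_eq_zero.1 h4).resolve_left hb.ne')] at h0
    simp at h0
  have hc : 0 < (a * W x y + b * W' x y) / (a * q y + b * q' y) := div_pos h0 hQ
  have e1 := mul_le_mul_of_nonneg_left (mul_log_le hW hq (h.ac x y) hc) ha.le
  have e2 := mul_le_mul_of_nonneg_left (mul_log_le hW' hq' (h'.ac x y) hc) hb.le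
  have e3 : (a * q y + b * q' y) * ((a * W x y + b * W' x y) / (a * q y + b * q' y)) =
      a * W x y + b * W' x y := by field_simp
  linarith

theorem testCost_mix [Fintype U] (p : U → ℝ) (d W W' : U → V → ℝ) (a b : ℝ) :
    testCost p d (fun x y => a * W x y + b * W' x y) = a * testCost p d W + b * testCost p d W' := by
  unfold testCost
  simp only [Finset.mul_sum, ← Finset.sum_add_distrib]
  exact Finset.sum_congr rfl fun x _ => Finset.sum_congr rfl fun y _ => by ring

/-- Lagrange multipliers for the rate-distortion problem: if no test channel beats `(D, L)` in
both coordinates, then either `D` is at most every attainable distortion, or some slope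
`s ≥ 0` supports the information-distortion region. -/
theorem exists_slope [Fintype U] [Nonempty V] {p : U → ℝ} (hp : IsDist p) (d : U → V → ℝ) (D L : ℝ)
    (h : ∀ W q, IsTest W q → testCost p d W < D → ¬ testInfo p W q < L) :
    (∀ (W : U → V → ℝ) q, IsTest W q → D ≤ testCost p d W) ∨
      ∃ s : ℝ, 0 ≤ s ∧ ∀ (W : U → V → ℝ) q, IsTest W q →
        L + s * D ≤ testInfo p W q + s * testCost p d W := by
  set S : Set (ℝ × ℝ) := {z | ∃ (W : U → V → ℝ) (q : V → ℝ), IsTest W q ∧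
    testCost p d W < z.1 ∧ testInfo p W q < z.2} with hS
  have hopen : IsOpen S := by
    have : S = ⋃ (W : U → V → ℝ) (q : V → ℝ) (_ : IsTest W q),
        {z : ℝ × ℝ | testCost p d W < z.1} ∩ {z | testInfo p W q < z.2} := by
      ext z
      simp only [hS, Set.mem_ofPred_eq, Set.mem_iUnion, Set.mem_inter_iff, exists_prop]
    rw [this]
    exact isOpen_iUnion fun W => isOpen_iUnion fun q => isOpen_iUnion fun _ =>
      (isOpen_lt continuous_const continuous_fst).inter (isOpen_lt continuous_const continuous_snd)
  have hconv : Convex ℝ S := by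
    rw [convex_iff_forall_pos]
    rintro z ⟨W, q, ht, h1, h2⟩ z' ⟨W', q', ht', h1', h2'⟩ a b ha hb hab
    refine ⟨_, _, ht.mix ht' ha hb hab, ?_, ?_⟩
    · rw [testCost_mix]
      simp only [Prod.fst_add, Prod.smul_fst, smul_eq_mul]
      exact add_lt_add (mul_lt_mul_of_pos_left h1 ha) (mul_lt_mul_of_pos_left h1' hb)
    · refine (testInfo_mix hp ht ht' ha hb).trans_lt ?_
      simp only [Prod.snd_add, Prod.smul_snd, smul_eq_mul]
      exact add_lt_add (mul_lt_mul_of_pos_left h2 ha) (mul_lt_mul_of_pos_left h2' hb)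
  have hnot : ((D, L) : ℝ × ℝ) ∉ S := by
    rintro ⟨W, q, ht, h1, h2⟩
    exact h W q ht h1 h2
  obtain ⟨f, hf⟩ := geometric_hahn_banach_point_open hconv hopen hnot
  set α := f (1, 0) with hα
  set β := f (0, 1) with hβ
  have hlin : ∀ u v : ℝ, f (u, v) = α * u + β * v := by
    intro u v
    have : ((u, v) : ℝ × ℝ) = u • (1, 0) + v • (0, 1) := by simp
    rw [this, map_add, map_smul, map_smul, smul_eq_mul, smul_eq_mul]; ring
  have hsep : ∀ (W : U → V → ℝ) q, IsTest W q → ∀ u v, 0 < u → 0 < v →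
      α * D + β * L < α * (testCost p d W + u) + β * (testInfo p W q + v) := by
    intro W q ht u v hu hv
    have := hf (testCost p d W + u, testInfo p W q + v)
      ⟨W, q, ht, by simpa using hu, by simpa using hv⟩
    rwa [hlin, hlin] at this
  obtain ⟨W₀, q₀, ht₀⟩ : ∃ (W : U → V → ℝ) (q : V → ℝ), IsTest W q := by
    have hu : IsDist (fun _ : V => (Fintype.card V : ℝ)⁻¹) := ⟨fun _ => by positivity, by simp⟩
    exact ⟨fun _ _ => (Fintype.card V : ℝ)⁻¹, fun _ => (Fintype.card V : ℝ)⁻¹, fun _ => hu, hu,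
      fun _ _ h => h⟩
  -- both coefficients are nonnegative because the region is upward closed
  have hα0 : 0 ≤ α := by
    by_contra! hneg
    set M := α * testCost p d W₀ + β * (testInfo p W₀ q₀ + 1) - (α * D + β * L) with hM
    have := hsep W₀ q₀ ht₀ ((|M| + 1) / (-α)) 1 (div_pos (by positivity) (by linarith)) one_pos
    have e : α * ((|M| + 1) / (-α)) = -(|M| + 1) := by
      rw [div_neg, mul_neg, mul_div_cancel₀ _ hneg.ne]
    rw [mul_add, e] at this
    linarith [le_abs_self M]
  have hβ0 : 0 ≤ β := by
    by_contra! hneg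
    set M := α * (testCost p d W₀ + 1) + β * testInfo p W₀ q₀ - (α * D + β * L) with hM
    have := hsep W₀ q₀ ht₀ 1 ((|M| + 1) / (-β)) one_pos (div_pos (by positivity) (by linarith))
    have e : β * ((|M| + 1) / (-β)) = -(|M| + 1) := by
      rw [div_neg, mul_neg, mul_div_cancel₀ _ hneg.ne]
    rw [mul_add β, e] at this
    linarith [le_abs_self M]
  have hsep' : ∀ (W : U → V → ℝ) q, IsTest W q →
      α * D + β * L ≤ α * testCost p d W + β * testInfo p W q := by
    intro W q ht
    refine le_of_forall_pos_le_add fun ε hε => ?_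
    have h1 : 0 < ε / (α + β + 1) := by positivity
    have h2 := hsep W q ht _ _ h1 h1
    have h3 : (α + β) * (ε / (α + β + 1)) ≤ ε := by
      rw [mul_div_assoc', div_le_iff₀ (by positivity)]
      nlinarith
    linarith
  rcases hβ0.eq_or_lt with hb | hb
  · left
    intro W q ht
    have h1 := hsep' W q ht
    have h2 := hsep W q ht 1 1 one_pos one_pos
    rw [← hb] at h1 h2
    have hαp : 0 < α := by
      refine lt_of_le_of_ne hα0 fun hz => ?_
      rw [← hz] at h2; simp at h2
    by_contra! hlt
    nlinarith [mul_lt_mul_of_pos_left hlt hαp]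
  · right
    refine ⟨α / β, by positivity, fun W q ht => ?_⟩
    have h1 := hsep' W q ht
    have e : α = α / β * β := by field_simp
    rw [e] at h1
    by_contra! hlt
    nlinarith [mul_lt_mul_of_pos_left hlt hb]

/-- The test channel `W x y = q y * K x y / Z x` obtained by tilting `q` by the kernel `K`. -/
theorem isTest_tilt {K : U → V → ℝ} {q : V → ℝ} (hq : IsDist q) (hK : ∀ x y, 0 ≤ K x y)
    (hZ : ∀ x, 0 < ∑ z, q z * K x z) :
    IsTest (fun x y => q y * K x y / ∑ z, q z * K x z) q := by
  refine ⟨fun x => ⟨fun y => ?_, ?_⟩, hq, fun x y hy => by simp [hy]⟩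
  · exact div_nonneg (mul_nonneg (hq.1 y) (hK x y)) (hZ x).le
  · rw [← Finset.sum_div, div_self (hZ x).ne']

theorem testInfo_tilt [Fintype U] {p : U → ℝ} {K : U → V → ℝ} {q : V → ℝ} (hq : IsDist q)
    (hK : ∀ x y, 0 ≤ K x y) (hZ : ∀ x, 0 < ∑ z, q z * K x z) :
    testInfo p (fun x y => q y * K x y / ∑ z, q z * K x z) q =
      ∑ x, ∑ y, p x * (q y * K x y / ∑ z, q z * K x z) * Real.log (K x y)
        - ∑ x, p x * Real.log (∑ z, q z * K x z) := by
  unfold testInfo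
  rw [← Finset.sum_sub_distrib]
  refine Finset.sum_congr rfl fun x _ => ?_
  have h1 := ((isTest_tilt hq hK hZ).chan x).2
  have e : p x * Real.log (∑ z, q z * K x z) =
      ∑ y, p x * (q y * K x y / ∑ z, q z * K x z) * Real.log (∑ z, q z * K x z) := by
    rw [← Finset.sum_mul, ← Finset.mul_sum, h1, mul_one]
  rw [e, ← Finset.sum_sub_distrib]
  refine Finset.sum_congr rfl fun y _ => ?_
  rw [← mul_sub]
  by_cases hqy : q y = 0
  · simp [hqy]
  by_cases hKy : K x y = 0
  · simp [hKy]
  congr 1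
  rw [← Real.log_div hKy (hZ x).ne']
  congr 1
  field_simp

end Dual

/-! ### One-shot random coding -/

section OneShot
variable {S T : Type} [Fintype S] [Fintype T]

theorem sum_mul_sum_swap (a : S → ℝ) (b : T → ℝ) (F : S → T → ℝ) :
    ∑ s, a s * ∑ t, b t * F s t = ∑ t, b t * ∑ s, a s * F s t := by
  simp only [Finset.mul_sum]
  rw [Finset.sum_comm]
  exact Finset.sum_congr rfl fun t _ => Finset.sum_congr rfl fun s _ => by ring

/-- Independence of two distinct codewords of an i.i.d. codebook. -/
theorem sum_codebook_pair {P : S → ℝ} (hP : IsDist P) {M : ℕ} {m m' : Fin M} (hm : m ≠ m')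
    (f g : S → ℝ) :
    ∑ C : Fin M → S, (∏ i, P (C i)) * (f (C m) * g (C m')) =
      (∑ s, P s * f s) * ∑ s, P s * g s := by
  have h1 : ∀ C : Fin M → S, (∏ i, P (C i)) * (f (C m) * g (C m')) =
      ∏ i, P (C i) * (if i = m then f (C i) else if i = m' then g (C i) else 1) := by
    intro C
    have h2 : ∏ i, (if i = m then f (C i) else if i = m' then g (C i) else 1) =
        f (C m) * g (C m') := by
      rw [Finset.prod_eq_mul m m' hm (fun c _ hc => by simp [hc.1, hc.2]) (by simp) (by simp)]
      simp [hm.symm]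
    rw [Finset.prod_mul_distrib, h2]
  simp only [h1]
  rw [sum_prod_eq_prod_sum (fun i s => P s * (if i = m then f s else if i = m' then g s else 1)),
    Finset.prod_eq_mul m m' hm (fun c _ hc => by simp [hc.1, hc.2, hP.2]) (by simp) (by simp)]
  simp [hm.symm]

theorem sum_codebook_single {P : S → ℝ} (hP : IsDist P) {M : ℕ} (m : Fin M) (f : S → ℝ) :
    ∑ C : Fin M → S, (∏ i, P (C i)) * f (C m) = ∑ s, P s * f s := by
  have h1 : ∀ C : Fin M → S, (∏ i, P (C i)) * f (C m) =
      ∏ i, P (C i) * (if i = m then f (C i) else 1) := by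
    intro C
    rw [Finset.prod_mul_distrib, Finset.prod_ite_eq']
    simp
  simp only [h1]
  rw [sum_prod_eq_prod_sum (fun i s => P s * (if i = m then f s else 1)),
    Finset.prod_eq_single m (fun c _ hc => by simp [hc, hP.2]) (by simp)]
  simp

open Classical in
/-- One-shot random covering. If `u * W s t ≤ Q t` on the good pairs, then `M` codewords drawn
from `Q` leave uncovered little more than the mass of the bad pairs under `P × W`. -/
theorem exists_covering {P : S → ℝ} (hP : IsDist P) {Q : T → ℝ} (hQ : IsDist Q)
    {W : S → T → ℝ} (hW : ∀ s, IsDist (W s)) (G : S → T → Prop) {u : ℝ}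
    (hG : ∀ s t, G s t → u * W s t ≤ Q t) (M : ℕ) :
    ∃ C : Fin M → T, ∑ s, P s * (if ∃ m, G s (C m) then (0 : ℝ) else 1) ≤
      ∑ s, P s * ∑ t, W s t * (if G s t then (0 : ℝ) else 1) + Real.exp (-(M * u)) := by
  have hdist : IsDist (fun C : Fin M → T => ∏ i, Q (C i)) :=
    iidP_isDist hQ M
  obtain ⟨C, hC⟩ := hdist.exists_le
    (fun C => ∑ s, P s * (if ∃ m, G s (C m) then (0 : ℝ) else 1))
  refine ⟨C, hC.trans ?_⟩
  rw [sum_mul_sum_swap]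
  have hs : ∀ s, ∑ C : Fin M → T, (∏ i, Q (C i)) * (if ∃ m, G s (C m) then (0 : ℝ) else 1) ≤
      ∑ t, W s t * (if G s t then (0 : ℝ) else 1) + Real.exp (-(M * u)) := by
    intro s
    have h1 : ∀ C : Fin M → T, (∏ i, Q (C i)) * (if ∃ m, G s (C m) then (0 : ℝ) else 1) =
        ∏ i, Q (C i) * (if G s (C i) then (0 : ℝ) else 1) := by
      intro C
      rw [Finset.prod_mul_distrib]
      congr 1
      split_ifs with h
      · obtain ⟨m, hm⟩ := h
        exact (Finset.prod_eq_zero (Finset.mem_univ m) (by simp [hm])).symm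
      · push Not at h
        simp [h]
    simp only [h1]
    rw [sum_prod_eq_prod_sum (fun _ t => Q t * (if G s t then (0 : ℝ) else 1))]
    rw [Finset.prod_const, Finset.card_univ, Fintype.card_fin]
    set v := ∑ t, W s t * (if G s t then (1 : ℝ) else 0) with hv
    have hsplit : ∑ t, W s t * (if G s t then (0 : ℝ) else 1) = 1 - v := by
      rw [hv, eq_sub_iff_add_eq, ← Finset.sum_add_distrib, ← (hW s).2]
      exact Finset.sum_congr rfl fun t _ => by split_ifs <;> simp [(hW s).2]
    have hsplitQ : ∑ t, Q t * (if G s t then (0 : ℝ) else 1) =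
        1 - ∑ t, Q t * (if G s t then (1 : ℝ) else 0) := by
      rw [eq_sub_iff_add_eq, ← Finset.sum_add_distrib, ← hQ.2]
      exact Finset.sum_congr rfl fun t _ => by split_ifs <;> simp [hQ.2]
    have hv0 : 0 ≤ v := Finset.sum_nonneg fun t _ =>
      mul_nonneg ((hW s).1 t) (by split_ifs <;> norm_num)
    have hv1 : v ≤ 1 := by
      rw [← sub_nonneg, ← hsplit]
      exact Finset.sum_nonneg fun t _ => mul_nonneg ((hW s).1 t) (by split_ifs <;> norm_num)
    have huv : u * v ≤ ∑ t, Q t * (if G s t then (1 : ℝ) else 0) := by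
      rw [hv, Finset.mul_sum]
      refine Finset.sum_le_sum fun t _ => ?_
      split_ifs with h
      · simpa using hG s t h
      · simp
    have hQ0 : 0 ≤ ∑ t, Q t * (if G s t then (0 : ℝ) else 1) :=
      Finset.sum_nonneg fun t _ => mul_nonneg (hQ.1 t) (by split_ifs <;> norm_num)
    have h2 : ∑ t, Q t * (if G s t then (0 : ℝ) else 1) ≤ Real.exp (-(u * v)) := by
      have := Real.add_one_le_exp (-(u * v))
      linarith
    have h3 : (∑ t, Q t * (if G s t then (0 : ℝ) else 1)) ^ M ≤ Real.exp (v * (-(M * u))) := by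
      refine (pow_le_pow_left₀ hQ0 h2 M).trans (le_of_eq ?_)
      rw [← Real.exp_nat_mul]; congr 1; ring
    -- convexity of `exp` along the segment from `0` to `-(M * u)`
    have h4 : Real.exp (v * (-(M * u))) ≤ (1 - v) + v * Real.exp (-(M * u)) := by
      have := convexOn_exp.2 (Set.mem_univ (0 : ℝ)) (Set.mem_univ (-(M * u)))
        (by linarith : 0 ≤ 1 - v) hv0 (by ring)
      simpa using this
    have h5 := Real.exp_pos (-(M * u))
    rw [hsplit]
    nlinarith
  calc _ ≤ ∑ s, P s * (∑ t, W s t * (if G s t then (0 : ℝ) else 1) + Real.exp (-(M * u))) :=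
        Finset.sum_le_sum fun s _ => mul_le_mul_of_nonneg_left (hs s) (hP.1 s)
    _ = _ := by
        simp only [mul_add, Finset.sum_add_distrib, ← Finset.sum_mul, hP.2, one_mul]

open Classical in
/-- One-shot random channel coding with the threshold test `Acc`: the true codeword fails the test
with its natural probability, and each of the others passes with probability at most `ε`. The
messages are produced by an arbitrary source `P'` through the map `e`. -/
theorem exists_channelCode {S' : Type} [Fintype S'] {P' : S' → ℝ} (hP' : IsDist P')
    {P : S → ℝ} (hP : IsDist P) {c : S → T → ℝ} (hc : ∀ s, IsDist (c s))
    (Acc : S → T → Prop) {ε : ℝ} (hε : ∀ t, ∑ s, P s * (if Acc s t then (1 : ℝ) else 0) ≤ ε)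
    (hε0 : 0 ≤ ε) {M : ℕ} [Nonempty (Fin M)] (e : S' → Fin M) :
    ∃ (C : Fin M → S) (dec : T → Fin M),
      ∑ s', P' s' * ∑ t, c (C (e s')) t * (if dec t = e s' then (0 : ℝ) else 1) ≤
        ∑ s, P s * ∑ t, c s t * (if Acc s t then (0 : ℝ) else 1) + M * ε := by
  set dec : (Fin M → S) → T → Fin M := fun C t =>
    if h : ∃ m, Acc (C m) t then h.choose else Classical.arbitrary _ with hdec
  have hdist : IsDist (fun C : Fin M → S => ∏ i, P (C i)) := iidP_isDist hP M
  obtain ⟨C, hC⟩ := hdist.exists_le (fun C =>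
    ∑ s', P' s' * ∑ t, c (C (e s')) t * (if dec C t = e s' then (0 : ℝ) else 1))
  refine ⟨C, dec C, hC.trans ?_⟩
  rw [sum_mul_sum_swap]
  have hm : ∀ m : Fin M, ∑ C : Fin M → S, (∏ i, P (C i)) *
      ∑ t, c (C m) t * (if dec C t = m then (0 : ℝ) else 1) ≤
      ∑ s, P s * ∑ t, c s t * (if Acc s t then (0 : ℝ) else 1) + M * ε := by
    intro m
    have herr : ∀ (C : Fin M → S) t, (if dec C t = m then (0 : ℝ) else 1) ≤
        (if Acc (C m) t then (0 : ℝ) else 1) +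
          ∑ m' ∈ Finset.univ.erase m, (if Acc (C m') t then (1 : ℝ) else 0) := by
      intro C t
      have hnn : ∀ m' ∈ Finset.univ.erase m, 0 ≤ (if Acc (C m') t then (1 : ℝ) else 0) :=
        fun _ _ => by split_ifs <;> norm_num
      have hnn' := Finset.sum_nonneg hnn
      by_cases hA : Acc (C m) t
      · by_cases hd : dec C t = m
        · simp only [hd, hA, if_true]; linarith
        · have hex : ∃ m, Acc (C m) t := ⟨m, hA⟩
          have hch : Acc (C (dec C t)) t := by
            simp only [hdec, dif_pos hex]; exact hex.choose_spec
          have := Finset.single_le_sum hnn (Finset.mem_erase.2 ⟨hd, Finset.mem_univ _⟩)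
          rw [if_pos hch] at this
          simp only [hd, hA, if_true, if_false]; linarith
      · simp only [hA, if_false]
        have : (if dec C t = m then (0 : ℝ) else 1) ≤ 1 := by split_ifs <;> norm_num
        linarith
    calc _ ≤ ∑ C : Fin M → S, (∏ i, P (C i)) * ∑ t, c (C m) t *
            ((if Acc (C m) t then (0 : ℝ) else 1) +
              ∑ m' ∈ Finset.univ.erase m, (if Acc (C m') t then (1 : ℝ) else 0)) :=
          Finset.sum_le_sum fun C _ => mul_le_mul_of_nonneg_left
            (Finset.sum_le_sum fun t _ => mul_le_mul_of_nonneg_left (herr C t) ((hc _).1 t))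
            (hdist.1 C)
      _ = ∑ s, P s * ∑ t, c s t * (if Acc s t then (0 : ℝ) else 1) +
            ∑ m' ∈ Finset.univ.erase m, ∑ t, ∑ C : Fin M → S, (∏ i, P (C i)) *
              (c (C m) t * (if Acc (C m') t then (1 : ℝ) else 0)) := by
          rw [← sum_codebook_single hP m
            (fun s => ∑ t, c s t * (if Acc s t then (0 : ℝ) else 1))]
          simp only [mul_add, Finset.sum_add_distrib, Finset.mul_sum]
          congr 1
          rw [Finset.sum_congr rfl (fun C _ => Finset.sum_comm), Finset.sum_comm]
          exact Finset.sum_congr rfl fun m' _ => Finset.sum_comm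
      _ ≤ _ := by
          gcongr
          have hb : ∀ m' ∈ Finset.univ.erase m, ∑ t, ∑ C : Fin M → S, (∏ i, P (C i)) *
              (c (C m) t * (if Acc (C m') t then (1 : ℝ) else 0)) ≤ ε := by
            intro m' hm'
            calc _ = ∑ t, (∑ s, P s * c s t) * ∑ s, P s * (if Acc s t then (1 : ℝ) else 0) :=
                  Finset.sum_congr rfl fun t _ => sum_codebook_pair hP
                    (Finset.ne_of_mem_erase hm').symm (fun s => c s t)
                    (fun s => if Acc s t then (1 : ℝ) else 0)
              _ ≤ ∑ t, (∑ s, P s * c s t) * ε :=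
                  Finset.sum_le_sum fun t _ => mul_le_mul_of_nonneg_left (hε t)
                    (Finset.sum_nonneg fun s _ => mul_nonneg (hP.1 s) ((hc s).1 t))
              _ = ε := by
                  rw [← Finset.sum_mul, Finset.sum_comm]
                  simp [← Finset.mul_sum, (hc _).2, hP.2]
          refine (Finset.sum_le_card_nsmul _ _ _ hb).trans ?_
          rw [nsmul_eq_mul]
          gcongr
          simp
  calc _ ≤ ∑ s', P' s' * (∑ s, P s * ∑ t, c s t * (if Acc s t then (0 : ℝ) else 1) + M * ε) := by
        refine Finset.sum_le_sum fun s' _ => ?_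
        exact mul_le_mul_of_nonneg_left (hm (e s')) (hP'.1 s')
    _ = _ := by rw [← Finset.sum_mul, hP'.2, one_mul]

end OneShot

/-! ### Block source codes and the dual certificate -/

section Block
variable {U V : Type} [Fintype U] [Fintype V]

/-- Weak law of large numbers for a block `(x, y)` generated by `p` and the memoryless `W`. -/
theorem joint_lln {p : U → ℝ} (hp : IsDist p) {W : U → V → ℝ} (hW : ∀ x, IsDist (W x))
    (g : U → V → ℝ) {v : ℝ} (hv : ∑ x, ∑ y, p x * W x y * g x y < v) :
    Tendsto (fun n : ℕ => ∑ x, iidP p n x * ∑ y : Fin n → V, (∏ t, W (x t) (y t)) *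
      (if (n : ℝ) * v < ∑ t, g (x t) (y t) then (1 : ℝ) else 0)) atTop (nhds 0) := by
  set P : U × V → ℝ := fun z => p z.1 * W z.1 z.2 with hPdef
  have hP : IsDist P := by
    refine ⟨fun z => mul_nonneg (hp.1 _) ((hW _).1 _), ?_⟩
    rw [Fintype.sum_prod_type]
    simp [hPdef, ← Finset.mul_sum, (hW _).2, hp.2]
  have h := iid_lln hP (fun z => g z.1 z.2) (v := v) (by rwa [Fintype.sum_prod_type])
  refine h.congr fun n => ?_
  rw [← (Equiv.arrowProdEquivProdArrow (Fin n) (fun _ => U) (fun _ => V)).symm.sum_comp,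
    Fintype.sum_prod_type]
  refine Finset.sum_congr rfl fun x _ => ?_
  rw [Finset.mul_sum]
  refine Finset.sum_congr rfl fun y _ => ?_
  change (∏ t, P (x t, y t)) * (if (n : ℝ) * v < ∑ t, g (x t) (y t) then (1 : ℝ) else 0) = _
  simp only [iidP, hPdef, Finset.prod_mul_distrib, mul_assoc]

/-- The deterministic code `(e, f)` as a random code. -/
def RandCode.det {A B C E : Type} [Fintype A] [DecidableEq A] [Fintype B]
    [Fintype C] [DecidableEq C] [Fintype E] (e : A → B) (f : C → E) : RandCode A B C E where
  p := by
    classical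
    exact Pi.single (e, f) 1
  isDist := by
    classical
    refine ⟨fun a => ?_, ?_⟩
    · by_cases h : a = (e, f)
      · subst h; simp
      · simp [h]
    · simp

theorem RandCode.det_sum {A B C E : Type} [Fintype A] [DecidableEq A] [Fintype B]
    [Fintype C] [DecidableEq C] [Fintype E] (e : A → B) (f : C → E)
    (F : (A → B) × (C → E) → ℝ) : ∑ ef, (RandCode.det e f).p ef * F ef = F (e, f) := by
  classical
  rw [Finset.sum_eq_single (e, f)]
  · simp [RandCode.det]
  · intro b _ hb
    simp [RandCode.det, hb]
  · simp

theorem nMsg_pos (R : ℝ) (n : ℕ) : 0 < nMsg R n := by unfold nMsg; positivity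

theorem nMsg_le {R : ℝ} (hR : 0 < R) (n : ℕ) :
    (nMsg R n : ℝ) ≤ Real.exp (n * (R * Real.log 2)) := by
  have h : (⌊(n : ℝ) * R⌋₊ : ℝ) ≤ n * R := Nat.floor_le (by positivity)
  have h2 : (nMsg R n : ℝ) = Real.exp (⌊(n : ℝ) * R⌋₊ * Real.log 2) := by
    rw [Real.exp_nat_mul, Real.exp_log two_pos]; simp [nMsg]
  rw [h2]
  refine Real.exp_le_exp.2 ?_
  nlinarith [Real.log_pos one_lt_two]

theorem le_nMsg (R : ℝ) (n : ℕ) :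
    Real.exp (n * (R * Real.log 2)) / 2 ≤ nMsg R n := by
  have h : (n : ℝ) * R < ⌊(n : ℝ) * R⌋₊ + 1 := Nat.lt_floor_add_one _
  have h2 : (nMsg R n : ℝ) * 2 = Real.exp ((⌊(n : ℝ) * R⌋₊ + 1) * Real.log 2) := by
    rw [add_mul, Real.exp_add, Real.exp_nat_mul, one_mul, Real.exp_log two_pos]; simp [nMsg]
  rw [div_le_iff₀ two_pos, h2]
  refine Real.exp_le_exp.2 ?_
  nlinarith [Real.log_pos one_lt_two]

/-- Achievability half of the rate-distortion theorem: a test channel whose information is below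
`R` bits and whose block distortion rarely exceeds `D` yields source codes of rate `R`. -/
theorem RP_le_of_test [DecidableEq U] {p : U → ℝ} (hp : IsDist p) (d : U → V → ℝ) (D : ℝ)
    {R : ℝ} (hR : 0 < R) {W : U → V → ℝ} {q : V → ℝ} (ht : IsTest W q)
    (hI : testInfo p W q < R * Real.log 2)
    (hD : Tendsto (fun n : ℕ => ∑ x, iidP p n x * ∑ y : Fin n → V, (∏ t, W (x t) (y t)) *
      (if (n : ℝ) * D < dPow d n x y then (1 : ℝ) else 0)) atTop (nhds 0)) :
    RP p d D ≤ ENNReal.ofReal R := by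
  classical
  obtain ⟨L, hL1, hL2⟩ := exists_between hI
  -- good pairs: admissible distortion and information density at most `L`
  obtain ⟨G, hG⟩ : ∃ G : ∀ n : ℕ, (Fin n → U) → (Fin n → V) → Prop, ∀ n x y, G n x y ↔
      (¬ ((n : ℝ) * D < dPow d n x y) ∧
        ¬ ((n : ℝ) * L < ∑ t, Real.log (W (x t) (y t) / q (y t)))) :=
    ⟨_, fun _ _ _ => Iff.rfl⟩
  have hlog := joint_lln hp ht.chan (fun x y => Real.log (W x y / q y)) hL1
  have hWn : ∀ (n : ℕ) (x : Fin n → U), IsDist (fun y : Fin n → V => ∏ t, W (x t) (y t)) := by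
    intro n x
    refine ⟨fun y => Finset.prod_nonneg fun t _ => (ht.chan _).1 _, ?_⟩
    rw [sum_prod_eq_prod_sum (fun t => W (x t))]
    simp [(ht.chan _).2]
  -- change of measure from the output distribution to the test channel on good pairs
  have hchange : ∀ (n : ℕ) (x : Fin n → U) (y : Fin n → V), G n x y →
      Real.exp (-(n * L)) * ∏ t, W (x t) (y t) ≤ iidP q n y := by
    intro n x y hxy
    by_cases h0 : ∀ t, W (x t) (y t) ≠ 0
    · have hfac : ∀ t, W (x t) (y t) =
          q (y t) * Real.exp (Real.log (W (x t) (y t) / q (y t))) := by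
        intro t
        have hw : 0 < W (x t) (y t) := lt_of_le_of_ne ((ht.chan _).1 _) (h0 t).symm
        have hq : 0 < q (y t) := lt_of_le_of_ne (ht.dist.1 _) fun h => h0 t (ht.ac _ _ h.symm)
        rw [Real.exp_log (div_pos hw hq)]
        field_simp
      rw [Finset.prod_congr rfl fun t _ => hfac t, Finset.prod_mul_distrib, ← Real.exp_sum]
      have h1 := not_lt.1 ((hG n x y).1 hxy).2
      have h2 : 0 ≤ ∏ t, q (y t) := Finset.prod_nonneg fun t _ => ht.dist.1 _
      have h3 : Real.exp (-(n * L)) *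
          Real.exp (∑ t, Real.log (W (x t) (y t) / q (y t))) ≤ 1 := by
        rw [← Real.exp_add, Real.exp_le_one_iff]; linarith
      unfold iidP
      nlinarith
    · push Not at h0
      obtain ⟨t, h0⟩ := h0
      rw [Finset.prod_eq_zero (Finset.mem_univ t) h0, mul_zero]
      exact iidP_nonneg_s16 ht.dist n y
  choose C hC using fun n => exists_covering (iidP_isDist hp n) (iidP_isDist ht.dist n)
    (hWn n) (G n) (hchange n) (nMsg R n)
  have hne : ∀ n, Nonempty (Fin (nMsg R n)) := fun n => ⟨⟨0, nMsg_pos R n⟩⟩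
  refine sInf_le ⟨R, hR, ⟨fun n => RandCode.det
    (fun x => if h : ∃ m, G n x (C n m) then h.choose else (hne n).some) (C n), ?_⟩, rfl⟩
  have hexp : Tendsto (fun n : ℕ => Real.exp (-(nMsg R n * Real.exp (-(n * L)))))
      atTop (nhds 0) := by
    rw [Real.tendsto_exp_comp_nhds_zero, tendsto_neg_atBot_iff]
    have h1 : Tendsto (fun n : ℕ => Real.exp ((n : ℝ) * (R * Real.log 2 - L)) / 2)
        atTop atTop := by
      refine Tendsto.atTop_div_const two_pos (Real.tendsto_exp_atTop.comp ?_)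
      exact tendsto_natCast_atTop_atTop.atTop_mul_const (by linarith)
    refine tendsto_atTop_mono (fun n => ?_) h1
    have := mul_le_mul_of_nonneg_right (le_nMsg R n) (Real.exp_pos (-(n * L))).le
    refine le_trans (le_of_eq ?_) this
    rw [div_mul_eq_mul_div, ← Real.exp_add]
    congr 2; ring
  have hsum := (hD.add hlog).add hexp
  simp only [add_zero] at hsum
  refine squeeze_zero (fun n => ?_) (fun n => ?_) hsum
  · unfold srcExcess
    rw [RandCode.det_sum]
    exact Finset.sum_nonneg fun x _ => mul_nonneg (iidP_nonneg_s16 hp n x)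
      (by split_ifs <;> norm_num)
  · unfold srcExcess
    rw [RandCode.det_sum]
    calc _ ≤ ∑ x, iidP p n x * (if ∃ m, G n x (C n m) then (0 : ℝ) else 1) := by
          refine Finset.sum_le_sum fun x _ =>
            mul_le_mul_of_nonneg_left ?_ (iidP_nonneg_s16 hp n x)
          by_cases h : ∃ m, G n x (C n m)
          · have h2 := ((hG _ _ _).1 h.choose_spec).1
            simp only [dif_pos h, if_neg h2, if_pos h, le_refl]
          · simp only [if_neg h]
            split_ifs <;> norm_num
      _ ≤ _ := hC n
      _ ≤ _ := by
          refine add_le_add_left ?_ _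
          rw [← Finset.sum_add_distrib]
          refine Finset.sum_le_sum fun x _ => ?_
          rw [← mul_add, ← Finset.sum_add_distrib]
          refine mul_le_mul_of_nonneg_left (Finset.sum_le_sum fun y _ => ?_) (iidP_nonneg_s16 hp n x)
          rw [← mul_add]
          refine mul_le_mul_of_nonneg_left ?_ ((hWn n x).1 y)
          by_cases h1 : (n : ℝ) * D < dPow d n x y <;>
          by_cases h2 : (n : ℝ) * L < ∑ t, Real.log (W (x t) (y t) / q (y t)) <;>
          simp [hG, h1, h2]

/-- The dual certificate: a kernel `K` whose product is at least `1` on every block pair of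
admissible distortion, with normaliser `Z` satisfying the Kuhn–Tucker bound, and with `E[-log Z]`
at least `R` bits. The system `c` serves only to rule out a `D` below the least distortion
reachable with high probability. -/
theorem exists_certificate [DecidableEq U] {p : U → ℝ} (hp : IsDist p)
    (d : U → V → ℝ) (D : ℝ) (c : Channel U V)
    (hsys : Tendsto (fun n => sysExcess p d D n c) atTop (nhds 0))
    {R : ℝ} (hR : 0 < R) (hRP : ENNReal.ofReal R < RP p d D) :
    ∃ (K : U → V → ℝ) (Z : U → ℝ), (∀ x y, 0 ≤ K x y) ∧ (∀ x, 0 < Z x) ∧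
      (∀ y, ∑ x, p x * (K x y / Z x) ≤ 1) ∧
      (∑ x, p x * Real.log (Z x) ≤ -(R * Real.log 2)) ∧
      ∀ (n : ℕ) (x : Fin n → U) (y : Fin n → V), iidP p n x ≠ 0 →
        dPow d n x y ≤ n * D → 1 ≤ ∏ t, K (x t) (y t) := by
  classical
  obtain ⟨x₀, -, -⟩ : ∃ x ∈ Finset.univ, p x ≠ 0 :=
    Finset.exists_ne_zero_of_sum_ne_zero (by rw [hp.2]; norm_num)
  have hV : Nonempty V := by
    obtain ⟨y, -, -⟩ : ∃ y ∈ Finset.univ, c.k 1 (fun _ => x₀) y ≠ 0 :=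
      Finset.exists_ne_zero_of_sum_ne_zero (by rw [(c.isChan 1 _).2]; norm_num)
    exact ⟨y 0⟩
  have hno : ∀ W q, IsTest W q → testCost p d W < D → ¬ testInfo p W q < R * Real.log 2 := by
    intro W q ht hc hI
    exact absurd (RP_le_of_test hp d D hR ht hI (joint_lln hp ht.chan d hc)) (not_le.2 hRP)
  rcases exists_slope hp d D (R * Real.log 2) hno with hmin | ⟨s, hs, hslope⟩
  · -- `D` is at most the least attainable distortion: `min_y d(x, y) = D` on the support of `p`
    choose y₀ hy₀ using fun x => Finite.exists_min (d x)
    have hmean : 0 ≤ ∑ x, p x * (d x (y₀ x) - D) := by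
      -- smear `q` uniformly, since a test pair needs `q` to dominate `W`
      have ht : IsTest (fun x y => if y = y₀ x then (1 : ℝ) else 0)
          (fun _ : V => (Fintype.card V : ℝ)⁻¹) := by
        refine ⟨fun x => ⟨fun y => by dsimp only; split_ifs <;> norm_num, by simp⟩,
          ⟨fun _ => by positivity, by simp⟩, fun x y h => ?_⟩
        simp at h
      have := hmin _ _ ht
      simp only [testCost, mul_ite, mul_one, mul_zero, ite_mul, zero_mul, Finset.sum_ite_eq',
        Finset.mem_univ, if_true] at this
      simp only [mul_sub, Finset.sum_sub_distrib, ← Finset.sum_mul, hp.2, one_mul]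
      linarith
    have hdeg : ∀ x, p x ≠ 0 → d x (y₀ x) - D = 0 := by
      refine iid_degenerate hp _ hmean (squeeze_zero (fun n => ?_) (fun n => ?_) hsys)
      · exact Finset.sum_nonneg fun x _ => mul_nonneg (iidP_nonneg_s16 hp n x)
          (by split_ifs <;> norm_num)
      · unfold sysExcess
        refine Finset.sum_le_sum fun x _ =>
          mul_le_mul_of_nonneg_left ?_ (iidP_nonneg_s16 hp n x)
        split_ifs with h
        · rw [← (c.isChan n x).2]
          refine Finset.sum_le_sum fun y _ => ?_
          have h1 : ∑ t, d (x t) (y₀ (x t)) ≤ dPow d n x y :=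
            Finset.sum_le_sum fun t _ => hy₀ _ _
          have h2 : (n : ℝ) * D < dPow d n x y := by
            simp at h; linarith
          rw [if_pos h2, (c.isChan n x).2, mul_one]
        · exact Finset.sum_nonneg fun y _ => mul_nonneg ((c.isChan n x).1 y)
            (by split_ifs <;> norm_num)
    set K : U → V → ℝ := fun x y => if p x = 0 ∨ d x y ≤ D then 1 else 0 with hK
    have hK0 : ∀ x y, 0 ≤ K x y := fun x y => by simp only [hK]; split_ifs <;> norm_num
    have hKlog : ∀ x y, Real.log (K x y) = 0 := fun x y => by
      simp only [hK]; split_ifs <;> simp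
    obtain ⟨q, hq, hZ, hKT⟩ := exists_kuhnTucker hp K hK0 (fun x => ⟨y₀ x, by
      have : p x = 0 ∨ d x (y₀ x) ≤ D := by
        by_cases h : p x = 0
        · exact Or.inl h
        · right; linarith [hdeg x h]
      simp [hK, this]⟩)
    have hZ' : ∀ x, 0 < ∑ y, q y * K x y := by
      intro x
      by_cases h : p x = 0
      · simp [hK, h, hq.2]
      · exact hZ x h
    refine ⟨K, _, hK0, hZ', hKT, ?_, ?_⟩
    · by_contra! hlt
      refine absurd (RP_le_of_test hp d D hR (isTest_tilt hq hK0 hZ') ?_ ?_) (not_le.2 hRP)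
      · rw [testInfo_tilt hq hK0 hZ']
        simp only [hKlog, mul_zero, Finset.sum_const_zero]
        linarith
      · refine tendsto_const_nhds.congr fun n => ?_
        refine (Finset.sum_eq_zero fun x _ => ?_).symm
        by_cases hx : iidP p n x = 0
        · simp [hx]
        · refine mul_eq_zero_of_right _ (Finset.sum_eq_zero fun y _ => ?_)
          split_ifs with hlt
          · -- some letter pair has distortion above `D`, so the tilted channel excludes it
            have : ∃ t, D < d (x t) (y t) := by
              by_contra! hall
              have h1 : dPow d n x y ≤ ∑ _t : Fin n, D := Finset.sum_le_sum fun t _ => hall t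
              simp at h1; linarith
            obtain ⟨t, htD⟩ := this
            have hpx : p (x t) ≠ 0 := fun h => hx (Finset.prod_eq_zero (Finset.mem_univ t) h)
            rw [Finset.prod_eq_zero (Finset.mem_univ t), zero_mul]
            simp [hK, hpx, not_le.2 htD]
          · simp
    · intro n x y hx hdxy
      have hpx : ∀ t, p (x t) ≠ 0 := fun t h => hx (Finset.prod_eq_zero (Finset.mem_univ t) h)
      have hge : ∀ t, D ≤ d (x t) (y t) := fun t => by
        linarith [hdeg _ (hpx t), hy₀ (x t) (y t)]
      have hsum : ∑ t, (d (x t) (y t) - D) = 0 := by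
        refine le_antisymm ?_ (Finset.sum_nonneg fun t _ => sub_nonneg.2 (hge t))
        rw [Finset.sum_sub_distrib]
        unfold dPow at hdxy
        simp; linarith
      have hall := (Finset.sum_eq_zero_iff_of_nonneg
        (fun t _ => sub_nonneg.2 (hge t))).1 hsum
      have h1 : ∀ t, K (x t) (y t) = 1 := fun t => by
        have := hall t (Finset.mem_univ t)
        have : d (x t) (y t) ≤ D := by linarith
        simp [hK, this]
      simp [h1]
  · set K : U → V → ℝ := fun x y => Real.exp (-(s * (d x y - D))) with hK
    have hKpos : ∀ x y, 0 < K x y := fun x y => Real.exp_pos _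
    have hK0 : ∀ x y, 0 ≤ K x y := fun x y => (hKpos x y).le
    obtain ⟨q, hq, -, hKT⟩ := exists_kuhnTucker hp K hK0
      (fun x => ⟨Classical.arbitrary V, hKpos x _⟩)
    have hZ' : ∀ x, 0 < ∑ y, q y * K x y := by
      intro x
      obtain ⟨y, -, hy⟩ : ∃ y ∈ Finset.univ, q y ≠ 0 :=
        Finset.exists_ne_zero_of_sum_ne_zero (by rw [hq.2]; norm_num)
      exact Finset.sum_pos' (fun y _ => mul_nonneg (hq.1 y) (hK0 x y))
        ⟨y, Finset.mem_univ y, mul_pos (lt_of_le_of_ne (hq.1 y) hy.symm) (hKpos x y)⟩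
    refine ⟨K, _, hK0, hZ', hKT, ?_, ?_⟩
    · have ht := isTest_tilt hq hK0 hZ'
      have h1 := hslope _ _ ht
      rw [testInfo_tilt hq hK0 hZ'] at h1
      have h2 : ∑ x, ∑ y, p x * (q y * K x y / ∑ z, q z * K x z) * Real.log (K x y) =
          s * D - s * testCost p d (fun x y => q y * K x y / ∑ z, q z * K x z) := by
        have h3 : ∑ x, ∑ y, p x * (q y * K x y / ∑ z, q z * K x z) = 1 := by
          simp only [← Finset.mul_sum, (ht.chan _).2, mul_one, hp.2]
        have h4 : s * D = ∑ x, ∑ y, p x * (q y * K x y / ∑ z, q z * K x z) * (s * D) := by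
          simp only [← Finset.sum_mul, h3, one_mul]
        rw [h4]
        simp only [testCost, Finset.mul_sum, ← Finset.sum_sub_distrib]
        refine Finset.sum_congr rfl fun x _ => Finset.sum_congr rfl fun y _ => ?_
        have : Real.log (K x y) = -(s * (d x y - D)) := Real.log_exp _
        rw [this]; ring
      linarith
    · intro n x y _ hdxy
      simp only [hK]
      rw [← Real.exp_sum, Real.one_le_exp_iff]
      have : ∑ t, -(s * (d (x t) (y t) - D)) = s * (n * D - dPow d n x y) := by
        simp only [Finset.sum_neg_distrib, ← Finset.mul_sum, Finset.sum_sub_distrib, dPow]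
        simp
        ring
      rw [this]
      exact mul_nonneg hs (by linarith)

end Block

/-! ### Layering on a system -/

section Layer
variable {U V U' : Type} [Fintype U]

/-- Against a fixed output block, an independent input block passes the certificate test with
probability at most `exp (-n L)`. -/
theorem accept_le {p : U → ℝ} (hp : IsDist p) {K : U → V → ℝ} {Z : U → ℝ}
    (hK : ∀ x y, 0 ≤ K x y) (hZ : ∀ x, 0 < Z x) (hKT : ∀ y, ∑ x, p x * (K x y / Z x) ≤ 1)
    (L : ℝ) (n : ℕ) (y : Fin n → V) (A : (Fin n → U) → Prop) [DecidablePred A]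
    (hA : ∀ x, A x → 1 ≤ ∏ t, K (x t) (y t) ∧ ∑ t, Real.log (Z (x t)) ≤ n * -L) :
    ∑ x, iidP p n x * (if A x then (1 : ℝ) else 0) ≤ Real.exp (-(n * L)) := by
  have hquot : ∀ x : Fin n → U, 0 ≤ ∏ t, K (x t) (y t) / Z (x t) := fun x =>
    Finset.prod_nonneg fun t _ => div_nonneg (hK _ _) (hZ _).le
  calc ∑ x, iidP p n x * (if A x then (1 : ℝ) else 0)
      ≤ ∑ x, iidP p n x * ((∏ t, K (x t) (y t) / Z (x t)) * Real.exp (-(n * L))) := by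
        refine Finset.sum_le_sum fun x _ => mul_le_mul_of_nonneg_left ?_ (iidP_nonneg_s16 hp n x)
        split_ifs with h
        · obtain ⟨h1, h2⟩ := hA x h
          have hexp : ∏ t, Z (x t) ≤ Real.exp (-(n * L)) := by
            have : ∏ t, Z (x t) = Real.exp (∑ t, Real.log (Z (x t))) := by
              rw [Real.exp_sum]
              exact Finset.prod_congr rfl fun t _ => (Real.exp_log (hZ _)).symm
            rw [this]
            exact Real.exp_le_exp.2 (by linarith)
          have hpos : 0 < ∏ t, Z (x t) := Finset.prod_pos fun t _ => hZ _
          rw [Finset.prod_div_distrib, div_mul_eq_mul_div, le_div_iff₀ hpos]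
          nlinarith [Real.exp_pos (-(n * L))]
        · exact mul_nonneg (hquot x) (Real.exp_pos _).le
    _ = (∏ t, ∑ x, p x * (K x (y t) / Z x)) * Real.exp (-(n * L)) := by
        rw [← sum_prod_eq_prod_sum (fun t x => p x * (K x (y t) / Z x)), Finset.sum_mul]
        refine Finset.sum_congr rfl fun x _ => ?_
        rw [Finset.prod_mul_distrib, ← mul_assoc]
        rfl
    _ ≤ Real.exp (-(n * L)) := by
        refine mul_le_of_le_one_left (Real.exp_pos _).le ?_
        refine Finset.prod_le_one (fun t _ => ?_) fun t _ => hKT _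
        exact Finset.sum_nonneg fun x _ => mul_nonneg (hp.1 x) (div_nonneg (hK _ _) (hZ _).le)

/-- Below the rate-distortion function, the system `c` carries the output of any encoder of rate
`R` with vanishing error. -/
theorem exists_reliable [Fintype V] [Fintype U'] [DecidableEq U] {p : U → ℝ} (hp : IsDist p)
    (d : U → V → ℝ) (D : ℝ) (c : Channel U V)
    (hsys : Tendsto (fun n => sysExcess p d D n c) atTop (nhds 0))
    {R : ℝ} (hR : 0 < R) (hRP : ENNReal.ofReal R < RP p d D)
    {p' : U' → ℝ} (hp' : IsDist p') (e : ∀ n : ℕ, (Fin n → U') → Fin (nMsg R n)) :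
    ∃ (C : ∀ n, Fin (nMsg R n) → Fin n → U) (dec : ∀ n, (Fin n → V) → Fin (nMsg R n)),
      Tendsto (fun n => ∑ x', iidP p' n x' * ∑ y, c.k n (C n (e n x')) y *
        (if dec n y = e n x' then (0 : ℝ) else 1)) atTop (nhds 0) := by
  classical
  -- leave room between `R` and the certified rate `R₁` for the decay of the union bound
  obtain ⟨r, hRr, hrRP⟩ := ENNReal.lt_iff_exists_nnreal_btwn.1 hRP
  obtain ⟨R₁, hR₁, hRP₁⟩ : ∃ R₁ : ℝ, R < R₁ ∧ ENNReal.ofReal R₁ < RP p d D := by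
    refine ⟨r, ?_, by simpa using hrRP⟩
    have h := (ENNReal.ofReal_lt_iff_lt_toReal hR.le ENNReal.coe_ne_top).1 hRr
    simpa using h
  obtain ⟨K, Z, hK, hZ, hKT, hlogZ, hone⟩ :=
    exists_certificate hp d D c hsys (hR.trans hR₁) hRP₁
  have hlog2 := Real.log_pos one_lt_two
  obtain ⟨L, hL1, hL2⟩ := exists_between (mul_lt_mul_of_pos_right hR₁ hlog2)
  have hlln := iid_lln hp (fun x => Real.log (Z x)) (v := -L) (by linarith)
  -- the decoder accepts `x` for `y` when both the kernel and the normaliser look typical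
  obtain ⟨Acc, hAcc⟩ : ∃ Acc : ∀ n : ℕ, (Fin n → U) → (Fin n → V) → Prop, ∀ n x y, Acc n x y ↔
      (1 ≤ ∏ t, K (x t) (y t) ∧ ¬ ((n : ℝ) * -L < ∑ t, Real.log (Z (x t)))) :=
    ⟨_, fun _ _ _ => Iff.rfl⟩
  have hne : ∀ n, Nonempty (Fin (nMsg R n)) := fun n => ⟨⟨0, nMsg_pos R n⟩⟩
  choose C dec hC using fun n => exists_channelCode (iidP_isDist hp' n) (iidP_isDist hp n)
    (c.isChan n) (Acc n) (ε := Real.exp (-(n * L)))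
    (fun y => accept_le hp hK hZ hKT L n y (fun x => Acc n x y) fun x h =>
      ⟨((hAcc n x y).1 h).1, not_lt.1 ((hAcc n x y).1 h).2⟩)
    (Real.exp_pos _).le (e n)
  refine ⟨C, dec, ?_⟩
  have hexp : Tendsto (fun n : ℕ => Real.exp (-((n : ℝ) * (L - R * Real.log 2))))
      atTop (nhds 0) := by
    rw [Real.tendsto_exp_comp_nhds_zero, tendsto_neg_atBot_iff]
    exact tendsto_natCast_atTop_atTop.atTop_mul_const (by linarith)
  have hsum := (hsys.add hlln).add hexp
  simp only [add_zero] at hsum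
  refine squeeze_zero (fun n => ?_) (fun n => ?_) hsum
  · exact Finset.sum_nonneg fun x _ => mul_nonneg (iidP_nonneg_s16 hp' n x)
      (Finset.sum_nonneg fun y _ => mul_nonneg ((c.isChan n _).1 y) (by split_ifs <;> norm_num))
  · have hunion : (nMsg R n : ℝ) * Real.exp (-(n * L)) ≤
        Real.exp (-((n : ℝ) * (L - R * Real.log 2))) := by
      refine (mul_le_mul_of_nonneg_right (nMsg_le hR n) (Real.exp_pos _).le).trans ?_
      rw [← Real.exp_add]
      exact Real.exp_le_exp.2 (by linarith)
    have hrej : ∑ x, iidP p n x * ∑ y, c.k n x y * (if Acc n x y then (0 : ℝ) else 1) ≤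
        sysExcess p d D n c + ∑ x, iidP p n x *
          (if (n : ℝ) * -L < ∑ t, Real.log (Z (x t)) then (1 : ℝ) else 0) := by
      unfold sysExcess
      rw [← Finset.sum_add_distrib]
      refine Finset.sum_le_sum fun x _ => ?_
      by_cases hx : iidP p n x = 0
      · simp [hx]
      rw [← mul_add]
      refine mul_le_mul_of_nonneg_left ?_ (iidP_nonneg_s16 hp n x)
      have hcx : (if (n : ℝ) * -L < ∑ t, Real.log (Z (x t)) then (1 : ℝ) else 0) =
          ∑ y, c.k n x y *
            (if (n : ℝ) * -L < ∑ t, Real.log (Z (x t)) then (1 : ℝ) else 0) := by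
        rw [← Finset.sum_mul, (c.isChan n x).2, one_mul]
      rw [hcx, ← Finset.sum_add_distrib]
      refine Finset.sum_le_sum fun y _ => ?_
      rw [← mul_add]
      refine mul_le_mul_of_nonneg_left ?_ ((c.isChan n x).1 y)
      by_cases h1 : (n : ℝ) * D < dPow d n x y
      · rw [if_pos h1]
        split_ifs <;> norm_num
      · have h2 := hone n x y hx (not_lt.1 h1)
        by_cases h3 : (n : ℝ) * -L < ∑ t, Real.log (Z (x t))
        · rw [if_pos h3]
          split_ifs <;> norm_num
        · rw [if_pos ((hAcc n x y).2 ⟨h2, h3⟩)]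
          split_ifs <;> norm_num
    exact (hC n).trans (add_le_add hrej hunion)

end Layer

/-- Let `c` be a system communicating the i.i.d. `X` source to within
distortion `D` (probability of excess distortion `≤ ω_n → 0`). If `R^P_{X'}(D') < R^P_X(D)`,
then (random codes being permitted) the i.i.d. `X'` source can be communicated to within
distortion `D'` by layering on top of the system `c`: there are random encoder–decoder pairs
`(E^n : 𝒳'^n → 𝒳^n, F^n : 𝒴^n → 𝒴'^n)` whose end-to-end probability of excess
distortion over `c` tends to `0`. -/
theorem stmt16 (pX : 𝒳 → ℝ) (hpX : IsDist pX)
    (d : 𝒳 → 𝒴 → ℝ) (hd : ∀ x y, 0 ≤ d x y)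
    (D : ℝ) (hD : 0 ≤ D)
    (pX' : 𝒳' → ℝ) (hpX' : IsDist pX')
    (d' : 𝒳' → 𝒴' → ℝ) (hd' : ∀ x y, 0 ≤ d' x y)
    (D' : ℝ) (hD' : 0 ≤ D')
    (c : Channel 𝒳 𝒴)
    (hsys : ∃ ω : ℕ → ℝ, Tendsto ω atTop (nhds 0) ∧
      ∀ n : ℕ, sysExcess pX d D n c ≤ ω n)
    (hlt : RP pX' d' D' < RP pX d D) :
    ∃ ρ : ∀ n : ℕ, RandCode (Fin n → 𝒳') (Fin n → 𝒳) (Fin n → 𝒴) (Fin n → 𝒴'),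
      Tendsto (fun n => e2eExcess pX' d' D' n (ρ n) c) atTop (nhds 0) := by
  obtain ⟨ω, hω, hle⟩ := hsys
  have hsys0 : Tendsto (fun n => sysExcess pX d D n c) atTop (nhds 0) :=
    squeeze_zero (fun n => Finset.sum_nonneg fun x _ => mul_nonneg (iidP_nonneg_s16 hpX n x)
      (Finset.sum_nonneg fun y _ => mul_nonneg ((c.isChan n x).1 y)
        (by split_ifs <;> norm_num))) hle hω
  obtain ⟨_, ⟨R, hR, ⟨τ, hτ⟩, rfl⟩, hRlt⟩ := sInf_lt_iff.1 hlt
  -- some deterministic pair does at least as well as the random source code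
  choose ef hef using fun n => (τ n).isDist.exists_le (fun ef => ∑ x, iidP pX' n x *
    (if (n : ℝ) * D' < dPow d' n x (ef.2 (ef.1 x)) then (1 : ℝ) else 0))
  obtain ⟨C, dec, hdec⟩ := exists_reliable hpX d D c hsys0 hR hRlt hpX' (fun n => (ef n).1)
  refine ⟨fun n => RandCode.det (fun x => C n ((ef n).1 x)) (fun y => (ef n).2 (dec n y)), ?_⟩
  have hsum := hdec.add hτ
  simp only [add_zero] at hsum
  refine squeeze_zero (fun n => ?_) (fun n => ?_) hsum
  · unfold e2eExcess
    rw [RandCode.det_sum]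
    exact Finset.sum_nonneg fun x _ => mul_nonneg (iidP_nonneg_s16 hpX' n x)
      (Finset.sum_nonneg fun y _ => mul_nonneg ((c.isChan n _).1 y) (by split_ifs <;> norm_num))
  · refine le_trans ?_ (add_le_add_right (hef n) _)
    unfold e2eExcess
    rw [RandCode.det_sum, ← Finset.sum_add_distrib]
    refine Finset.sum_le_sum fun x _ => ?_
    rw [← mul_add]
    refine mul_le_mul_of_nonneg_left ?_ (iidP_nonneg_s16 hpX' n x)
    have hcx : (if (n : ℝ) * D' < dPow d' n x ((ef n).2 ((ef n).1 x)) then (1 : ℝ) else 0) =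
        ∑ y, c.k n (C n ((ef n).1 x)) y *
          (if (n : ℝ) * D' < dPow d' n x ((ef n).2 ((ef n).1 x)) then (1 : ℝ) else 0) := by
      rw [← Finset.sum_mul, (c.isChan n _).2, one_mul]
    rw [hcx, ← Finset.sum_add_distrib]
    refine Finset.sum_le_sum fun y _ => ?_
    rw [← mul_add]
    refine mul_le_mul_of_nonneg_left ?_ ((c.isChan n _).1 y)
    by_cases h : dec n y = (ef n).1 x
    · simp only [h, if_true, zero_add, le_refl]
    · rw [if_neg h]
      split_ifs <;> norm_num

end
end
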